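/- arXiv:1405.6672 — 3 statements merged into one kernel-verified Lean document; each statement's English description precedes it below -/
import Mathlib

section
/- Let F be a countable class of uniformly bounded measurable real-valued functions on a measurable space, P a probability measure, and P_n the empirical measure of n i.i.d. P-distributed observations. Suppose ω : F → [0,∞) satisfies Var_P(f) ≤ ω(f) for all f ∈ F, and suppose Φ is a sub-root function (nondecreasing with r ↦ Φ(r)/√r nonincreasing on (0,∞)) such that E sup_{f ∈ F, ω(f) ≤ r} |(P − P_n) f| ≤ Φ(r) for all r > 0. Let K > 0 and let r* be the unique positive solution of Φ(r) = r/(24K). Then for all x > 0, with probability at least 1 − e^{−x}, every f ∈ F satisfies P f − P_n f ≤ K^{−1} ( ω(f) + r* + (9K² + 16K sup_{g ∈ F} ‖g‖_∞) x / (4n) ). -/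
open MeasureTheory

/-- Bounded measurable real functions. -/
def BM {β : Type*} [MeasurableSpace β] (f : β → ℝ) : Prop :=
  Measurable f ∧ ∃ C : ℝ, ∀ x, |f x| ≤ C

namespace BM
variable {β γ : Type*} [MeasurableSpace β] [MeasurableSpace γ] {f g : β → ℝ}

lemma integrable (hf : BM f) (μ : Measure β) [IsFiniteMeasure μ] : Integrable f μ := by
  obtain ⟨h, C, hC⟩ := hf
  exact Integrable.of_bound h.aestronglyMeasurable C (Filter.Eventually.of_forall hC)

lemma const (c : ℝ) : BM (fun _ : β => c) := ⟨measurable_const, |c|, fun _ => le_rfl⟩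

lemma add (hf : BM f) (hg : BM g) : BM (fun x => f x + g x) := by
  obtain ⟨h, C, hC⟩ := hf
  obtain ⟨h', C', hC'⟩ := hg
  exact ⟨h.add h', C + C', fun x => (abs_add_le _ _).trans (add_le_add (hC x) (hC' x))⟩

lemma neg (hf : BM f) : BM (fun x => - f x) := by
  obtain ⟨h, C, hC⟩ := hf
  exact ⟨h.neg, C, fun x => by rw [abs_neg]; exact hC x⟩

lemma sub (hf : BM f) (hg : BM g) : BM (fun x => f x - g x) := by
  simpa [sub_eq_add_neg] using hf.add hg.neg

lemma mul (hf : BM f) (hg : BM g) : BM (fun x => f x * g x) := by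
  obtain ⟨h, C, hC⟩ := hf
  obtain ⟨h', C', hC'⟩ := hg
  refine ⟨h.mul h', C * C', fun x => ?_⟩
  rw [abs_mul]
  exact mul_le_mul (hC x) (hC' x) (abs_nonneg _) ((abs_nonneg _).trans (hC x))

lemma exp (hf : BM f) : BM (fun x => Real.exp (f x)) := by
  obtain ⟨h, C, hC⟩ := hf
  refine ⟨h.exp, Real.exp C, fun x => ?_⟩
  rw [abs_of_pos (Real.exp_pos _)]
  exact Real.exp_le_exp.2 ((le_abs_self _).trans (hC x))

lemma comp (hf : BM f) {e : γ → β} (he : Measurable e) : BM (fun x => f (e x)) := by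
  obtain ⟨h, C, hC⟩ := hf
  exact ⟨h.comp he, C, fun x => hC _⟩

lemma abs (hf : BM f) : BM (fun x => |f x|) := by
  obtain ⟨h, C, hC⟩ := hf
  exact ⟨h.norm, C, fun x => by rw [abs_abs]; exact hC x⟩

lemma sum {ι : Type*} {s : Finset ι} {F : ι → β → ℝ} (hF : ∀ i, BM (F i)) :
    BM (fun x => ∑ i ∈ s, F i x) := by
  classical
  induction s using Finset.induction_on with
  | empty => simpa using const (β := β) 0
  | insert a s ha ih => simpa [Finset.sum_insert ha] using (hF a).add ih

lemma sup' {ι : Type*} {s : Finset ι} (hs : s.Nonempty) {F : ι → β → ℝ} (hF : ∀ i, BM (F i)) :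
    BM (fun x => s.sup' hs (fun i => F i x)) := by
  classical
  choose hm C hC using hF
  refine ⟨?_, s.sup' hs C, fun x => ?_⟩
  · have := Finset.measurable_sup' hs (fun i _ => hm i)
    convert this using 1
    ext x
    simp [Finset.sup'_apply]
  · rw [abs_le]
    constructor
    · obtain ⟨i, hi⟩ := hs
      have h1 := Finset.le_sup' (fun i => F i x) hi
      have h2 := Finset.le_sup' C hi
      have h3 := abs_le.1 (hC i x)
      linarith [h3.1]
    · refine Finset.sup'_le hs _ (fun i hi => ?_)
      exact ((le_abs_self _).trans (hC i x)).trans (Finset.le_sup' C hi)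

lemma integral_right {F : β × γ → ℝ} (hF : BM F) (ν : Measure γ) [IsProbabilityMeasure ν] :
    BM (fun b => ∫ c, F (b, c) ∂ν) := by
  obtain ⟨h, C, hC⟩ := hF
  refine ⟨(h.stronglyMeasurable.integral_prod_right' (ν := ν)).measurable, C, fun b => ?_⟩
  have := norm_integral_le_of_norm_le_const (μ := ν) (f := fun c => F (b, c)) (C := C)
    (Filter.Eventually.of_forall fun c => hC _)
  simpa using this

lemma log_integral_right {F : β × γ → ℝ} (hF : BM F) (ν : Measure γ) [IsProbabilityMeasure ν] :
    BM (fun b => Real.log (∫ c, Real.exp (F (b, c)) ∂ν)) := by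
  refine ⟨(hF.exp.integral_right ν).1.log, ?_⟩
  obtain ⟨h, C, hC⟩ := id hF
  refine ⟨C, fun b => ?_⟩
  have hint : Integrable (fun c => Real.exp (F (b, c))) ν :=
    (hF.exp.comp measurable_prodMk_left).integrable ν
  have h1 : Real.exp (-C) ≤ ∫ c, Real.exp (F (b, c)) ∂ν := by
    have := integral_mono (μ := ν) (integrable_const (Real.exp (-C))) hint
      (fun c => Real.exp_le_exp.2 (abs_le.1 (hC (b, c))).1)
    simpa using this
  have h2 : ∫ c, Real.exp (F (b, c)) ∂ν ≤ Real.exp C := by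
    have := integral_mono (μ := ν) hint (integrable_const (Real.exp C))
      (fun c => Real.exp_le_exp.2 (abs_le.1 (hC (b, c))).2)
    simpa using this
  have h0 := (Real.exp_pos (-C)).trans_le h1
  rw [abs_le]
  constructor
  · rw [Real.le_log_iff_exp_le h0]; exact h1
  · rw [Real.log_le_iff_le_exp h0]; exact h2
end BM

lemma integral_exp_pos' {β : Type*} [MeasurableSpace β] (μ : Measure β) [IsProbabilityMeasure μ]
    {f : β → ℝ} (hf : BM f) : 0 < ∫ x, Real.exp (f x) ∂μ :=
  integral_exp_pos (hf.exp.integrable μ)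

lemma integral_cons {α : Type*} [MeasurableSpace α] (P : Measure α) [IsProbabilityMeasure P]
    (n : ℕ) {F : (Fin (n + 1) → α) → ℝ} (hF : BM F) :
    ∫ ω, F ω ∂(Measure.pi fun _ : Fin (n + 1) => P) =
      ∫ a, ∫ ω, F (Fin.cons a ω) ∂(Measure.pi fun _ : Fin n => P) ∂P := by
  have h := (measurePreserving_piFinSuccAbove (fun _ : Fin (n + 1) => P) 0).symm
  rw [← h.integral_comp', integral_prod]
  · simp [MeasurableEquiv.piFinSuccAbove_symm_apply, Fin.insertNthEquiv]
  · exact (hF.comp (MeasurableEquiv.measurable _)).integrable _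

lemma measurable_cons {α : Type*} [MeasurableSpace α] (n : ℕ) :
    Measurable (fun p : α × (Fin n → α) => (Fin.cons p.1 p.2 : Fin (n + 1) → α)) := by
  refine measurable_pi_lambda _ (fun i => ?_)
  refine Fin.cases ?_ (fun j => ?_) i
  · simpa using measurable_fst
  · simpa [Function.comp_def] using (measurable_pi_apply j).comp measurable_snd

/-- Subadditivity of entropy combined with the variational formula. -/
lemma entropy_tensor {α : Type*} [MeasurableSpace α] (P : Measure α) [IsProbabilityMeasure P]
    (n : ℕ) : ∀ (y : (Fin n → α) → ℝ) (v : Fin n → (Fin n → α) → ℝ), BM y → (∀ k, BM (v k)) →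
    (∀ k ω a, v k (Function.update ω k a) = v k ω) →
    (∫ ω, y ω * Real.exp (y ω) ∂(Measure.pi fun _ : Fin n => P))
      - (∫ ω, Real.exp (y ω) ∂(Measure.pi fun _ : Fin n => P)) *
        Real.log (∫ ω, Real.exp (y ω) ∂(Measure.pi fun _ : Fin n => P)) ≤
    ∑ k, ∫ ω, (Real.exp (y ω) * (y ω - v k ω) - Real.exp (y ω) + Real.exp (v k ω))
      ∂(Measure.pi fun _ : Fin n => P) := by
  induction n with
  | zero =>
    intro y v hy hv hk
    rw [Measure.pi_of_empty (fun _ : Fin 0 => P)]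
    simp only [Finset.univ_eq_empty, Finset.sum_empty]
    rw [integral_dirac' _ _ (hy.mul hy.exp).1.stronglyMeasurable,
      integral_dirac' _ _ hy.exp.1.stronglyMeasurable, Real.log_exp, mul_comm, sub_self]
  | succ n ih =>
    intro y v hy hv hk
    set Q := Measure.pi fun _ : Fin n => P with hQ
    have hyc : BM (fun p : α × (Fin n → α) => y (Fin.cons p.1 p.2)) := hy.comp (measurable_cons n)
    have hvc : ∀ k, BM (fun p : α × (Fin n → α) => v k (Fin.cons p.1 p.2)) :=
      fun k => (hv k).comp (measurable_cons n)
    rw [integral_cons P n (hy.mul hy.exp), integral_cons P n hy.exp, Fin.sum_univ_succ]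
    have hT : ∀ k, BM fun ω => Real.exp (y ω) * (y ω - v k ω) - Real.exp (y ω) + Real.exp (v k ω) :=
      fun k => ((hy.exp.mul (hy.sub (hv k))).sub hy.exp).add (hv k).exp
    rw [integral_cons P n (hT 0)]
    simp_rw [fun k => integral_cons P n (hT k)]
    rw [← hQ]
    set Y0 : α → ℝ := fun a => ∫ ω, Real.exp (y (Fin.cons a ω)) ∂Q with hY0
    have bY0 : BM Y0 := hyc.exp.integral_right Q
    have blY0 : BM (fun a => Real.log (Y0 a)) := hyc.log_integral_right Q
    have Y0pos : ∀ a, 0 < Y0 a := fun a =>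
      integral_exp_pos' Q (hyc.comp measurable_prodMk_left (e := fun ω => (a, ω)))
    set m := ∫ a, Y0 a ∂P with hm
    have mpos : 0 < m := by
      have : m = ∫ a, Real.exp (Real.log (Y0 a)) ∂P := by
        simp_rw [Real.exp_log (Y0pos _)]; rfl
      rw [this]; exact integral_exp_pos' P blY0
    have byy : BM (fun a => ∫ ω, y (Fin.cons a ω) * Real.exp (y (Fin.cons a ω)) ∂Q) :=
      (hyc.mul hyc.exp).integral_right Q
    have bT : ∀ k, BM (fun a => ∫ ω, (Real.exp (y (Fin.cons a ω)) *
        (y (Fin.cons a ω) - v k (Fin.cons a ω)) - Real.exp (y (Fin.cons a ω))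
          + Real.exp (v k (Fin.cons a ω))) ∂Q) := fun k =>
      (((hyc.exp.mul (hyc.sub (hvc k))).sub hyc.exp).add (hvc k).exp).integral_right Q
    -- the inner part
    have hin : ∫ a, (∫ ω, y (Fin.cons a ω) * Real.exp (y (Fin.cons a ω)) ∂Q) ∂P
        - ∫ a, Y0 a * Real.log (Y0 a) ∂P ≤
        ∑ k : Fin n, ∫ a, ∫ ω, (Real.exp (y (Fin.cons a ω)) *
        (y (Fin.cons a ω) - v k.succ (Fin.cons a ω)) - Real.exp (y (Fin.cons a ω))
          + Real.exp (v k.succ (Fin.cons a ω))) ∂Q ∂P := by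
      rw [← integral_sub (byy.integrable P) ((bY0.mul blY0).integrable P),
        ← integral_finsetSum _ (fun k _ => (bT k.succ).integrable P)]
      refine integral_mono ((byy.sub (bY0.mul blY0)).integrable P)
        ((BM.sum fun k : Fin n => bT k.succ).integrable P) (fun a => ?_)
      have hc : Measurable (fun ω : Fin n → α => (a, ω)) := measurable_prodMk_left
      refine ih (fun ω => y (Fin.cons a ω)) (fun k ω => v k.succ (Fin.cons a ω))
        (hyc.comp hc) (fun k => (hvc k.succ).comp hc) (fun k ω b => ?_)
      have := hk k.succ (Fin.cons a ω) b
      simpa [Fin.cons_update] using this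
    -- the outer part
    have hout : ∫ a, Y0 a * Real.log (Y0 a) ∂P - m * Real.log m ≤
        ∫ a, ∫ ω, (Real.exp (y (Fin.cons a ω)) *
        (y (Fin.cons a ω) - v 0 (Fin.cons a ω)) - Real.exp (y (Fin.cons a ω))
          + Real.exp (v 0 (Fin.cons a ω))) ∂Q ∂P := by
      rcases isEmpty_or_nonempty α with he | ⟨⟨a0⟩⟩
      · exact absurd (Subsingleton.elim P 0) (IsProbabilityMeasure.ne_zero P)
      have hv0 : ∀ a ω, v 0 (Fin.cons a ω) = v 0 (Fin.cons a0 ω) := by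
        intro a ω
        have := hk 0 (Fin.cons a0 ω) a
        simpa [Fin.update_cons_zero] using this
      set u : (Fin n → α) → ℝ := fun ω => Real.exp (v 0 (Fin.cons a0 ω)) with hu
      have bu : BM u := ((hvc 0).comp (measurable_prodMk_left (x := a0))).exp
      have e1 : m * Real.log m = ∫ a, Y0 a * Real.log m ∂P := by
        rw [integral_mul_const]
      have e2 : ∫ a, (∫ ω, u ω ∂Q) * (Y0 a / m - 1) ∂P = 0 := by
        rw [integral_const_mul, integral_sub ((bY0.integrable P).div_const m) (integrable_const _),
          integral_div]
        simp [← hm, mpos.ne']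
      rw [e1, ← integral_sub ((bY0.mul blY0).integrable P) ((bY0.mul (.const _)).integrable P),
        ← sub_nonneg, ← integral_sub ((bT 0).integrable P)
          (((bY0.mul blY0).sub (bY0.mul (.const _))).integrable P), ← neg_zero, ← e2,
        ← integral_neg]
      have b3 : BM (fun a => (∫ ω, u ω ∂Q) * (Y0 a / m - 1)) :=
        (BM.const _).mul ((by simpa [div_eq_mul_inv] using bY0.mul (.const (m⁻¹)) :
          BM (fun a => Y0 a / m)).sub (.const _))
      refine integral_mono (b3.neg.integrable P)
        (((bT 0).sub ((bY0.mul blY0).sub (bY0.mul (.const _)))).integrable P) (fun a => ?_)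
      have hc : Measurable (fun ω : Fin n → α => (a, ω)) := measurable_prodMk_left
      have bya : BM (fun ω => y (Fin.cons a ω)) := hyc.comp hc
      have bva : BM (fun ω => v 0 (Fin.cons a ω)) := (hvc 0).comp hc
      have e3 : Y0 a * Real.log (Y0 a) - Y0 a * Real.log m =
          ∫ ω, Real.exp (y (Fin.cons a ω)) * (Real.log (Y0 a) - Real.log m) ∂Q := by
        rw [integral_mul_const]; ring
      have e4 : -((∫ ω, u ω ∂Q) * (Y0 a / m - 1)) = ∫ ω, u ω * (1 - Y0 a / m) ∂Q := by
        rw [integral_mul_const]; ring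
      simp only []
      rw [e3, e4, ← integral_sub]
      · refine integral_mono ((bu.mul (.const _)).integrable Q) ?_ (fun ω => ?_)
        · exact ((((bya.exp.mul (bya.sub bva)).sub bya.exp).add bva.exp).sub
            (bya.exp.mul (.const _))).integrable Q
        · simp only [hv0 a ω]
          have hratio : 0 < Y0 a / m := div_pos (Y0pos a) mpos
          have key := Real.add_one_le_exp (v 0 (Fin.cons a0 ω) + (Real.log (Y0 a) - Real.log m)
            - y (Fin.cons a ω))
          rw [Real.exp_sub, Real.exp_add, Real.exp_sub, Real.exp_log (Y0pos a), Real.exp_log mpos,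
            le_div_iff₀ (Real.exp_pos _)] at key
          simp only [hu]
          nlinarith [key]
      · exact (((bya.exp.mul (bya.sub bva)).sub bya.exp).add bva.exp).integrable Q
      · exact (bya.exp.mul (.const _)).integrable Q
    linarith

lemma measurable_upd {α : Type*} [MeasurableSpace α] {n : ℕ} (k : Fin n) :
    Measurable (fun p : (Fin n → α) × α => Function.update p.1 k p.2) := by
  refine measurable_pi_lambda _ (fun i => ?_)
  by_cases h : i = k
  · subst h; simpa using measurable_snd
  · simpa [Function.update_of_ne h, Function.comp_def] using
      (measurable_pi_apply i).comp measurable_fst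

lemma map_upd {α : Type*} [MeasurableSpace α] (P : Measure α) [IsProbabilityMeasure P]
    {n : ℕ} (k : Fin n) :
    ((Measure.pi fun _ : Fin n => P).prod P).map
      (fun p : (Fin n → α) × α => Function.update p.1 k p.2) = Measure.pi fun _ : Fin n => P := by
  symm
  refine Measure.pi_eq (fun s hs => ?_)
  rw [Measure.map_apply (measurable_upd k) (MeasurableSet.univ_pi hs)]
  have : (fun p : (Fin n → α) × α => Function.update p.1 k p.2) ⁻¹' (Set.univ.pi s) =
      (Set.univ.pi (Function.update s k Set.univ)) ×ˢ (s k) := by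
    ext ⟨ω, a⟩
    simp only [Set.mem_preimage, Set.mem_pi, Set.mem_univ, true_imp_iff, Set.mem_prod]
    constructor
    · intro h
      refine ⟨fun i => ?_, by simpa using h k⟩
      by_cases hi : i = k
      · subst hi; simp
      · simpa [Function.update_of_ne hi] using h i
    · rintro ⟨h1, h2⟩ i
      by_cases hi : i = k
      · subst hi; simpa using h2
      · simpa [Function.update_of_ne hi] using h1 i
  rw [this, Measure.prod_prod, Measure.pi_pi, ← Finset.mul_prod_erase _ _ (Finset.mem_univ k),
    ← Finset.mul_prod_erase _ (fun i => P (s i)) (Finset.mem_univ k)]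
  simp only [Function.update_self, measure_univ, one_mul]
  rw [mul_comm]
  congr 1
  refine Finset.prod_congr rfl (fun i hi => ?_)
  rw [Function.update_of_ne (Finset.ne_of_mem_erase hi)]

lemma integral_upd {α : Type*} [MeasurableSpace α] (P : Measure α) [IsProbabilityMeasure P]
    {n : ℕ} (k : Fin n) {F : (Fin n → α) → ℝ} (hF : BM F) :
    ∫ ω, F ω ∂(Measure.pi fun _ : Fin n => P) =
      ∫ ω, ∫ a, F (Function.update ω k a) ∂P ∂(Measure.pi fun _ : Fin n => P) := by
  conv_lhs => rw [← map_upd P k]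
  rw [integral_map (measurable_upd k).aemeasurable hF.1.aestronglyMeasurable, integral_prod]
  exact (hF.comp (measurable_upd k)).integrable _

lemma one_add_sub_mul_exp_le_of_nonpos {y : ℝ} (hy : y ≤ 0) :
    1 + (y - 1) * Real.exp y ≤ y ^ 2 / 2 := by
  have hmono : MonotoneOn (fun y : ℝ => 1 + (y - 1) * Real.exp y - y ^ 2 / 2) (Set.Iic 0) := by
    refine monotoneOn_of_deriv_nonneg (convex_Iic 0) (by fun_prop) (by fun_prop) (fun z hz => ?_)
    rw [interior_Iic] at hz
    have hz' : z < 0 := hz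
    have : HasDerivAt (fun y : ℝ => 1 + (y - 1) * Real.exp y - y ^ 2 / 2)
        ((1 * Real.exp z + (z - 1) * Real.exp z) - (2 * z ^ (2 - 1) * 1) / 2) z :=
      ((((hasDerivAt_id z).sub_const 1).mul (Real.hasDerivAt_exp z)).const_add 1).sub
        (((hasDerivAt_id z).pow 2).div_const 2)
    rw [this.deriv]
    have := Real.exp_le_one_iff.2 hz'.le
    simp only [Nat.add_one_sub_one, pow_one]
    nlinarith
  have := hmono (show y ∈ Set.Iic (0:ℝ) from hy) (show (0:ℝ) ∈ Set.Iic (0:ℝ) from le_refl (0:ℝ)) hy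
  simp at this
  linarith

lemma one_add_sub_mul_exp_le_of_nonneg {y : ℝ} (hy : 0 ≤ y) :
    1 + (y - 1) * Real.exp y ≤ y * (y * (Real.exp y - 1)) + y ^ 2 / 2 := by
  have hmono : MonotoneOn (fun y : ℝ => y * (y * (Real.exp y - 1)) + y ^ 2 / 2
      - (1 + (y - 1) * Real.exp y)) (Set.Ici 0) := by
    refine monotoneOn_of_deriv_nonneg (convex_Ici 0) (by fun_prop) (by fun_prop) (fun z hz => ?_)
    rw [interior_Ici] at hz
    have hz' : 0 < z := hz
    have : HasDerivAt (fun y : ℝ => y * (y * (Real.exp y - 1)) + y ^ 2 / 2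
      - (1 + (y - 1) * Real.exp y))
        ((1 * (z * (Real.exp z - 1)) + z * (1 * (Real.exp z - 1) + z * Real.exp z)
          + (2 * z ^ (2 - 1) * 1) / 2) - (1 * Real.exp z + (z - 1) * Real.exp z)) z :=
      (((hasDerivAt_id z).mul ((hasDerivAt_id z).mul ((Real.hasDerivAt_exp z).sub_const 1))).add
        (((hasDerivAt_id z).pow 2).div_const 2)).sub
      ((((hasDerivAt_id z).sub_const 1).mul (Real.hasDerivAt_exp z)).const_add 1)
    rw [this.deriv]
    have := Real.one_le_exp hz'.le
    simp only [Nat.add_one_sub_one, pow_one]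
    nlinarith [mul_nonneg (mul_nonneg hz'.le hz'.le) (Real.exp_pos z).le]
  have := hmono (show (0:ℝ) ∈ Set.Ici (0:ℝ) from le_refl (0:ℝ)) (show y ∈ Set.Ici (0:ℝ) from hy) hy
  simp at this
  linarith

lemma key_ineq {l b D D' : ℝ} (hl : 0 < l) (hb : 0 ≤ b) (h1 : D' ≤ D) (h2 : D ≤ b) :
    1 + (l * D - 1) * Real.exp (l * D) ≤
      l ^ 2 * (b * (D * Real.exp (l * D) - D') + D' ^ 2 / 2) := by
  have step : 1 + (l * D - 1) * Real.exp (l * D) ≤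
      (l * b) * (l * D * (Real.exp (l * D) - 1)) + (l * D) ^ 2 / 2 := by
    rcases le_total D 0 with h | h
    · have hy : l * D ≤ 0 := mul_nonpos_of_nonneg_of_nonpos hl.le h
      have h3 := one_add_sub_mul_exp_le_of_nonpos hy
      have h4 : 0 ≤ l * D * (Real.exp (l * D) - 1) :=
        mul_nonneg_of_nonpos_of_nonpos hy (by linarith [Real.exp_le_one_iff.2 hy])
      have := mul_nonneg (mul_nonneg hl.le hb) h4
      linarith
    · have hy : 0 ≤ l * D := mul_nonneg hl.le h
      have h3 := one_add_sub_mul_exp_le_of_nonneg hy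
      have h4 : 0 ≤ l * D * (Real.exp (l * D) - 1) :=
        mul_nonneg hy (by linarith [Real.one_le_exp hy])
      have := mul_le_mul_of_nonneg_right (mul_le_mul_of_nonneg_left h2 hl.le) h4
      linarith
  have h5 : b * (-D) + D ^ 2 / 2 ≤ b * (-D') + D' ^ 2 / 2 := by nlinarith
  have h6 := mul_le_mul_of_nonneg_left h5 (sq_nonneg l)
  nlinarith

lemma ode_ineq {α ι : Type*} [MeasurableSpace α] (P : Measure α) [IsProbabilityMeasure P]
    (n : ℕ) (s : Finset ι) (hs : s.Nonempty) (g : ι → α → ℝ) (hg : ∀ i, BM (g i))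
    (hmean : ∀ i, ∫ a, g i a ∂P = 0) (σ2 : ℝ) (hvar : ∀ i, ∫ a, (g i a) ^ 2 ∂P ≤ σ2)
    (b : ℝ) (hb : 0 ≤ b) (hgb : ∀ i a, g i a ≤ b) (l : ℝ) (hl : 0 < l)
    (Z : (Fin n → α) → ℝ) (hZ : Z = fun ω => s.sup' hs (fun i => ∑ j, g i (ω j))) :
    l * (∫ ω, Z ω * Real.exp (l * Z ω) ∂(Measure.pi fun _ : Fin n => P))
      - (∫ ω, Real.exp (l * Z ω) ∂(Measure.pi fun _ : Fin n => P)) *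
        Real.log (∫ ω, Real.exp (l * Z ω) ∂(Measure.pi fun _ : Fin n => P)) ≤
    l ^ 2 * (b * (∫ ω, Z ω * Real.exp (l * Z ω) ∂(Measure.pi fun _ : Fin n => P))
      + n * σ2 / 2 * (∫ ω, Real.exp (l * Z ω) ∂(Measure.pi fun _ : Fin n => P))) := by
  classical
  set Q := Measure.pi fun _ : Fin n => P with hQ
  have hσ : 0 ≤ σ2 := by
    obtain ⟨i, -⟩ := hs
    exact (integral_nonneg fun a => sq_nonneg _).trans (hvar i)
  set W : Fin n → (Fin n → α) → ℝ :=
    fun k ω => s.sup' hs (fun i => ∑ j ∈ Finset.univ.erase k, g i (ω j)) with hW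
  have hgc : ∀ i (j : Fin n), BM (fun ω : Fin n → α => g i (ω j)) :=
    fun i j => (hg i).comp (measurable_pi_apply j)
  have bZ : BM Z := by rw [hZ]; exact BM.sup' hs (fun i => BM.sum (fun j => hgc i j))
  have bW : ∀ k, BM (W k) := fun k => BM.sup' hs (fun i => BM.sum (fun j => hgc i j))
  have hsplit : ∀ i k (ω : Fin n → α),
      ∑ j, g i (ω j) = g i (ω k) + ∑ j ∈ Finset.univ.erase k, g i (ω j) :=
    fun i k ω => (Finset.add_sum_erase _ (fun j => g i (ω j)) (Finset.mem_univ k)).symm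
  have hWu : ∀ k ω a, W k (Function.update ω k a) = W k ω := by
    intro k ω a
    simp only [hW]
    congr 1
    ext i
    refine Finset.sum_congr rfl (fun j hj => ?_)
    rw [Function.update_of_ne (Finset.ne_of_mem_erase hj)]
  have hmax : ∀ ω, ∃ i, (Z ω = ∑ j, g i (ω j)) ∧ ∀ k, Z ω - W k ω ≤ g i (ω k) := by
    intro ω
    obtain ⟨i, hi, hi'⟩ := Finset.exists_mem_eq_sup' hs (fun i => ∑ j, g i (ω j))
    refine ⟨i, by rw [hZ]; exact hi', fun k => ?_⟩
    have h1 : ∑ j ∈ Finset.univ.erase k, g i (ω j) ≤ W k ω :=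
      Finset.le_sup' (fun i => ∑ j ∈ Finset.univ.erase k, g i (ω j)) hi
    have h2 : Z ω = ∑ j, g i (ω j) := by rw [hZ]; exact hi'
    rw [h2, hsplit i k]; linarith
  have hDb : ∀ k ω, Z ω - W k ω ≤ b := by
    intro k ω
    obtain ⟨i, -, h⟩ := hmax ω
    exact (h k).trans (hgb _ _)
  have hDsum : ∀ ω, ∑ k, (Z ω - W k ω) ≤ Z ω := by
    intro ω
    obtain ⟨i, h1, h⟩ := hmax ω
    conv_rhs => rw [h1]
    exact Finset.sum_le_sum (fun k _ => h k)
  have hlow : ∀ k ω, ∃ i, ∀ a, W k ω + g i a ≤ Z (Function.update ω k a) := by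
    intro k ω
    obtain ⟨i, hi, hi'⟩ := Finset.exists_mem_eq_sup' hs
      (fun i => ∑ j ∈ Finset.univ.erase k, g i (ω j))
    refine ⟨i, fun a => ?_⟩
    have h1 : ∑ j, g i ((Function.update ω k a) j) ≤ Z (Function.update ω k a) := by
      rw [hZ]; exact Finset.le_sup' (fun i => ∑ j, g i ((Function.update ω k a) j)) hi
    have h2 : W k ω = ∑ j ∈ Finset.univ.erase k, g i (ω j) := hi'
    rw [hsplit i k, Function.update_self] at h1
    have h3 : ∑ j ∈ Finset.univ.erase k, g i ((Function.update ω k a) j) =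
        ∑ j ∈ Finset.univ.erase k, g i (ω j) := by
      refine Finset.sum_congr rfl (fun j hj => ?_)
      rw [Function.update_of_ne (Finset.ne_of_mem_erase hj)]
    rw [h3] at h1
    linarith
  have blZ : BM (fun ω => l * Z ω) := (BM.const l).mul bZ
  have blW : ∀ k, BM (fun ω => l * W k ω) := fun k => (BM.const l).mul (bW k)
  have hent := entropy_tensor P n (fun ω => l * Z ω) (fun k ω => l * W k ω) blZ blW
    (fun k ω a => by simp only [hWu])
  rw [← hQ] at hent
  have bDe : ∀ k, BM (fun ω => (Z ω - W k ω) * Real.exp (l * Z ω)) :=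
    fun k => (bZ.sub (bW k)).mul blZ.exp
  have hterm : ∀ k, ∫ ω, (Real.exp (l * Z ω) * (l * Z ω - l * W k ω) - Real.exp (l * Z ω)
      + Real.exp (l * W k ω)) ∂Q ≤ l ^ 2 * b * ∫ ω, (Z ω - W k ω) * Real.exp (l * Z ω) ∂Q
        + l ^ 2 * σ2 / 2 * ∫ ω, Real.exp (l * Z ω) ∂Q := by
    intro k
    have bL : BM (fun ω => Real.exp (l * Z ω) * (l * Z ω - l * W k ω) - Real.exp (l * Z ω)
      + Real.exp (l * W k ω)) := ((blZ.exp.mul (blZ.sub (blW k))).sub blZ.exp).add (blW k).exp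
    have bR : BM (fun ω => l ^ 2 * b * ((Z ω - W k ω) * Real.exp (l * Z ω))
        + l ^ 2 * σ2 / 2 * Real.exp (l * Z ω)) :=
      ((BM.const _).mul (bDe k)).add ((BM.const _).mul blZ.exp)
    rw [← integral_const_mul, ← integral_const_mul,
      ← integral_add (((BM.const _).mul (bDe k)).integrable Q)
        (((BM.const _).mul blZ.exp).integrable Q), integral_upd P k bL, integral_upd P k bR]
    refine integral_mono ((bL.comp (measurable_upd k)).integral_right P |>.integrable Q)
      ((bR.comp (measurable_upd k)).integral_right P |>.integrable Q) (fun ω => ?_)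
    obtain ⟨i, hi⟩ := hlow k ω
    have hu : Measurable (fun a => Function.update ω k a) :=
      (measurable_upd k).comp (measurable_prodMk_left (x := ω))
    set z : α → ℝ := fun a => Z (Function.update ω k a) with hz
    have bz : BM z := bZ.comp hu
    have blz : BM (fun a => l * z a) := (BM.const l).mul bz
    set c := Real.exp (l * W k ω) with hc
    have cpos : 0 < c := Real.exp_pos _
    have hez : ∀ a, Real.exp (l * z a) = c * Real.exp (l * (z a - W k ω)) := by
      intro a; rw [hc, ← Real.exp_add]; ring_nf
    simp only [hWu]
    change ∫ a, (Real.exp (l * z a) * (l * z a - l * W k ω) - Real.exp (l * z a) + c) ∂P ≤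
      ∫ a, (l ^ 2 * b * ((z a - W k ω) * Real.exp (l * z a))
        + l ^ 2 * σ2 / 2 * Real.exp (l * z a)) ∂P
    have bzw : BM (fun a => z a - W k ω) := bz.sub (.const _)
    have bsq : BM (fun a => (g i a) ^ 2) := by simpa [sq] using (hg i).mul (hg i)
    have b1 : BM (fun a => l ^ 2 * b * ((z a - W k ω) * Real.exp (l * z a))) :=
      (BM.const _).mul (bzw.mul blz.exp)
    have b2 : BM (fun a => (-(l ^ 2 * b * c)) * g i a + l ^ 2 * c / 2 * (g i a) ^ 2) :=
      ((BM.const _).mul (hg i)).add ((BM.const _).mul bsq)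
    have s1 : ∫ a, (Real.exp (l * z a) * (l * z a - l * W k ω) - Real.exp (l * z a) + c) ∂P ≤
        ∫ a, (l ^ 2 * b * ((z a - W k ω) * Real.exp (l * z a)) +
          ((-(l ^ 2 * b * c)) * g i a + l ^ 2 * c / 2 * (g i a) ^ 2)) ∂P := by
      refine integral_mono
        ((((blz.exp.mul (blz.sub (.const _))).sub blz.exp).add (.const _)).integrable P)
        ((b1.add b2).integrable P) (fun a => ?_)
      have h1 := key_ineq (D := z a - W k ω) (D' := g i a) hl hb
        (by have := hi a; simp only [hz]; linarith)
        (by have := hDb k (Function.update ω k a); rw [hWu] at this; exact this)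
      have h2 := mul_le_mul_of_nonneg_left h1 cpos.le
      simp only [hez]
      nlinarith [h2]
    have s2 : ∫ a, ((-(l ^ 2 * b * c)) * g i a + l ^ 2 * c / 2 * (g i a) ^ 2) ∂P ≤
        l ^ 2 * σ2 / 2 * c := by
      rw [integral_add (((BM.const _).mul (hg i)).integrable P)
        (((BM.const _).mul bsq).integrable P), integral_const_mul, integral_const_mul, hmean i]
      have := mul_le_mul_of_nonneg_left (hvar i) (by positivity : 0 ≤ l ^ 2 * c / 2)
      linarith
    have s3 : c ≤ ∫ a, Real.exp (l * z a) ∂P := by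
      have h1 : ∫ a, (c + c * l * g i a) ∂P = c := by
        rw [integral_add (integrable_const _) (((BM.const _).mul (hg i)).integrable P),
          integral_const_mul, hmean i]
        simp
      conv_lhs => rw [← h1]
      refine integral_mono (((BM.const _).add ((BM.const _).mul (hg i))).integrable P)
        (blz.exp.integrable P) (fun a => ?_)
      simp only [hez]
      have h2 := Real.add_one_le_exp (l * (z a - W k ω))
      have h3 : l * g i a ≤ l * (z a - W k ω) :=
        mul_le_mul_of_nonneg_left (by have := hi a; simp only [hz]; linarith) hl.le
      have h4 : c * (1 + l * g i a) ≤ c * Real.exp (l * (z a - W k ω)) :=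
        mul_le_mul_of_nonneg_left (by linarith) cpos.le
      linarith
    rw [integral_add (b1.integrable P) (b2.integrable P)] at s1
    rw [integral_add (b1.integrable P) (((BM.const _).mul blz.exp).integrable P)]
    have s4 : ∫ a, l ^ 2 * σ2 / 2 * Real.exp (l * z a) ∂P =
      l ^ 2 * σ2 / 2 * ∫ a, Real.exp (l * z a) ∂P := integral_const_mul _ _
    rw [s4]
    have s5 := mul_le_mul_of_nonneg_left s3 (by positivity : 0 ≤ l ^ 2 * σ2 / 2)
    linarith
  have hsum := hent.trans (Finset.sum_le_sum (fun k _ => hterm k))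
  rw [Finset.sum_add_distrib, ← Finset.mul_sum,
    ← integral_finsetSum _ (fun k _ => (bDe k).integrable Q)] at hsum
  have hfin : ∫ ω, ∑ k, (Z ω - W k ω) * Real.exp (l * Z ω) ∂Q ≤
      ∫ ω, Z ω * Real.exp (l * Z ω) ∂Q := by
    refine integral_mono ((BM.sum bDe).integrable Q) ((bZ.mul blZ.exp).integrable Q) (fun ω => ?_)
    simp only []
    rw [← Finset.sum_mul]
    exact mul_le_mul_of_nonneg_right (hDsum ω) (Real.exp_pos _).le
  have hfin' := mul_le_mul_of_nonneg_left hfin (by positivity : 0 ≤ l ^ 2 * b)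
  have e1 : ∫ ω, l * Z ω * Real.exp (l * Z ω) ∂Q = l * ∫ ω, Z ω * Real.exp (l * Z ω) ∂Q := by
    rw [← integral_const_mul]; simp only [mul_assoc]
  rw [e1] at hsum
  simp only [Finset.sum_const, Finset.card_univ, Fintype.card_fin, nsmul_eq_mul] at hsum
  linarith

/-- Herbst argument. -/
lemma herbst {Ω : Type*} [MeasurableSpace Ω] (Q : Measure Ω) [IsProbabilityMeasure Q]
    (Z : Ω → ℝ) (hZ : BM Z) (b V : ℝ)
    (h : ∀ l, 0 < l → l * (∫ ω, Z ω * Real.exp (l * Z ω) ∂Q)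
      - (∫ ω, Real.exp (l * Z ω) ∂Q) * Real.log (∫ ω, Real.exp (l * Z ω) ∂Q) ≤
      l ^ 2 * (b * (∫ ω, Z ω * Real.exp (l * Z ω) ∂Q) + V * (∫ ω, Real.exp (l * Z ω) ∂Q)))
    (l : ℝ) (hl : 0 < l) :
    (1 - l * b) * ProbabilityTheory.cgf Z Q l ≤ l * (∫ ω, Z ω ∂Q) + V * l ^ 2 := by
  have hset : ∀ t, t ∈ interior (ProbabilityTheory.integrableExpSet Z Q) := by
    have : ProbabilityTheory.integrableExpSet Z Q = Set.univ := by
      ext t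
      simp only [Set.mem_univ, iff_true]
      exact ((BM.const t).mul hZ).exp.integrable Q
    intro t; rw [this]; simp
  set G := ProbabilityTheory.cgf Z Q with hG
  have hdiff : ∀ t, HasDerivAt G (deriv G t) t := fun t =>
    (ProbabilityTheory.analyticAt_cgf (hset t)).differentiableAt.hasDerivAt
  have hG0 : G 0 = 0 := ProbabilityTheory.cgf_zero
  have hd0 : deriv G 0 = ∫ ω, Z ω ∂Q := by
    rw [hG, ProbabilityTheory.deriv_cgf_zero (hset 0)]; simp
  have hode : ∀ t, 0 < t → t * deriv G t - G t ≤ t ^ 2 * (b * deriv G t + V) := by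
    intro t ht
    have h1 := h t ht
    have hpos : 0 < ∫ ω, Real.exp (t * Z ω) ∂Q := integral_exp_pos' Q ((BM.const t).mul hZ)
    rw [hG, ProbabilityTheory.deriv_cgf (hset t)]
    simp only [ProbabilityTheory.cgf, ProbabilityTheory.mgf]
    have h2 : (∫ ω, Z ω * Real.exp (t * Z ω) ∂Q) = (∫ ω, Z ω * Real.exp (t * Z ω) ∂Q) /
        (∫ ω, Real.exp (t * Z ω) ∂Q) * (∫ ω, Real.exp (t * Z ω) ∂Q) :=
      (div_mul_cancel₀ _ hpos.ne').symm
    rw [h2] at h1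
    refine le_of_mul_le_mul_right ?_ hpos
    linarith
  set ψ : ℝ → ℝ := fun t => G t / t - b * G t - V * t with hψ
  have hψd : ∀ t, 0 < t → HasDerivAt ψ ((deriv G t * t - G t * 1) / t ^ 2 - b * deriv G t - V * 1) t := by
    intro t ht
    exact (((hdiff t).div (hasDerivAt_id t) ht.ne').sub ((hdiff t).const_mul b)).sub
      ((hasDerivAt_id t).const_mul V)
  have hanti : AntitoneOn ψ (Set.Ioi 0) := by
    refine antitoneOn_of_deriv_nonpos (convex_Ioi 0)
      (fun t ht => (hψd t ht).continuousAt.continuousWithinAt)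
      (fun t ht => ?_) (fun t ht => ?_)
    · rw [interior_Ioi] at ht
      exact (hψd t ht).differentiableAt.differentiableWithinAt
    · rw [interior_Ioi] at ht
      rw [(hψd t ht).deriv]
      have ht' : 0 < t := ht
      have h1 := hode t ht'
      have h2 : (deriv G t * t - G t * 1) / t ^ 2 ≤ b * deriv G t + V := by
        rw [div_le_iff₀ (by positivity)]; linarith
      linarith
  have hlim : Filter.Tendsto ψ (nhdsWithin 0 (Set.Ioi 0)) (nhds (∫ ω, Z ω ∂Q)) := by
    have h1 : Filter.Tendsto (fun t => G t / t) (nhdsWithin 0 (Set.Ioi 0)) (nhds (∫ ω, Z ω ∂Q)) := by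
      have := (hasDerivAt_iff_tendsto_slope.1 (hdiff 0)).mono_left
        (nhdsWithin_mono 0 (fun t (ht : 0 < t) => ht.ne'))
      rw [hd0] at this
      refine this.congr (fun t => ?_)
      simp [slope_def_field, hG0]
    have h2 : Filter.Tendsto (fun t => b * G t) (nhdsWithin 0 (Set.Ioi 0)) (nhds (b * G 0)) :=
      ((hdiff 0).continuousAt.const_mul b).tendsto.mono_left nhdsWithin_le_nhds
    have h3 : Filter.Tendsto (fun t => V * t) (nhdsWithin 0 (Set.Ioi 0)) (nhds (V * 0)) :=
      (continuous_const_mul V).continuousAt.tendsto.mono_left nhdsWithin_le_nhds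
    have := (h1.sub h2).sub h3
    simpa [hG0] using this
  have hle : ψ l ≤ ∫ ω, Z ω ∂Q := by
    refine ge_of_tendsto hlim ?_
    filter_upwards [Ioo_mem_nhdsGT hl] with t ht
    exact hanti ht.1 hl ht.2.le
  have h4 := mul_le_mul_of_nonneg_left hle hl.le
  have h5 : l * ψ l = G l - l * b * G l - V * l ^ 2 := by
    simp only [hψ]; field_simp
  linarith

/-- Exponential deviation bound for finite classes. -/
lemma talagrand_chernoff {α ι : Type*} [MeasurableSpace α] (P : Measure α) [IsProbabilityMeasure P]
    (n : ℕ) (s : Finset ι) (hs : s.Nonempty) (g : ι → α → ℝ) (hg : ∀ i, BM (g i))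
    (hmean : ∀ i, ∫ a, g i a ∂P = 0) (σ2 : ℝ) (hvar : ∀ i, ∫ a, (g i a) ^ 2 ∂P ≤ σ2)
    (b : ℝ) (hb : 0 ≤ b) (hgb : ∀ i a, g i a ≤ b) (l : ℝ) (hl : 0 < l) (hlb : l * b < 1)
    (E t x : ℝ) (hE : ∫ ω : Fin n → α, s.sup' hs (fun i => ∑ j, g i (ω j))
      ∂(Measure.pi fun _ : Fin n => P) ≤ E)
    (hx : x * (1 - l * b) + l * E + n * σ2 / 2 * l ^ 2 ≤ l * t * (1 - l * b)) :
    (Measure.pi fun _ : Fin n => P).real {ω | t ≤ s.sup' hs (fun i => ∑ j, g i (ω j))} ≤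
      Real.exp (-x) := by
  set Q := Measure.pi fun _ : Fin n => P with hQ
  set Z : (Fin n → α) → ℝ := fun ω => s.sup' hs (fun i => ∑ j, g i (ω j)) with hZ
  have bZ : BM Z := BM.sup' hs (fun i => BM.sum (fun j => (hg i).comp (measurable_pi_apply j)))
  have h1 := herbst Q Z bZ b (n * σ2 / 2)
    (fun l hl => ode_ineq P n s hs g hg hmean σ2 hvar b hb hgb l hl Z hZ) l hl
  have h2 := ProbabilityTheory.measure_ge_le_exp_cgf (μ := Q) (X := Z) t hl.le
    (((BM.const l).mul bZ).exp.integrable Q)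
  refine h2.trans (Real.exp_le_exp.2 ?_)
  have h3 : 0 < 1 - l * b := by linarith
  have h4 := mul_le_mul_of_nonneg_left hE hl.le
  refine le_of_mul_le_mul_left ?_ h3
  linarith

lemma final_arith {a1 a2 a3 q e : ℝ} (hq : q ^ 2 = a1)
    (h2 : 0 ≤ a2) (hsum : a1 + a2 + a3 = 1) (he : e ≤ q / 6) :
    (1 - 3 / 4 * a3) + 3 / 2 * e + 1 / 8 * a2 ≤ 3 / 2 * (1 - 3 / 4 * a3) := by
  subst hq
  nlinarith [sq_nonneg (q - 1 / 3)]

lemma peel_sum (N : ℕ) :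
    ∑ k ∈ Finset.range (N + 1), (2 : ℝ) ^ (k + 1) / ((4 : ℝ) ^ k + 1) ≤ 3 - 2 / 2 ^ N := by
  induction N with
  | zero => norm_num
  | succ N ih =>
    rw [Finset.sum_range_succ]
    have h1 : (2 : ℝ) ^ (N + 1 + 1) / ((4 : ℝ) ^ (N + 1) + 1) ≤ 2 / 2 ^ (N + 1) := by
      rw [div_le_div_iff₀ (by positivity) (by positivity)]
      have : (4 : ℝ) ^ (N + 1) = 2 ^ (N + 1) * 2 ^ (N + 1) := by
        rw [← mul_pow]; norm_num
      rw [this, pow_succ (2 : ℝ) (N + 1)]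
      nlinarith
    have h2 : (2 : ℝ) / 2 ^ N = 2 * (2 / 2 ^ (N + 1)) := by
      rw [pow_succ]; field_simp
    linarith

lemma peeling {Ω ι : Type*} [MeasurableSpace Ω] [Countable ι] (Q : Measure Ω)
    [IsProbabilityMeasure Q] (Δ : ι → Ω → ℝ) (hΔ : ∀ i, Measurable (Δ i)) (M : ℝ) (hM0 : 0 ≤ M)
    (hM : ∀ i ω, |Δ i ω| ≤ M) (w : ι → ℝ) (hw0 : ∀ i, 0 ≤ w i)
    (Φ : ℝ → ℝ)
    (hΦsub : ∀ s t, 0 < s → s ≤ t → Φ t / Real.sqrt t ≤ Φ s / Real.sqrt s)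
    (hΦpos : ∀ r, 0 < r → 0 < Φ r)
    (hcomp : ∀ r : ℝ, 0 < r → (∫ ω, (⨆ i : {i : ι // w i ≤ r}, |Δ i ω|) ∂Q) ≤ Φ r)
    (r : ℝ) (hr : 0 < r) (s : Finset ι) (hs : s.Nonempty) :
    ∫ ω, s.sup' hs (fun i => Δ i ω / (w i + r)) ∂Q ≤ 4 * Φ r / r := by
  set S : ℝ → Ω → ℝ := fun ρ ω => ⨆ i : {i : ι // w i ≤ ρ}, |Δ i ω| with hS
  have bS : ∀ ρ, BM (S ρ) := by
    intro ρ
    refine ⟨Measurable.iSup (fun i => (hΔ i).norm), M, fun ω => ?_⟩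
    rw [abs_of_nonneg (Real.iSup_nonneg fun i => abs_nonneg _)]
    exact Real.iSup_le (fun i => hM _ _) hM0
  have hS0 : ∀ ρ ω, 0 ≤ S ρ ω := fun ρ ω => Real.iSup_nonneg fun i => abs_nonneg _
  have hSle : ∀ ρ i ω, w i ≤ ρ → |Δ i ω| ≤ S ρ ω := by
    intro ρ i ω hi
    exact le_ciSup (f := fun i : {i : ι // w i ≤ ρ} => |Δ i ω|)
      ⟨M, by rintro _ ⟨j, rfl⟩; exact hM _ _⟩ ⟨i, hi⟩
  -- number of levels
  obtain ⟨N, hN⟩ : ∃ N : ℕ, ∀ i ∈ s, w i ≤ r * 4 ^ N := by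
    obtain ⟨N, hN⟩ := pow_unbounded_of_one_lt (s.sup' hs w / r) (by norm_num : (1 : ℝ) < 4)
    refine ⟨N, fun i hi => (Finset.le_sup' w hi).trans ?_⟩
    rw [div_lt_iff₀ hr] at hN
    linarith
  have hpt : ∀ ω, s.sup' hs (fun i => Δ i ω / (w i + r)) ≤ S r ω * (1 / r) +
      ∑ k ∈ Finset.range (N + 1), S (r * 4 ^ (k + 1)) ω * (1 / (r * (4 ^ k + 1))) := by
    intro ω
    refine Finset.sup'_le hs _ (fun i hi => ?_)
    have hwr : 0 < w i + r := by linarith [hw0 i]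
    have h1 : Δ i ω / (w i + r) ≤ |Δ i ω| / (w i + r) :=
      div_le_div_of_nonneg_right (le_abs_self _) hwr.le
    refine h1.trans ?_
    have hterm : ∀ k ∈ Finset.range (N + 1),
        0 ≤ S (r * 4 ^ (k + 1)) ω * (1 / (r * (4 ^ k + 1))) :=
      fun k _ => mul_nonneg (hS0 _ _) (by positivity)
    by_cases hwi : w i ≤ r
    · have h2 : |Δ i ω| / (w i + r) ≤ S r ω * (1 / r) := by
        rw [mul_one_div]
        exact div_le_div₀ (hS0 _ _) (hSle _ _ _ hwi) hr (by linarith [hw0 i])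
      exact h2.trans (le_add_of_nonneg_right (Finset.sum_nonneg hterm))
    · classical
      have hex : ∃ m : ℕ, w i ≤ r * 4 ^ m := ⟨N, hN i hi⟩
      have hm1 := Nat.find_spec hex
      have hm2 : Nat.find hex ≤ N := Nat.find_min' hex (hN i hi)
      obtain ⟨k, hk⟩ : ∃ k, Nat.find hex = k + 1 := by
        refine Nat.exists_eq_succ_of_ne_zero (fun h0 => hwi ?_)
        rw [h0] at hm1; simpa using hm1
      have hm3 : ¬ w i ≤ r * 4 ^ k := Nat.find_min hex (by omega)
      rw [hk] at hm1 hm2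
      push Not at hm3
      have h2 : |Δ i ω| / (w i + r) ≤ S (r * 4 ^ (k + 1)) ω * (1 / (r * (4 ^ k + 1))) := by
        rw [mul_one_div]
        exact div_le_div₀ (hS0 _ _) (hSle _ _ _ hm1) (by positivity) (by linarith)
      refine h2.trans ?_
      have h3 := Finset.single_le_sum hterm (Finset.mem_range.2 (by omega : k < N + 1))
      have h4 : 0 ≤ S r ω * (1 / r) := mul_nonneg (hS0 _ _) (by positivity)
      linarith
  have hBMΔ : ∀ i, BM (fun ω => Δ i ω / (w i + r)) := by
    intro i
    have h1 : BM (Δ i) := ⟨hΔ i, M, hM i⟩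
    simpa [div_eq_mul_inv] using h1.mul (.const ((w i + r)⁻¹))
  have bk : ∀ k : ℕ, BM (fun ω => S (r * 4 ^ (k + 1)) ω * (1 / (r * (4 ^ k + 1)))) :=
    fun k => (bS _).mul (.const _)
  have b0 : BM (fun ω => S r ω * (1 / r)) := (bS _).mul (.const _)
  have hint := integral_mono ((BM.sup' hs hBMΔ).integrable Q)
    ((b0.add (BM.sum (s := Finset.range (N + 1)) bk)).integrable Q) hpt
  rw [integral_add (b0.integrable Q) ((BM.sum bk).integrable Q),
    integral_finsetSum _ (fun k _ => (bk k).integrable Q), integral_mul_const] at hint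
  have hΦ4 : ∀ m : ℕ, Φ (r * 4 ^ m) ≤ 2 ^ m * Φ r := by
    intro m
    have h1 := hΦsub r (r * 4 ^ m) hr (le_mul_of_one_le_right hr.le (one_le_pow₀ (by norm_num)))
    have h2 : Real.sqrt (r * 4 ^ m) = Real.sqrt r * 2 ^ m := by
      have : (4 : ℝ) ^ m = (2 ^ m) ^ 2 := by rw [← pow_mul, mul_comm, pow_mul]; norm_num
      rw [Real.sqrt_mul hr.le, this, Real.sqrt_sq (by positivity)]
    have h3 : 0 < Real.sqrt r := Real.sqrt_pos.2 hr
    rw [h2, div_le_div_iff₀ (by positivity) h3] at h1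
    refine le_of_mul_le_mul_right ?_ h3
    linarith
  have hk : ∀ k ∈ Finset.range (N + 1),
      ∫ ω, S (r * 4 ^ (k + 1)) ω * (1 / (r * (4 ^ k + 1))) ∂Q ≤
        Φ r / r * ((2 : ℝ) ^ (k + 1) / ((4 : ℝ) ^ k + 1)) := by
    intro k _
    rw [integral_mul_const]
    have h1 := (hcomp (r * 4 ^ (k + 1)) (by positivity)).trans (hΦ4 (k + 1))
    have h2 := mul_le_mul_of_nonneg_right h1 (by positivity : 0 ≤ 1 / (r * ((4 : ℝ) ^ k + 1)))
    refine h2.trans (le_of_eq ?_)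
    field_simp
  have hsum := Finset.sum_le_sum hk
  rw [← Finset.mul_sum] at hsum
  have hpr : 0 < Φ r / r := div_pos (hΦpos r hr) hr
  have h5 : ∑ k ∈ Finset.range (N + 1), (2 : ℝ) ^ (k + 1) / ((4 : ℝ) ^ k + 1) ≤ 3 :=
    (peel_sum N).trans (by linarith [(by positivity : (0 : ℝ) ≤ 2 / 2 ^ N)])
  have h6 := mul_le_mul_of_nonneg_left h5 hpr.le
  have h7 := mul_le_mul_of_nonneg_right (hcomp r hr) (by positivity : 0 ≤ 1 / r)
  rw [mul_one_div (Φ r)] at h7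
  have h8 : 4 * Φ r / r = Φ r / r + Φ r / r * 3 := by ring
  rw [h8]
  linarith

/-- Theorem 4.5 (localization theorem, after Blanchard–Bousquet–Massart): under a
variance control `Var f ≤ ω(f)` and a sub-root bound `Φ` on the localized
complexity, with `r*` the unique positive solution of `Φ(r) = r/(24K)`, for every
`x > 0`, with probability at least `1 − e^{−x}`, every `f` in the class satisfies
`Pf − P_n f ≤ K⁻¹ (ω(f) + r* + (9K² + 16K‖F‖_∞) x/(4n))`. -/
theorem stmt13 {α : Type*} [MeasurableSpace α] {ι : Type*} [Countable ι]
    (P : Measure α) [IsProbabilityMeasure P]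
    (f : ι → α → ℝ) (hmeas : ∀ i, Measurable (f i))
    -- the class is uniformly bounded by `Cb`
    (Cb : ℝ) (hbdd : ∀ i x, |f i x| ≤ Cb)
    -- the variance control `ω`
    (w : ι → ℝ) (hw0 : ∀ i, 0 ≤ w i)
    (hvar : ∀ i, ProbabilityTheory.variance (f i) P ≤ w i)
    -- `Φ` is sub-root
    (Φ : ℝ → ℝ) (hΦpos : ∀ r, 0 < r → 0 < Φ r)
    (hΦmono : ∀ s t, 0 < s → s ≤ t → Φ s ≤ Φ t)
    (hΦsub : ∀ s t, 0 < s → s ≤ t → Φ t / Real.sqrt t ≤ Φ s / Real.sqrt s)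
    (n : ℕ) (hn : 0 < n)
    -- `Φ` bounds the localized complexity
    (hcomp : ∀ r : ℝ, 0 < r →
      (∫ ω : Fin n → α, (⨆ i : {i : ι // w i ≤ r},
          |(∫ x, f i x ∂P) - (∑ j, f i (ω j)) / n|)
        ∂(Measure.pi fun _ : Fin n => P)) ≤ Φ r)
    (K : ℝ) (hK : 0 < K)
    -- `r*` is the unique positive solution of `Φ(r) = r/(24K)`
    (rstar : ℝ) (hrpos : 0 < rstar) (hrsol : Φ rstar = rstar / (24 * K))
    (huniq : ∀ r, 0 < r → Φ r = r / (24 * K) → r = rstar)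
    (x : ℝ) (hx : 0 < x) :
    ENNReal.ofReal (1 - Real.exp (-x)) ≤
      Measure.pi (fun _ : Fin n => P)
        {ω : Fin n → α | ∀ i : ι,
          (∫ y, f i y ∂P) - (∑ j, f i (ω j)) / n ≤
            K⁻¹ * (w i + rstar + (9 * K ^ 2 + 16 * K * Cb) * x / (4 * n))} := by
  classical
  set Q := Measure.pi fun _ : Fin n => P with hQ
  have hnpos : (0 : ℝ) < n := by exact_mod_cast hn
  rcases isEmpty_or_nonempty ι with hι | ⟨⟨i0⟩⟩
  · have : {ω : Fin n → α | ∀ i : ι,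
          (∫ y, f i y ∂P) - (∑ j, f i (ω j)) / n ≤
            K⁻¹ * (w i + rstar + (9 * K ^ 2 + 16 * K * Cb) * x / (4 * n))} = Set.univ := by
      ext ω
      simp
    rw [this, measure_univ, ← ENNReal.ofReal_one]
    exact ENNReal.ofReal_le_ofReal (by linarith [Real.exp_pos (-x)])
  have hCb : 0 ≤ Cb := by
    rcases isEmpty_or_nonempty α with he | ⟨⟨a0⟩⟩
    · exact absurd (Subsingleton.elim P 0) (IsProbabilityMeasure.ne_zero P)
    · exact (abs_nonneg _).trans (hbdd i0 a0)
  set c : ℝ := (9 * K ^ 2 + 16 * K * Cb) * x / (4 * n) with hc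
  have hc0 : 0 ≤ c := by positivity
  set r : ℝ := rstar + c with hr
  have hrp : 0 < r := by linarith
  have bf : ∀ i, BM (f i) := fun i => ⟨hmeas i, Cb, hbdd i⟩
  set m : ι → ℝ := fun i => ∫ y, f i y ∂P with hm
  have hmb : ∀ i, |m i| ≤ Cb := by
    intro i
    have := norm_integral_le_of_norm_le_const (μ := P) (f := f i) (C := Cb)
      (Filter.Eventually.of_forall fun c => hbdd i _)
    simpa using this
  set Δ : ι → (Fin n → α) → ℝ := fun i ω => m i - (∑ j, f i (ω j)) / n with hΔ
  have hΔm : ∀ i, Measurable (Δ i) := by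
    intro i
    refine measurable_const.sub (Measurable.div_const ?_ _)
    exact Finset.measurable_sum _ (fun j _ => (hmeas i).comp (measurable_pi_apply j))
  have hΔb : ∀ i ω, |Δ i ω| ≤ 2 * Cb := by
    intro i ω
    have h1 : |(∑ j, f i (ω j)) / n| ≤ Cb := by
      rw [abs_div, abs_of_pos hnpos, div_le_iff₀ hnpos]
      refine (Finset.abs_sum_le_sum_abs _ _).trans ?_
      refine (Finset.sum_le_sum (fun j _ => hbdd i (ω j))).trans ?_
      simp [mul_comm]
    have := abs_sub (m i) ((∑ j, f i (ω j)) / n)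
    linarith [hmb i]
  have hwr : ∀ i, 0 < w i + r := fun i => by linarith [hw0 i]
  set g : ι → α → ℝ := fun i y => (m i - f i y) * (w i + r)⁻¹ with hg
  have bg : ∀ i, BM (g i) := fun i => ((BM.const _).sub (bf i)).mul (.const _)
  have hgmean : ∀ i, ∫ a, g i a ∂P = 0 := by
    intro i
    simp only [hg]
    rw [integral_mul_const, integral_sub (integrable_const _) ((bf i).integrable P)]
    simp [hm]
  have hgvar : ∀ i, ∫ a, (g i a) ^ 2 ∂P ≤ 1 / (4 * r) := by
    intro i
    have h1 : ∫ a, (g i a) ^ 2 ∂P = ProbabilityTheory.variance (f i) P * ((w i + r)⁻¹) ^ 2 := by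
      rw [ProbabilityTheory.variance_eq_integral (hmeas i).aemeasurable, ← integral_mul_const]
      refine integral_congr_ae (Filter.Eventually.of_forall fun a => ?_)
      simp only [hg, hm]; ring
    rw [h1]
    have h2 := mul_le_mul_of_nonneg_right (hvar i) (sq_nonneg ((w i + r)⁻¹))
    refine h2.trans ?_
    rw [inv_pow, ← div_eq_mul_inv, div_le_div_iff₀ (by have := hwr i; positivity) (by positivity)]
    nlinarith [sq_nonneg (w i - r)]
  have hgb : ∀ i a, g i a ≤ 2 * Cb / r := by
    intro i a
    simp only [hg]
    rw [← div_eq_mul_inv]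
    refine div_le_div₀ (by positivity) ?_ hrp (by linarith [hw0 i])
    have h1 := (abs_le.1 (hmb i)).2
    have h2 := (abs_le.1 (hbdd i a)).1
    linarith
  have hsumg : ∀ i (ω : Fin n → α), ∑ j, g i (ω j) = n * (Δ i ω / (w i + r)) := by
    intro i ω
    simp only [hg, hΔ]
    rw [← Finset.sum_mul, Finset.sum_sub_distrib]
    simp only [Finset.sum_const, Finset.card_univ, Fintype.card_fin, nsmul_eq_mul]
    field_simp
  -- bad events
  set A : ι → Set (Fin n → α) := fun i => {ω | K⁻¹ * (w i + r) < Δ i ω} with hA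
  have hAm : ∀ i, MeasurableSet (A i) := fun i => measurableSet_lt measurable_const (hΔm i)
  have hfin : ∀ s : Finset ι, Q (⋃ i ∈ s, A i) ≤ ENNReal.ofReal (Real.exp (-x)) := by
    intro s
    rcases s.eq_empty_or_nonempty with rfl | hs
    · simp
    have hpeel := peeling Q Δ hΔm (2 * Cb) (by positivity) hΔb w hw0 Φ hΦsub hΦpos hcomp r hrp s hs
    have hsup : ∀ ω : Fin n → α, s.sup' hs (fun i => ∑ j, g i (ω j)) =
        n * s.sup' hs (fun i => Δ i ω / (w i + r)) := by
      intro ω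
      simp only [hsumg]
      exact (Finset.comp_sup'_eq_sup'_comp hs (fun t : ℝ => n * t)
        (fun a b => mul_max_of_nonneg a b hnpos.le)).symm
    have hE : ∫ ω : Fin n → α, s.sup' hs (fun i => ∑ j, g i (ω j)) ∂Q ≤ n * (4 * Φ r / r) := by
      simp only [hsup]
      rw [integral_const_mul]
      exact mul_le_mul_of_nonneg_left hpeel hnpos.le
    set l : ℝ := 3 / 2 * K * x / n with hl
    have hlp : 0 < l := by positivity
    set a1 : ℝ := rstar / r with ha1
    set a2 : ℝ := 9 * K ^ 2 * x / (4 * n * r) with ha2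
    set a3 : ℝ := 4 * K * Cb * x / (n * r) with ha3
    have h1 : 0 ≤ a1 := by positivity
    have h2 : 0 ≤ a2 := by positivity
    have h3 : 0 ≤ a3 := by positivity
    have hsum : a1 + a2 + a3 = 1 := by
      have : a1 + a2 + a3 = (rstar + c) / r := by
        simp only [ha1, ha2, ha3, hc]; field_simp; ring
      rw [this, ← hr, div_self hrp.ne']
    have hlb : l * (2 * Cb / r) = 3 / 4 * a3 := by
      simp only [hl, ha3]; field_simp <;> ring_nf
    have he : K * (4 * Φ r / r) ≤ Real.sqrt a1 / 6 := by
      have h4 := hΦsub rstar r hrpos (by linarith)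
      have hsr : 0 < Real.sqrt r := Real.sqrt_pos.2 hrp
      have hss : 0 < Real.sqrt rstar := Real.sqrt_pos.2 hrpos
      rw [hrsol, div_le_iff₀ hsr] at h4
      have e1 : rstar = Real.sqrt rstar * Real.sqrt rstar := (Real.mul_self_sqrt hrpos.le).symm
      have e2 : r = Real.sqrt r * Real.sqrt r := (Real.mul_self_sqrt hrp.le).symm
      have h5 : rstar / (24 * K) / Real.sqrt rstar * Real.sqrt r =
          Real.sqrt rstar * Real.sqrt r / (24 * K) := by
        conv_lhs => rw [e1]
        rw [Real.sqrt_mul_self hss.le]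
        field_simp
      rw [h5] at h4
      rw [ha1, Real.sqrt_div hrpos.le]
      calc K * (4 * Φ r / r) ≤ K * (4 * (Real.sqrt rstar * Real.sqrt r / (24 * K)) / r) := by
            gcongr
        _ = Real.sqrt rstar * Real.sqrt r / r / 6 := by field_simp; norm_num
        _ = Real.sqrt rstar / Real.sqrt r / 6 := by
            congr 1
            rw [div_eq_div_iff hrp.ne' hsr.ne', mul_assoc, ← e2]
    have harith := final_arith (Real.sq_sqrt h1) h2 hsum he
    have hmain := talagrand_chernoff P n s hs g bg hgmean (1 / (4 * r)) hgvar (2 * Cb / r)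
      (by positivity) hgb l hlp (by rw [hlb]; linarith) (n * (4 * Φ r / r)) (n / K) x hE (by
        rw [hlb]
        have e3 : l * (n * (4 * Φ r / r)) = x * (3 / 2 * (K * (4 * Φ r / r))) := by
          simp only [hl]; field_simp
        have e4 : n * (1 / (4 * r)) / 2 * l ^ 2 = x * (1 / 8 * a2) := by
          simp only [hl, ha2]; field_simp; ring
        have e5 : l * (n / K) = x * (3 / 2) := by
          simp only [hl]; field_simp
        rw [e3, e4, e5]
        have := mul_le_mul_of_nonneg_left harith hx.le
        linarith)
    have hsubset : (⋃ i ∈ s, A i) ⊆ {ω | (n : ℝ) / K ≤ s.sup' hs (fun i => ∑ j, g i (ω j))} := by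
      intro ω hω
      simp only [Set.mem_iUnion] at hω
      obtain ⟨i, hi, hω⟩ := hω
      have h6 : K⁻¹ * (w i + r) < Δ i ω := hω
      have h7 : K⁻¹ ≤ Δ i ω / (w i + r) := by
        rw [le_div_iff₀ (hwr i)]; exact h6.le
      have h8 := Finset.le_sup' (fun i => ∑ j, g i (ω j)) hi
      have h9 := mul_le_mul_of_nonneg_left h7 hnpos.le
      simp only [Set.mem_setOf_eq]
      refine le_trans ?_ h8
      simp only [hsumg]
      rw [div_eq_mul_inv]; exact h9
    refine (measure_mono hsubset).trans ?_
    rw [← ofReal_measureReal]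
    exact ENNReal.ofReal_le_ofReal hmain
  have hbad : Q (⋃ i, A i) ≤ ENNReal.ofReal (Real.exp (-x)) := by
    rw [Set.iUnion_eq_iUnion_finset, Directed.measure_iUnion]
    · exact iSup_le hfin
    · refine Monotone.directed_le (fun s t hst => ?_)
      exact Set.biUnion_subset_biUnion_left hst
  have hgood : {ω : Fin n → α | ∀ i : ι,
          (∫ y, f i y ∂P) - (∑ j, f i (ω j)) / n ≤ K⁻¹ * (w i + rstar + c)} = (⋃ i, A i)ᶜ := by
    ext ω
    simp only [Set.mem_setOf_eq, Set.mem_compl_iff, Set.mem_iUnion, not_exists, hA, not_lt, hΔ, hm,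
      hr, add_assoc]
  rw [hgood, prob_compl_eq_one_sub (MeasurableSet.iUnion hAm),
    ENNReal.ofReal_sub _ (Real.exp_pos _).le, ENNReal.ofReal_one]
  exact tsub_le_tsub_left hbad 1
end

section
/- Assume P satisfies a margin condition with radius r_0 (so M is finite). Let F = { γ(c,·) − γ(c*(c),·) : c ∈ B(0,M)^k }, where c*(c) ∈ argmin_{c* ∈ M} ‖c − c*‖, and set ω(f) = 16M² ‖c − c*(c)‖² for f = γ(c,·) − γ(c*(c),·). Then for every δ > 0, E sup_{f ∈ F, ω(f) ≤ δ} |(P − P_n) f| ≤ (4√(πk) + √(2 log|M̄|)) √δ / √n, where P_n is the empirical measure of n i.i.d. observations from P. -/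
open MeasureTheory Metric

noncomputable section

variable {H : Type*} [NormedAddCommGroup H] [InnerProductSpace ℝ H] [MeasurableSpace H]

/-- `qgamma k c x = min_j ‖x - c j‖²`. -/
def qgamma (k : ℕ) (c : Fin k → H) (x : H) : ℝ := ⨅ j : Fin k, ‖x - c j‖ ^ 2

/-- distortion (risk) of a codebook. -/
def qrisk (k : ℕ) (P : Measure H) (c : Fin k → H) : ℝ := ∫ x, qgamma k c x ∂P

/-- the set of optimal codebooks. -/
def qopt (k : ℕ) (P : Measure H) : Set (Fin k → H) :=
  {c | ∀ c' : Fin k → H, qrisk k P c ≤ qrisk k P c'}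

/-- the `i`-th (closed) Voronoi cell of the codebook `c`. -/
def vcell (k : ℕ) (c : Fin k → H) (i : Fin k) : Set H :=
  {x | ∀ j : Fin k, ‖x - c i‖ ≤ ‖x - c j‖}

/-- `B`, the minimal separation between code points of optimal codebooks. -/
def qB (k : ℕ) (P : Measure H) : ℝ :=
  sInf {b | ∃ c ∈ qopt k P, ∃ i j : Fin k, i ≠ j ∧ b = ‖c i - c j‖}

/-- `p_min`, the minimal mass of a Voronoi cell of an optimal codebook. -/
def qpmin (k : ℕ) (P : Measure H) : ℝ :=
  sInf {p | ∃ c ∈ qopt k P, ∃ i : Fin k, p = (P (vcell k c i)).toReal}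

/-- `N_{c*}`, the union of the boundaries between Voronoi cells. -/
def nbd (k : ℕ) (c : Fin k → H) : Set H :=
  ⋃ (i : Fin k) (j : Fin k) (_ : i ≠ j), vcell k c i ∩ vcell k c j

/-- the weight function `p(t)`, the maximal mass of the closed `t`-neighborhood
of `N_{c*}` over optimal codebooks `c*`. -/
def pweight (k : ℕ) (P : Measure H) (t : ℝ) : ℝ :=
  sSup {p | ∃ c ∈ qopt k P, p = (P (cthickening t (nbd k c))).toReal}

/-- `P` is `M`-bounded: its support is contained in the closed ball `B(0,M)`. -/
def mbounded (P : Measure H) (M : ℝ) : Prop := P (closedBall (0 : H) M)ᶜ = 0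

/-- the support of `P` contains more than `k` points. -/
def suppGT (P : Measure H) (k : ℕ) : Prop :=
  ∀ S : Finset H, S.card ≤ k → P ((S : Set H)ᶜ) ≠ 0

/-- the margin condition with radius `r0`. -/
def margin (k : ℕ) (P : Measure H) (M r0 : ℝ) : Prop :=
  0 < r0 ∧ mbounded P M ∧
    ∀ t : ℝ, 0 ≤ t → t ≤ r0 → pweight k P t ≤ qB k P * qpmin k P * t / (128 * M ^ 2)

set_option linter.unusedSectionVars false

section Aux

theorem aux_integrable {Z : Type*} [MeasurableSpace Z] (μ : Measure Z) [IsFiniteMeasure μ]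
    {f : Z → ℝ} (hf : Measurable f) (C : ℝ) (hC : ∀ z, |f z| ≤ C) : Integrable f μ :=
  Integrable.of_bound hf.aestronglyMeasurable C (Filter.Eventually.of_forall hC)

theorem aux_bdd {T : Type*} {f : T → ℝ} {C : ℝ} (h : ∀ t, |f t| ≤ C) :
    BddAbove (Set.range f) :=
  ⟨C, by rintro _ ⟨t, rfl⟩; exact (abs_le.1 (h t)).2⟩

theorem aux_sup_abs {T : Type*} [Nonempty T] {f : T → ℝ} {C : ℝ} (h : ∀ t, |f t| ≤ C) :
    |⨆ t, f t| ≤ C := by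
  rw [abs_le]
  constructor
  · obtain ⟨t⟩ := ‹Nonempty T›
    exact (abs_le.1 (h t)).1.trans (le_ciSup (aux_bdd h) t)
  · exact ciSup_le fun t => (abs_le.1 (h t)).2

theorem aux_sup_meas {T Z : Type*} [TopologicalSpace Z] [MeasurableSpace Z]
    [OpensMeasurableSpace Z] {K : T → Z → ℝ} (hK : ∀ t, Continuous (K t))
    {C : ℝ} (hC : ∀ t z, |K t z| ≤ C) : Measurable (fun z => ⨆ t, K t z) :=
  (lowerSemicontinuous_ciSup (fun z => aux_bdd (fun t => hC t z))
    (fun t => (hK t).lowerSemicontinuous)).measurable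

theorem aux_sup_int {T Z : Type*} [Nonempty T] [TopologicalSpace Z] [MeasurableSpace Z]
    [OpensMeasurableSpace Z] (μ : Measure Z) [IsFiniteMeasure μ]
    {K : T → Z → ℝ} (hK : ∀ t, Continuous (K t))
    {C : ℝ} (hC : ∀ t z, |K t z| ≤ C) : Integrable (fun z => ⨆ t, K t z) μ :=
  aux_integrable μ (aux_sup_meas hK hC) C (fun z => aux_sup_abs (fun t => hC t z))

theorem aux_cons_meas {X : Type*} [MeasurableSpace X] (n : ℕ) :
    Measurable (fun z : X × (Fin n → X) => (Fin.cons z.1 z.2 : Fin (n+1) → X)) := by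
  rw [measurable_pi_iff]
  intro i
  refine Fin.cases ?_ (fun i => ?_) i
  · simpa using measurable_fst
  · simp only [Fin.cons_succ]
    exact (measurable_pi_apply i).comp measurable_snd

theorem aux_pi_succ {X : Type*} [MeasurableSpace X] (μ : Measure X) [IsProbabilityMeasure μ]
    (n : ℕ) {f : (Fin (n+1) → X) → ℝ} (hf : Measurable f) (C : ℝ) (hC : ∀ z, |f z| ≤ C) :
    ∫ z, f z ∂(Measure.pi fun _ : Fin (n+1) => μ) =
      ∫ x, ∫ xs, f (Fin.cons x xs) ∂(Measure.pi fun _ : Fin n => μ) ∂μ := by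
  have h := (measurePreserving_piFinSuccAbove (fun _ : Fin (n+1) => μ) 0).symm
  have h2 := h.integral_comp' f
  rw [← h2]
  have h3 : ∀ z : X × (Fin n → X),
      (MeasurableEquiv.piFinSuccAbove (fun _ : Fin (n+1) => X) 0).symm z = Fin.cons z.1 z.2 := by
    intro z
    simp [MeasurableEquiv.piFinSuccAbove_symm_apply, Fin.insertNthEquiv]
  simp_rw [h3]
  rw [integral_prod]
  exact aux_integrable _ (hf.comp (aux_cons_meas n)) C (fun z => hC _)

theorem aux_sum_abs {n : ℕ} {f : Fin n → ℝ} {C : ℝ} (h : ∀ i, |f i| ≤ C) :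
    |∑ i, f i| ≤ n * C := by
  refine (Finset.abs_sum_le_sum_abs _ _).trans ?_
  refine (Finset.sum_le_sum fun i _ => h i).trans ?_
  simp

theorem aux_tensor {T X Y : Type*} [Nonempty T]
    [TopologicalSpace X] [SecondCountableTopology X] [MeasurableSpace X] [BorelSpace X]
    [TopologicalSpace Y] [SecondCountableTopology Y] [MeasurableSpace Y] [BorelSpace Y]
    (μ : Measure X) [IsProbabilityMeasure μ] (ν : Measure Y) [IsProbabilityMeasure ν]
    (F : T → X → ℝ) (G : T → Y → ℝ) (hF : ∀ t, Continuous (F t)) (hG : ∀ t, Continuous (G t))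
    (C : ℝ) (hFC : ∀ t x, |F t x| ≤ C) (hGC : ∀ t x, |G t x| ≤ C)
    (h : ∀ A : T → ℝ, (∃ D, ∀ t, |A t| ≤ D) →
      ∫ x, (⨆ t, (A t + F t x)) ∂μ ≤ ∫ y, (⨆ t, (A t + G t y)) ∂ν) (n : ℕ) :
    ∀ A : T → ℝ, (∃ D, ∀ t, |A t| ≤ D) →
      ∫ x, (⨆ t, (A t + ∑ i, F t (x i))) ∂(Measure.pi fun _ : Fin n => μ) ≤
      ∫ y, (⨆ t, (A t + ∑ i, G t (y i))) ∂(Measure.pi fun _ : Fin n => ν) := by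
  induction n with
  | zero => intro A _; simp
  | succ n ih =>
    rintro A ⟨D, hD⟩
    have bF : ∀ (m : ℕ) t (x : Fin m → X), |A t + ∑ i, F t (x i)| ≤ D + m * C := fun m t x =>
      (abs_add_le _ _).trans (add_le_add (hD t) (aux_sum_abs fun i => hFC t _))
    have bG : ∀ (m : ℕ) t (x : Fin m → Y), |A t + ∑ i, G t (x i)| ≤ D + m * C := fun m t x =>
      (abs_add_le _ _).trans (add_le_add (hD t) (aux_sum_abs fun i => hGC t _))
    rw [aux_pi_succ μ n (aux_sup_meas (fun t => by fun_prop) (bF _)) (D + (n+1:ℕ) * C)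
        (fun z => aux_sup_abs fun t => bF _ t z),
      aux_pi_succ ν n (aux_sup_meas (fun t => by fun_prop) (bG _)) (D + (n+1:ℕ) * C)
        (fun z => aux_sup_abs fun t => bG _ t z)]
    simp only [Fin.sum_univ_succ, Fin.cons_zero, Fin.cons_succ]
    have bM : ∀ t (z : X × (Fin n → Y)), |A t + (F t z.1 + ∑ i, G t (z.2 i))| ≤ D + (C + n * C) :=
      fun t z => (abs_add_le _ _).trans (add_le_add (hD t) ((abs_add_le _ _).trans
        (add_le_add (hFC t _) (aux_sum_abs fun i => hGC t _))))
    have bX : ∀ t (z : X × (Fin n → X)), |A t + (F t z.1 + ∑ i, F t (z.2 i))| ≤ D + (C + n * C) :=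
      fun t z => (abs_add_le _ _).trans (add_le_add (hD t) ((abs_add_le _ _).trans
        (add_le_add (hFC t _) (aux_sum_abs fun i => hFC t _))))
    have bY : ∀ t (z : Y × (Fin n → Y)), |A t + (G t z.1 + ∑ i, G t (z.2 i))| ≤ D + (C + n * C) :=
      fun t z => (abs_add_le _ _).trans (add_le_add (hD t) ((abs_add_le _ _).trans
        (add_le_add (hGC t _) (aux_sum_abs fun i => hGC t _))))
    have iX := aux_sup_int (μ.prod (Measure.pi fun _ : Fin n => μ))
      (K := fun t (z : X × (Fin n → X)) => A t + (F t z.1 + ∑ i, F t (z.2 i)))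
      (fun t => by fun_prop) bX
    have iM := aux_sup_int (μ.prod (Measure.pi fun _ : Fin n => ν))
      (K := fun t (z : X × (Fin n → Y)) => A t + (F t z.1 + ∑ i, G t (z.2 i)))
      (fun t => by fun_prop) bM
    have iY := aux_sup_int (ν.prod (Measure.pi fun _ : Fin n => ν))
      (K := fun t (z : Y × (Fin n → Y)) => A t + (G t z.1 + ∑ i, G t (z.2 i)))
      (fun t => by fun_prop) bY
    calc ∫ x, ∫ xs, (⨆ t, (A t + (F t x + ∑ i, F t (xs i)))) ∂(Measure.pi fun _ : Fin n => μ) ∂μ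
        ≤ ∫ x, ∫ ys, (⨆ t, (A t + (F t x + ∑ i, G t (ys i)))) ∂(Measure.pi fun _ : Fin n => ν) ∂μ := by
          apply integral_mono iX.integral_prod_left iM.integral_prod_left
          intro x
          have := ih (fun t => A t + F t x) ⟨D + C, fun t =>
            (abs_add_le _ _).trans (add_le_add (hD t) (hFC t _))⟩
          simpa only [add_assoc] using this
      _ = ∫ ys, ∫ x, (⨆ t, (A t + (F t x + ∑ i, G t (ys i)))) ∂μ ∂(Measure.pi fun _ : Fin n => ν) :=
          integral_integral_swap iM
      _ ≤ ∫ ys, ∫ y, (⨆ t, (A t + (G t y + ∑ i, G t (ys i)))) ∂ν ∂(Measure.pi fun _ : Fin n => ν) := by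
          apply integral_mono iM.integral_prod_right iY.integral_prod_right
          intro ys
          have := h (fun t => A t + ∑ i, G t (ys i)) ⟨D + n * C, fun t => bG _ _ _⟩
          simpa only [add_assoc, add_comm (∑ i, G _ (ys i))] using this
      _ = _ := (integral_integral_swap iY).symm

theorem aux_second_moment {Y E : Type*} [MeasurableSpace Y]
    [NormedAddCommGroup E] [MeasurableSpace E] [BorelSpace E] [SecondCountableTopology E]
    (ν : Measure Y) [IsProbabilityMeasure ν] (ξ : Y → E) (hξ : Measurable ξ) (b : ℝ)
    (hb : ∀ y, ‖ξ y‖ ≤ b)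
    (h : ∀ v : E, ∫ y, ‖v + ξ y‖ ^ 2 ∂ν ≤ ‖v‖ ^ 2 + b ^ 2) (n : ℕ) :
    ∀ v : E, ∫ y, ‖v + ∑ i, ξ (y i)‖ ^ 2 ∂(Measure.pi fun _ : Fin n => ν) ≤ ‖v‖ ^ 2 + n * b ^ 2 := by
  induction n with
  | zero => intro v; simp
  | succ n ih =>
    intro v
    have bd : ∀ (m : ℕ) (w : E) (y : Fin m → Y), |‖w + ∑ i, ξ (y i)‖ ^ 2| ≤ (‖w‖ + m * b) ^ 2 := by
      intro m w y
      rw [abs_of_nonneg (by positivity)]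
      gcongr
      refine (norm_add_le _ _).trans (add_le_add le_rfl ((norm_sum_le _ _).trans ?_))
      refine (Finset.sum_le_sum fun i _ => hb _).trans ?_
      simp
    have ms : ∀ (m : ℕ) (w : E), Measurable (fun y : Fin m → Y => ‖w + ∑ i, ξ (y i)‖ ^ 2) := by
      intro m w
      fun_prop
    rw [aux_pi_succ ν n (ms _ v) _ (bd _ v)]
    simp only [Fin.sum_univ_succ, Fin.cons_zero, Fin.cons_succ]
    have hi : ∀ y, ∫ ys, ‖v + (ξ y + ∑ i, ξ (ys i))‖ ^ 2 ∂(Measure.pi fun _ : Fin n => ν) ≤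
        ‖v + ξ y‖ ^ 2 + n * b ^ 2 := by
      intro y
      simpa only [add_assoc] using ih (v + ξ y)
    have i1 : Integrable (fun y => ‖v + ξ y‖ ^ 2) ν := by
      refine aux_integrable ν (by fun_prop) ((‖v‖ + b) ^ 2) fun y => ?_
      rw [abs_of_nonneg (by positivity)]
      gcongr
      exact (norm_add_le _ _).trans (add_le_add le_rfl (hb y))
    refine (integral_mono_of_nonneg (Filter.Eventually.of_forall fun y => integral_nonneg fun _ => by positivity) (i1.add (integrable_const _))
      (Filter.Eventually.of_forall hi)).trans ?_
    simp only [Pi.add_apply]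
    rw [integral_add i1 (integrable_const _)]
    have := h v
    simp
    nlinarith

theorem aux_mcdiarmid {X : Type*} [MeasurableSpace X] (μ : Measure X) [IsProbabilityMeasure μ]
    (c lam : ℝ) (n : ℕ) :
    ∀ f : (Fin n → X) → ℝ, Measurable f → (∃ C, ∀ z, |f z| ≤ C) →
      (∀ z i x, |f (Function.update z i x) - f z| ≤ c) →
      ∫ z, Real.exp (lam * (f z - ∫ w, f w ∂(Measure.pi fun _ : Fin n => μ)))
        ∂(Measure.pi fun _ : Fin n => μ) ≤ Real.exp (n * (lam ^ 2 * c ^ 2 / 8)) := by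
  induction n with
  | zero =>
    intro f _ _ _
    have h0 : ∀ w : Fin 0 → X, f w = f default := fun w => by rw [Subsingleton.elim w default]
    simp_rw [h0]
    simp
  | succ n ih =>
    rintro f hf ⟨C, hC⟩ hd
    set ν := Measure.pi fun _ : Fin n => μ with hν
    set m := ∫ w, f w ∂(Measure.pi fun _ : Fin (n+1) => μ) with hm
    have fm : Measurable (fun z : X × (Fin n → X) => f (Fin.cons z.1 z.2)) :=
      hf.comp (aux_cons_meas n)
    have fi : Integrable (fun z : X × (Fin n → X) => f (Fin.cons z.1 z.2)) (μ.prod ν) :=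
      aux_integrable _ fm C (fun _ => hC _)
    let g : X → ℝ := fun x => ∫ xs, f (Fin.cons x xs) ∂ν
    have gm : Measurable g := (fm.stronglyMeasurable.integral_prod_right').measurable
    have gC : ∀ x, |g x| ≤ C := by
      intro x
      have := norm_integral_le_of_norm_le_const (μ := ν) (f := fun xs => f (Fin.cons x xs)) (C := C)
        (Filter.Eventually.of_forall fun _ => hC _)
      simpa using this
    have gmean : ∫ x, g x ∂μ = m := (aux_pi_succ μ n hf C hC).symm
    have fxi : ∀ x, Integrable (fun xs => f (Fin.cons x xs)) ν := fun x =>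
      aux_integrable _ (fm.comp measurable_prodMk_left) C (fun _ => hC _)
    have gd : ∀ x y, g x - g y ≤ c := by
      intro x y
      have : g x - g y = ∫ xs, (f (Fin.cons x xs) - f (Fin.cons y xs)) ∂ν :=
        (integral_sub (fxi x) (fxi y)).symm
      rw [this]
      have h1 : ∫ xs, (f (Fin.cons x xs) - f (Fin.cons y xs)) ∂ν ≤ ∫ _xs, c ∂ν := by
        apply integral_mono ((fxi x).sub (fxi y)) (integrable_const _)
        intro xs
        have := (abs_le.1 (hd (Fin.cons y xs) 0 x)).2
        simpa [Fin.update_cons_zero] using this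
      simpa using h1
    have expm : Measurable (fun z => Real.exp (lam * (f z - m))) := by fun_prop
    have expC : ∀ z, |Real.exp (lam * (f z - m))| ≤ Real.exp (|lam| * (C + |m|)) := by
      intro z
      rw [abs_of_pos (Real.exp_pos _)]
      apply Real.exp_le_exp.2
      refine (le_abs_self _).trans ?_
      rw [abs_mul]
      gcongr
      exact (abs_sub _ _).trans (add_le_add (hC z) le_rfl)
    rw [aux_pi_succ μ n expm _ expC]
    have step : ∀ x, ∫ xs, Real.exp (lam * (f (Fin.cons x xs) - m)) ∂ν ≤
        Real.exp (lam * (g x - m)) * Real.exp (n * (lam ^ 2 * c ^ 2 / 8)) := by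
      intro x
      have h1 := ih (fun xs => f (Fin.cons x xs)) (fm.comp measurable_prodMk_left)
        ⟨C, fun _ => hC _⟩ (fun z i y => by
          have := hd (Fin.cons x z) i.succ y
          rwa [← Fin.cons_update] at this)
      have h2 : ∀ xs, Real.exp (lam * (f (Fin.cons x xs) - m)) =
          Real.exp (lam * (g x - m)) * Real.exp (lam * (f (Fin.cons x xs) - g x)) := by
        intro xs
        rw [← Real.exp_add]; congr 1; ring
      simp_rw [h2]
      rw [integral_const_mul]
      gcongr
    have hoeff : ∫ x, Real.exp (lam * (g x - m)) ∂μ ≤ Real.exp (lam ^ 2 * c ^ 2 / 8) := by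
      have hX : Nonempty X := by
        by_contra hX
        rw [not_nonempty_iff] at hX
        have : μ = 0 := Measure.eq_zero_of_isEmpty μ
        exact (IsProbabilityMeasure.ne_zero μ) this
      have hb1 : BddAbove (Set.range g) := aux_bdd gC
      have hb2 : BddBelow (Set.range g) :=
        ⟨-C, by rintro _ ⟨t, rfl⟩; exact (abs_le.1 (gC t)).1⟩
      have hs := ProbabilityTheory.hasSubgaussianMGF_of_mem_Icc (μ := μ) (X := g) (a := ⨅ x, g x)
        (b := ⨆ x, g x) gm.aemeasurable
        (Filter.Eventually.of_forall fun x => ⟨ciInf_le hb2 x, le_ciSup hb1 x⟩)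
      have h1 := hs.mgf_le lam
      rw [gmean] at h1
      refine h1.trans (Real.exp_le_exp.2 ?_)
      have h0 : 0 ≤ (⨆ x, g x) - ⨅ x, g x := by
        obtain ⟨x⟩ := hX
        linarith [ciInf_le hb2 x, le_ciSup hb1 x]
      have h2 : (⨆ x, g x) - (⨅ x, g x) ≤ c := by
        have : ∀ x, g x ≤ c + ⨅ y, g y := by
          intro x
          have : g x - c ≤ ⨅ y, g y := le_ciInf fun y => by linarith [gd x y]
          linarith
        linarith [ciSup_le this]
      push_cast
      rw [Real.norm_of_nonneg h0]
      have h3 : ((⨆ x, g x) - ⨅ x, g x) ^ 2 ≤ c ^ 2 := by gcongr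
      nlinarith [mul_le_mul_of_nonneg_left h3 (sq_nonneg lam)]
    have ei : Integrable (fun x => Real.exp (lam * (g x - m)) *
        Real.exp (n * (lam ^ 2 * c ^ 2 / 8))) μ := by
      apply Integrable.mul_const
      refine aux_integrable _ (by fun_prop) (Real.exp (|lam| * (C + |m|))) fun z => ?_
      rw [abs_of_pos (Real.exp_pos _)]
      apply Real.exp_le_exp.2
      refine (le_abs_self _).trans ?_
      rw [abs_mul]
      gcongr
      exact (abs_sub _ _).trans (add_le_add (gC z) le_rfl)
    refine (integral_mono_of_nonneg (Filter.Eventually.of_forall fun y => integral_nonneg fun _ => by positivity) ei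
      (Filter.Eventually.of_forall step)).trans ?_
    rw [integral_mul_const]
    calc _ ≤ Real.exp (lam ^ 2 * c ^ 2 / 8) * Real.exp (n * (lam ^ 2 * c ^ 2 / 8)) := by gcongr
      _ = _ := by rw [← Real.exp_add]; congr 1; push_cast; ring

end Aux
section Aux2

/-- random sign. -/
def sgnB (b : Bool) : ℝ := if b then 1 else -1

theorem sgnB_not (b : Bool) : sgnB (!b) = - sgnB b := by cases b <;> simp [sgnB]

theorem abs_sgnB (b : Bool) : |sgnB b| = 1 := by cases b <;> simp [sgnB]

/-- uniform measure on sign vectors. -/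
def radM (k : ℕ) : Measure (Fin k → Bool) := (PMF.uniformOfFintype (Fin k → Bool)).toMeasure

instance radM_prob (k : ℕ) : IsProbabilityMeasure (radM k) := by
  unfold radM; infer_instance

theorem radM_comp (k : ℕ) (e : (Fin k → Bool) ≃ (Fin k → Bool)) (f : (Fin k → Bool) → ℝ) :
    ∫ s, f (e s) ∂(radM k) = ∫ s, f s ∂(radM k) := by
  unfold radM
  rw [PMF.integral_eq_sum, PMF.integral_eq_sum]
  simp only [PMF.uniformOfFintype_apply]
  exact Equiv.sum_comp e (fun s => ((Fintype.card (Fin k → Bool) : ENNReal)⁻¹).toReal • f s)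

/-- flip all signs. -/
def flipAll (k : ℕ) : (Fin k → Bool) ≃ (Fin k → Bool) where
  toFun s := fun i => !(s i)
  invFun s := fun i => !(s i)
  left_inv s := by simp
  right_inv s := by simp

/-- flip all signs but one. -/
def flipBut (k : ℕ) (l : Fin k) : (Fin k → Bool) ≃ (Fin k → Bool) where
  toFun s := fun i => if i = l then s i else !(s i)
  invFun s := fun i => if i = l then s i else !(s i)
  left_inv s := by ext i; by_cases h : i = l <;> simp [h]
  right_inv s := by ext i; by_cases h : i = l <;> simp [h]

theorem radM_int (k : ℕ) (f : (Fin k → Bool) → ℝ) : Integrable f (radM k) := .of_finite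

theorem radM_lower (k : ℕ) (w : Fin k → ℝ) (l : Fin k) :
    |w l| ≤ ∫ s, |∑ j, sgnB (s j) * w j| ∂(radM k) := by
  have h1 := radM_comp k (flipBut k l) (fun s => |∑ j, sgnB (s j) * w j|)
  have h2 : ∀ s : Fin k → Bool, 2 * |w l| ≤ |∑ j, sgnB (s j) * w j| +
      |∑ j, sgnB (flipBut k l s j) * w j| := by
    intro s
    refine le_trans (le_of_eq ?_) (abs_add_le _ _)
    rw [← Finset.sum_add_distrib, Finset.sum_eq_single l]
    · simp only [flipBut, Equiv.coe_fn_mk, if_true]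
      rw [show sgnB (s l) * w l + sgnB (s l) * w l = sgnB (s l) * (2 * w l) by ring, abs_mul,
        abs_sgnB, abs_mul]
      simp
    · intro j _ hj
      simp only [flipBut, Equiv.coe_fn_mk, if_neg hj, sgnB_not]
      ring
    · simp
  have h3 : ∫ _s, 2 * |w l| ∂(radM k) ≤ ∫ s, (|∑ j, sgnB (s j) * w j| +
      |∑ j, sgnB (flipBut k l s j) * w j|) ∂(radM k) :=
    integral_mono (radM_int _ _) (radM_int _ _) h2
  rw [integral_add (radM_int _ _) (radM_int _ _), h1] at h3
  simp at h3
  linarith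

theorem aux_contract {T : Type*} [Nonempty T] (k : ℕ) (A F : T → ℝ) (u : T → Fin k → ℝ)
    (C D : ℝ) (hA : ∀ t, |A t| ≤ D) (hu : ∀ t j, |u t j| ≤ C)
    (hL : ∀ s t, ∃ j, |F s - F t| ≤ |u s j - u t j|) :
    (⨆ t, (A t + 2 * F t)) + (⨆ t, (A t - 2 * F t)) ≤
      2 * ∫ s, (⨆ t, (A t + ∑ j, 2 * (sgnB (s j) * u t j))) ∂(radM k) := by
  apply ciSup_add_ciSup_le
  intro t t'
  obtain ⟨j, hj⟩ := hL t t'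
  let Φ : (Fin k → Bool) → ℝ := fun s => ⨆ t, (A t + ∑ j, 2 * (sgnB (s j) * u t j))
  have hb : ∀ s : Fin k → Bool, ∀ t, |A t + ∑ j, 2 * (sgnB (s j) * u t j)| ≤ D + k * (2 * C) := by
    intro s t
    refine (abs_add_le _ _).trans (add_le_add (hA t) (aux_sum_abs fun j => ?_))
    rw [abs_mul, abs_mul, abs_sgnB]
    simpa using hu t j
  have hΦ : ∀ s t, A t + ∑ j, 2 * (sgnB (s j) * u t j) ≤ Φ s := fun s t =>
    le_ciSup (aux_bdd (hb s)) t
  have h1 : 2 * |u t j - u t' j| ≤ ∫ s, 2 * |∑ j, sgnB (s j) * (u t j - u t' j)| ∂(radM k) := by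
    rw [integral_const_mul]
    have := radM_lower k (fun j => u t j - u t' j) j
    linarith
  have h2 : ∀ s, A t + A t' + 2 * |∑ j, sgnB (s j) * (u t j - u t' j)| ≤
      Φ s + Φ (flipAll k s) := by
    intro s
    have e1 : ∀ t, ∑ j, 2 * (sgnB (s j) * u t j) = 2 * ∑ j, sgnB (s j) * u t j := fun t => by
      rw [Finset.mul_sum]
    have e2 : ∀ t, ∑ j, 2 * (sgnB (flipAll k s j) * u t j) = - (2 * ∑ j, sgnB (s j) * u t j) :=
      fun t => by
        rw [Finset.mul_sum, ← Finset.sum_neg_distrib]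
        refine Finset.sum_congr rfl fun j _ => ?_
        simp only [flipAll, Equiv.coe_fn_mk, sgnB_not]; ring
    have e3 : ∑ j, sgnB (s j) * (u t j - u t' j) =
        ∑ j, sgnB (s j) * u t j - ∑ j, sgnB (s j) * u t' j := by
      rw [← Finset.sum_sub_distrib]
      exact Finset.sum_congr rfl fun j _ => by ring
    have a1 := hΦ s t
    have a2 := hΦ s t'
    have a3 := hΦ (flipAll k s) t
    have a4 := hΦ (flipAll k s) t'
    rw [e1] at a1 a2
    rw [e2] at a3 a4
    rw [e3]
    rcases abs_cases (∑ j, sgnB (s j) * u t j - ∑ j, sgnB (s j) * u t' j) with h | h <;>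
      rw [h.1] <;> linarith
  have h3 : ∫ s, (A t + A t' + 2 * |∑ j, sgnB (s j) * (u t j - u t' j)|) ∂(radM k) ≤
      ∫ s, (Φ s + Φ (flipAll k s)) ∂(radM k) :=
    integral_mono (radM_int _ _) (radM_int _ _) h2
  rw [integral_add (f := fun _ => A t + A t') (radM_int _ _) (radM_int _ _),
    integral_add (f := Φ) (radM_int _ _) (radM_int _ _), radM_comp k (flipAll k) Φ] at h3
  simp only [integral_const, probReal_univ, one_smul] at h3
  have h4 := (abs_le.1 hj).2
  change _ ≤ 2 * ∫ s, Φ s ∂(radM k)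
  linarith

variable {X : Type*} [TopologicalSpace X] [SecondCountableTopology X] [MeasurableSpace X]
  [BorelSpace X]

/-- one step of symmetrization and contraction. -/
theorem aux_onestep {T : Type*} [Nonempty T] (k : ℕ) (P : Measure X) [IsProbabilityMeasure P]
    (F : T → X → ℝ) (u : T → X → Fin k → ℝ) (C : ℝ)
    (hF : ∀ t, Continuous (F t)) (hu : ∀ t j, Continuous (fun x => u t x j))
    (hFC : ∀ t x, |F t x| ≤ C) (huC : ∀ t x j, |u t x j| ≤ C)
    (hL : ∀ x s t, ∃ j, |F s x - F t x| ≤ |u s x j - u t x j|)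
    (A : T → ℝ) (D : ℝ) (hA : ∀ t, |A t| ≤ D) :
    ∫ x, (⨆ t, (A t + ((∫ y, F t y ∂P) - F t x))) ∂P ≤
      ∫ z : X × (Fin k → Bool), (⨆ t, (A t + ∑ j, 2 * (sgnB (z.2 j) * u t z.1 j)))
        ∂(P.prod (radM k)) := by
  have bp : ∀ t x, |A t + 2 * F t x| ≤ D + 2 * C := fun t x => by
    refine (abs_add_le _ _).trans (add_le_add (hA t) ?_)
    rw [abs_mul]; simpa using hFC t x
  have bm : ∀ t x, |A t - 2 * F t x| ≤ D + 2 * C := fun t x => by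
    refine (abs_sub _ _).trans (add_le_add (hA t) ?_)
    rw [abs_mul]; simpa using hFC t x
  have ip := aux_sup_int P (K := fun t x => A t + 2 * F t x) (fun t => by fun_prop) bp
  have im := aux_sup_int P (K := fun t x => A t - 2 * F t x) (fun t => by fun_prop) bm
  have iF : ∀ t, Integrable (F t) P := fun t => aux_integrable P (hF t).measurable C (hFC t)
  have bPF : ∀ t, |∫ y, F t y ∂P| ≤ C := fun t => by
    have := norm_integral_le_of_norm_le_const (μ := P) (f := F t) (C := C)
        (Filter.Eventually.of_forall fun _ => hFC t _)
    simpa using this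
  have b0 : ∀ t x, |A t + ((∫ y, F t y ∂P) - F t x)| ≤ D + (C + C) := fun t x =>
    (abs_add_le _ _).trans (add_le_add (hA t) ((abs_sub _ _).trans (add_le_add (bPF t) (hFC t x))))
  have i0 := aux_sup_int P (K := fun t x => A t + ((∫ y, F t y ∂P) - F t x))
    (fun t => by fun_prop) b0
  have s1 : ∀ x, (⨆ t, (A t + ((∫ y, F t y ∂P) - F t x))) ≤
      (1/2) * (∫ x, (⨆ t, (A t + 2 * F t x)) ∂P) + (1/2) * (⨆ t, (A t - 2 * F t x)) := by
    intro x
    apply ciSup_le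
    intro t
    have h1 : A t + 2 * ∫ y, F t y ∂P ≤ ∫ x, (⨆ t, (A t + 2 * F t x)) ∂P := by
      have : ∫ y, (A t + 2 * F t y) ∂P ≤ ∫ x, (⨆ t, (A t + 2 * F t x)) ∂P :=
        integral_mono ((integrable_const _).add ((iF t).const_mul 2)) ip
          (fun y => le_ciSup (aux_bdd fun t => bp t y) t)
      rw [integral_add (integrable_const _) ((iF t).const_mul 2), integral_const_mul] at this
      simpa using this
    have h2 := le_ciSup (aux_bdd fun t => bm t x) t
    linarith
  have bz : ∀ t (z : X × (Fin k → Bool)), |A t + ∑ j, 2 * (sgnB (z.2 j) * u t z.1 j)| ≤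
      D + k * (2 * C) := by
    intro t z
    refine (abs_add_le _ _).trans (add_le_add (hA t) (aux_sum_abs fun j => ?_))
    rw [abs_mul, abs_mul, abs_sgnB]
    simpa using huC t _ j
  have cs : Continuous sgnB := continuous_of_discreteTopology
  have iz := aux_sup_int (P.prod (radM k))
    (K := fun t (z : X × (Fin k → Bool)) => A t + ∑ j, 2 * (sgnB (z.2 j) * u t z.1 j))
    (fun t => by
      refine continuous_const.add (continuous_finsetSum _ fun j _ => ?_)
      exact continuous_const.mul ((cs.comp ((continuous_apply j).comp continuous_snd)).mul
        ((hu t j).comp continuous_fst))) bz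
  rw [integral_prod _ iz]
  have s2 : ∀ x, (⨆ t, (A t + 2 * F t x)) + (⨆ t, (A t - 2 * F t x)) ≤
      2 * ∫ s, (⨆ t, (A t + ∑ j, 2 * (sgnB (s j) * u t x j))) ∂(radM k) := fun x =>
    aux_contract k A (fun t => F t x) (fun t => u t x) C D hA (fun t j => huC t x j) (hL x)
  have s3 := integral_mono i0 ((integrable_const _).add (im.const_mul (1/2))) s1
  have s4 := integral_mono (ip.add im) (iz.integral_prod_left.const_mul 2) s2
  simp only [Pi.add_apply] at s3 s4
  rw [integral_add (integrable_const _) (im.const_mul (1/2))] at s3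
  simp only [integral_const_mul, integral_const, probReal_univ, one_smul] at s3
  rw [integral_add ip im, integral_const_mul] at s4
  linarith

/-- expected supremum of a one sided empirical process, compared with a Rademacher process. -/
theorem aux_symm {T : Type*} [Nonempty T] (k : ℕ) (P : Measure X) [IsProbabilityMeasure P]
    (F : T → X → ℝ) (u : T → X → Fin k → ℝ) (C : ℝ)
    (hF : ∀ t, Continuous (F t)) (hu : ∀ t j, Continuous (fun x => u t x j))
    (hFC : ∀ t x, |F t x| ≤ C) (huC : ∀ t x j, |u t x j| ≤ C)
    (hL : ∀ x s t, ∃ j, |F s x - F t x| ≤ |u s x j - u t x j|) (n : ℕ) :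
    ∫ x, (⨆ t, (∑ i, ((∫ y, F t y ∂P) - F t (x i)))) ∂(Measure.pi fun _ : Fin n => P) ≤
      ∫ z, (⨆ t, (∑ i, ∑ j, 2 * (sgnB ((z i).2 j) * u t (z i).1 j)))
        ∂(Measure.pi fun _ : Fin n => P.prod (radM k)) := by
  have bPF : ∀ t, |∫ y, F t y ∂P| ≤ C := fun t => by
    have := norm_integral_le_of_norm_le_const (μ := P) (f := F t) (C := C)
        (Filter.Eventually.of_forall fun _ => hFC t _)
    simpa using this
  have cs : Continuous sgnB := continuous_of_discreteTopology
  have hC : 0 ≤ C := by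
    obtain ⟨t⟩ := ‹Nonempty T›
    exact (abs_nonneg _).trans (bPF t)
  have := aux_tensor P (P.prod (radM k)) (fun t x => (∫ y, F t y ∂P) - F t x)
    (fun t (z : X × (Fin k → Bool)) => ∑ j, 2 * (sgnB (z.2 j) * u t z.1 j))
    (fun t => by fun_prop)
    (fun t => by
      refine continuous_finsetSum _ fun j _ => ?_
      exact continuous_const.mul ((cs.comp ((continuous_apply j).comp continuous_snd)).mul
        ((hu t j).comp continuous_fst)))
    ((C + C) + k * (2 * C))
    (fun t x => ((abs_sub _ _).trans (add_le_add (bPF t) (hFC t x))).trans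
      (le_add_of_nonneg_right (by positivity)))
    (fun t z => by
      refine le_trans (aux_sum_abs (C := 2 * C) fun j => ?_) (le_add_of_nonneg_left (by positivity))
      rw [abs_mul, abs_mul, abs_sgnB]
      simpa using huC t _ j)
    (fun A ⟨D, hD⟩ => aux_onestep k P F u C hF hu hFC huC hL A D hD) n (fun _ => 0)
    ⟨0, fun _ => by simp⟩
  simpa using this

/-- maximal inequality. -/
theorem aux_max {Ω I : Type*} [MeasurableSpace Ω] (μ : Measure Ω) [IsProbabilityMeasure μ]
    (S : Finset I) (hS : S.Nonempty) (Z : I → Ω → ℝ) (hZ : ∀ i, Measurable (Z i))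
    (C : ℝ) (hC : ∀ i w, |Z i w| ≤ C) (σ m : ℝ) (hσ : 0 < σ)
    (hm : ∀ i ∈ S, ∫ w, Z i w ∂μ ≤ m)
    (hexp : ∀ i ∈ S, ∀ lam : ℝ,
      ∫ w, Real.exp (lam * (Z i w - ∫ v, Z i v ∂μ)) ∂μ ≤ Real.exp (lam ^ 2 * σ ^ 2 / 2)) :
    ∫ w, S.sup' hS (fun i => Z i w) ∂μ ≤ m + Real.sqrt (2 * Real.log S.card) * σ := by
  have Ym : Measurable (fun w => S.sup' hS (fun i => Z i w)) := by
    have := Finset.measurable_sup' hS (f := Z) (fun i _ => hZ i)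
    convert this using 1
    ext w
    simp [Finset.sup'_apply]
  have YC : ∀ w, |S.sup' hS (fun i => Z i w)| ≤ C := by
    intro w
    rw [abs_le]
    constructor
    · obtain ⟨i, hi⟩ := hS
      exact (abs_le.1 (hC i w)).1.trans (Finset.le_sup' (fun i => Z i w) hi)
    · exact Finset.sup'_le _ _ fun i _ => (abs_le.1 (hC i w)).2
  have Yi := aux_integrable μ Ym C YC
  set Y := fun w => S.sup' hS (fun i => Z i w) with hY
  by_cases h1 : S.card = 1
  · obtain ⟨a, ha⟩ := Finset.card_eq_one.1 h1
    subst ha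
    simpa [hY] using hm a (by simp)
  have hcard : 1 < (S.card : ℝ) := by
    have := hS.card_pos
    exact_mod_cast (by omega : 1 < S.card)
  set L := Real.log S.card with hLd
  have hL : 0 < L := Real.log_pos hcard
  set q := Real.sqrt (2 * L) with hq
  have hqp : 0 < q := Real.sqrt_pos.2 (by linarith)
  have hq2 : q ^ 2 = 2 * L := Real.sq_sqrt (by linarith)
  let lam := q / σ
  have hlam : 0 < lam := div_pos hqp hσ
  have expi : ∀ a : ℝ, ∀ f : Ω → ℝ, Measurable f → (∀ w, |f w| ≤ C) →
      Integrable (fun w => Real.exp (lam * (f w - a))) μ := by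
    intro a f hf hfC
    refine aux_integrable μ (by fun_prop) (Real.exp (|lam| * (C + |a|))) fun z => ?_
    rw [abs_of_pos (Real.exp_pos _)]
    apply Real.exp_le_exp.2
    refine (le_abs_self _).trans ?_
    rw [abs_mul]
    gcongr
    exact (abs_sub _ _).trans (add_le_add (hfC z) le_rfl)
  have jen : Real.exp (∫ w, lam * (Y w - m) ∂μ) ≤ ∫ w, Real.exp (lam * (Y w - m)) ∂μ :=
    convexOn_exp.map_integral_le Real.continuous_exp.continuousOn isClosed_univ
      (Filter.Eventually.of_forall fun _ => Set.mem_univ _)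
      ((Yi.sub (integrable_const m)).const_mul lam) (expi m Y Ym YC)
  have up : ∫ w, Real.exp (lam * (Y w - m)) ∂μ ≤ S.card * Real.exp (lam ^ 2 * σ ^ 2 / 2) := by
    have p : ∀ w, Real.exp (lam * (Y w - m)) ≤
        ∑ i ∈ S, Real.exp (lam * (Z i w - ∫ v, Z i v ∂μ)) := by
      intro w
      obtain ⟨i, hi, hiw⟩ := Finset.exists_mem_eq_sup' hS (fun i => Z i w)
      refine le_trans (Real.exp_le_exp.2 ?_)
        (Finset.single_le_sum (f := fun i => Real.exp (lam * (Z i w - ∫ v, Z i v ∂μ)))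
          (fun i _ => (Real.exp_pos _).le) hi)
      have : Y w = Z i w := hiw
      rw [this]
      have := hm i hi
      gcongr
    refine (integral_mono (expi m Y Ym YC) (integrable_finsetSum _ fun i _ =>
      expi _ (Z i) (hZ i) (hC i)) p).trans ?_
    rw [integral_finsetSum _ fun i _ => expi _ (Z i) (hZ i) (hC i)]
    refine (Finset.sum_le_sum fun i hi => hexp i hi lam).trans ?_
    simp
  have fin := jen.trans up
  rw [show (S.card : ℝ) = Real.exp L from (Real.exp_log (by linarith)).symm, ← Real.exp_add,
    Real.exp_le_exp, integral_const_mul, integral_sub Yi (integrable_const m)] at fin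
  simp only [integral_const, probReal_univ, one_smul] at fin
  have e1 : lam ^ 2 * σ ^ 2 / 2 = L := by
    simp only [lam]; rw [div_pow, hq2]; field_simp
  have e2 : lam * (q * σ) = 2 * L := by
    simp only [lam]; rw [← hq2]; field_simp
  rw [e1] at fin
  have : lam * (∫ w, Y w ∂μ - m) ≤ lam * (q * σ) := by rw [e2]; linarith
  have := le_of_mul_le_mul_left this hlam
  linarith

end Aux2
section Aux3

variable {X : Type*} [TopologicalSpace X] [SecondCountableTopology X] [MeasurableSpace X]
  [BorelSpace X]

/-- supremum of the empirical process. -/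
def empZ {T : Type*} (P : Measure X) (F : T → X → ℝ) (n : ℕ) (ω : Fin n → X) : ℝ :=
  ⨆ t, |(∫ y, F t y ∂P) - (∑ j, F t (ω j)) / n|

theorem aux_PF (P : Measure X) [IsProbabilityMeasure P] {f : X → ℝ} {b : ℝ}
    (h : ∀ x, |f x| ≤ b) : |∫ y, f y ∂P| ≤ b := by
  have := norm_integral_le_of_norm_le_const (μ := P) (f := f) (C := b)
        (Filter.Eventually.of_forall fun _ => h _)
  simpa using this

theorem empZ_term_le {T : Type*} (P : Measure X) [IsProbabilityMeasure P]
    (F : T → X → ℝ) (b : ℝ) (hb : ∀ t x, |F t x| ≤ b) (n : ℕ) (hn : 0 < n) (t : T)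
    (ω : Fin n → X) : |(|(∫ y, F t y ∂P) - (∑ j, F t (ω j)) / n|)| ≤ b + b := by
  rw [abs_abs]
  refine (abs_sub _ _).trans (add_le_add (aux_PF P (hb t)) ?_)
  have hn' : (0:ℝ) < n := by exact_mod_cast hn
  rw [abs_div, abs_of_pos hn', div_le_iff₀ hn']
  have := aux_sum_abs (fun j => hb t (ω j))
  linarith

theorem empZ_meas {T : Type*} (P : Measure X) [IsProbabilityMeasure P]
    (F : T → X → ℝ) (hF : ∀ t, Continuous (F t)) (b : ℝ) (hb : ∀ t x, |F t x| ≤ b) (n : ℕ)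
    (hn : 0 < n) : Measurable (empZ P F n) := by
  unfold empZ
  exact aux_sup_meas (fun t => by fun_prop) (fun t z => empZ_term_le P F b hb n hn t z)

theorem empZ_abs {T : Type*} [Nonempty T] (P : Measure X) [IsProbabilityMeasure P]
    (F : T → X → ℝ) (b : ℝ) (hb : ∀ t x, |F t x| ≤ b) (n : ℕ)
    (hn : 0 < n) (ω : Fin n → X) : |empZ P F n ω| ≤ b + b :=
  aux_sup_abs (fun t => empZ_term_le P F b hb n hn t ω)

theorem empZ_diff {T : Type*} [Nonempty T] (P : Measure X) [IsProbabilityMeasure P]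
    (F : T → X → ℝ) (b : ℝ) (hb : ∀ t x, |F t x| ≤ b) (n : ℕ)
    (hn : 0 < n) (ω : Fin n → X) (i : Fin n) (x : X) :
    |empZ P F n (Function.update ω i x) - empZ P F n ω| ≤ 2 * b / n := by
  have hn' : (0:ℝ) < n := by exact_mod_cast hn
  have key : ∀ t (ω : Fin n → X) (x : X), |(∑ j, F t (Function.update ω i x j)) / n -
      (∑ j, F t (ω j)) / n| ≤ 2 * b / n := by
    intro t ω x
    rw [← sub_div, ← Finset.sum_sub_distrib, abs_div, abs_of_pos hn',
      Finset.sum_eq_single i]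
    · gcongr
      simp only [Function.update_self]
      refine (abs_sub _ _).trans ?_
      linarith [hb t x, hb t (ω i)]
    · intro j _ hj
      simp [Function.update_of_ne hj]
    · simp
  have one : ∀ ω ω' : Fin n → X, (∀ t, |(∑ j, F t (ω j)) / n - (∑ j, F t (ω' j)) / n| ≤ 2 * b / n) →
      empZ P F n ω ≤ empZ P F n ω' + 2 * b / n := by
    intro ω ω' h
    apply ciSup_le
    intro t
    have h1 : |(∫ y, F t y ∂P) - (∑ j, F t (ω' j)) / n| ≤ empZ P F n ω' :=
      le_ciSup (aux_bdd fun t => empZ_term_le P F b hb n hn t ω') t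
    have h2 := abs_sub_abs_le_abs_sub ((∫ y, F t y ∂P) - (∑ j, F t (ω j)) / n)
      ((∫ y, F t y ∂P) - (∑ j, F t (ω' j)) / n)
    have h3 := h t
    rw [abs_sub_comm] at h3
    rw [show ((∫ y, F t y ∂P) - (∑ j, F t (ω j)) / n) -
      ((∫ y, F t y ∂P) - (∑ j, F t (ω' j)) / n) =
      (∑ j, F t (ω' j)) / n - (∑ j, F t (ω j)) / n by ring] at h2
    linarith
  rw [abs_le]
  have a1 := one (Function.update ω i x) ω (fun t => key t ω x)
  have a2 := one ω (Function.update ω i x) (fun t => by rw [abs_sub_comm]; exact key t ω x)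
  constructor <;> linarith

theorem empZ_mgf {T : Type*} [Nonempty T] (P : Measure X) [IsProbabilityMeasure P]
    (F : T → X → ℝ) (hF : ∀ t, Continuous (F t)) (b : ℝ) (hb : ∀ t x, |F t x| ≤ b) (n : ℕ)
    (hn : 0 < n) (lam : ℝ) :
    ∫ w, Real.exp (lam * (empZ P F n w - ∫ v, empZ P F n v ∂(Measure.pi fun _ : Fin n => P)))
      ∂(Measure.pi fun _ : Fin n => P) ≤ Real.exp (lam ^ 2 * (b / Real.sqrt n) ^ 2 / 2) := by
  have hn' : (0:ℝ) < n := by exact_mod_cast hn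
  refine (aux_mcdiarmid P (2 * b / n) lam n (empZ P F n) (empZ_meas P F hF b hb n hn)
    ⟨b + b, empZ_abs P F b hb n hn⟩ (empZ_diff P F b hb n hn)).trans (le_of_eq ?_)
  congr 1
  rw [div_pow, div_pow, Real.sq_sqrt hn'.le]
  field_simp
  ring

theorem empZ_mean {T : Type*} [Nonempty T] (k : ℕ) (P : Measure X) [IsProbabilityMeasure P]
    (F : T → X → ℝ) (u : T → X → Fin k → ℝ) (C : ℝ)
    (hF : ∀ t, Continuous (F t)) (hu : ∀ t j, Continuous (fun x => u t x j))
    (hFC : ∀ t x, |F t x| ≤ C) (huC : ∀ t x j, |u t x j| ≤ C)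
    (hL : ∀ x s t, ∃ j, |F s x - F t x| ≤ |u s x j - u t x j|) (t0 : T) (ht0 : ∀ x, F t0 x = 0)
    (n : ℕ) (hn : 0 < n) (K : ℝ)
    (hK : ∫ z, (⨆ t, (∑ i, ∑ j, 2 * (sgnB ((z i).2 j) * u t (z i).1 j)))
        ∂(Measure.pi fun _ : Fin n => P.prod (radM k)) ≤ K) :
    ∫ ω, empZ P F n ω ∂(Measure.pi fun _ : Fin n => P) ≤ 2 * K / n := by
  have hn' : (0:ℝ) < n := by exact_mod_cast hn
  have h1 := (aux_symm k P F u C hF hu hFC huC hL n).trans hK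
  have h2 := (aux_symm k P (fun t x => - F t x) u C (fun t => (hF t).neg) hu
    (fun t x => by simpa using hFC t x) huC
    (fun x s t => by
      obtain ⟨j, hj⟩ := hL x s t
      refine ⟨j, ?_⟩
      rwa [show -F s x - -F t x = -(F s x - F t x) by ring, abs_neg]) n).trans hK
  have b1 : ∀ t (ω : Fin n → X), |∑ i, ((∫ y, F t y ∂P) - F t (ω i))| ≤ n * (C + C) := fun t ω =>
    aux_sum_abs fun i => (abs_sub _ _).trans (add_le_add (aux_PF P (hFC t)) (hFC t _))
  have b2 : ∀ t (ω : Fin n → X), |∑ i, ((∫ y, - F t y ∂P) - - F t (ω i))| ≤ n * (C + C) :=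
    fun t ω => aux_sum_abs fun i => (abs_sub _ _).trans
      (add_le_add (aux_PF P fun x => by simpa using hFC t x) (by simpa using hFC t _))
  have i1 := aux_sup_int (Measure.pi fun _ : Fin n => P) (fun t => by fun_prop) b1
  have i2 := aux_sup_int (Measure.pi fun _ : Fin n => P) (fun t => by fun_prop) b2
  have i0 := aux_integrable (Measure.pi fun _ : Fin n => P) (empZ_meas P F hF C hFC n hn) _
    (empZ_abs P F C hFC n hn)
  have pt : ∀ ω, empZ P F n ω ≤ (n:ℝ)⁻¹ * ((⨆ t, ∑ i, ((∫ y, F t y ∂P) - F t (ω i))) +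
      (⨆ t, ∑ i, ((∫ y, - F t y ∂P) - - F t (ω i)))) := by
    intro ω
    have g1 := fun t => le_ciSup (aux_bdd fun t => b1 t ω) t
    have g2 := fun t => le_ciSup (aux_bdd fun t => b2 t ω) t
    have z1 := g1 t0
    have z2 := g2 t0
    simp only [ht0, integral_zero, neg_zero, sub_zero, Finset.sum_const_zero] at z1 z2
    apply ciSup_le
    intro t
    have e1 : (∫ y, F t y ∂P) - (∑ j, F t (ω j)) / n =
        (n:ℝ)⁻¹ * ∑ i, ((∫ y, F t y ∂P) - F t (ω i)) := by
      rw [Finset.sum_sub_distrib]; simp; field_simp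
    have e2 : ∑ i, ((∫ y, - F t y ∂P) - - F t (ω i)) =
        - ∑ i, ((∫ y, F t y ∂P) - F t (ω i)) := by
      rw [← Finset.sum_neg_distrib, integral_neg]
      exact Finset.sum_congr rfl fun i _ => by ring
    rw [e1, abs_mul, abs_of_pos (inv_pos.2 hn')]
    gcongr
    have q1 := g1 t
    have q2 := g2 t
    simp only [e2] at q2 z2 ⊢
    rw [abs_le]
    constructor <;> linarith
  have := integral_mono i0 ((i1.add i2).const_mul (n:ℝ)⁻¹) pt
  refine this.trans ?_
  rw [integral_const_mul]
  simp only [Pi.add_apply]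
  rw [integral_add i1 i2, div_eq_inv_mul]
  gcongr
  linarith

end Aux3

section Geo

/-- the metric projection on the ball of radius `M`. -/
def prB (M : ℝ) (x : H) : H := (M / max M ‖x‖) • x

theorem prB_cont (M : ℝ) (hM : 0 < M) : Continuous (prB M : H → H) := by
  unfold prB
  refine Continuous.smul (continuous_const.div (by fun_prop) fun x => ?_) continuous_id
  exact (lt_of_lt_of_le hM (le_max_left _ _)).ne'

theorem prB_norm (M : ℝ) (hM : 0 < M) (x : H) : ‖prB M x‖ ≤ M := by
  have h : 0 < max M ‖x‖ := lt_of_lt_of_le hM (le_max_left _ _)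
  rw [prB, norm_smul, Real.norm_of_nonneg (by positivity), div_mul_eq_mul_div, div_le_iff₀ h]
  gcongr
  exact le_max_right _ _

theorem prB_eq (M : ℝ) (hM : 0 < M) (x : H) (hx : ‖x‖ ≤ M) : prB M x = x := by
  rw [prB, max_eq_left hx, div_self hM.ne', one_smul]

theorem prB_lt (M : ℝ) (hM : 0 < M) (x c : H) (hx : ‖x‖ ≤ M) (hc : M < ‖c‖) :
    ‖x - prB M c‖ ^ 2 < ‖x - c‖ ^ 2 := by
  rw [prB, max_eq_right hc.le]
  set s := M / ‖c‖ with hs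
  have hc0 : 0 < ‖c‖ := hM.trans hc
  have hsc : s * ‖c‖ = M := by rw [hs]; field_simp
  have hs1 : s < 1 := by rw [hs, div_lt_one hc0]; exact hc
  have hs0 : 0 < s := by positivity
  rw [norm_sub_sq_real, norm_sub_sq_real, inner_smul_right, norm_smul, Real.norm_of_nonneg hs0.le]
  have h1 : inner ℝ x c ≤ M * ‖c‖ := (real_inner_le_norm x c).trans (by gcongr)
  have h2 : 0 < (1 - s) * (‖c‖ * (‖c‖ - M)) := by
    have : 0 < ‖c‖ - M := by linarith
    have : 0 < 1 - s := by linarith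
    positivity
  have h3 : (1 - s) * inner ℝ x c ≤ (1 - s) * (M * ‖c‖) :=
    mul_le_mul_of_nonneg_left h1 (by linarith)
  nlinarith [mul_comm s ‖c‖]

theorem qgamma_le (k : ℕ) (c : Fin k → H) (x : H) (j : Fin k) : qgamma k c x ≤ ‖x - c j‖ ^ 2 :=
  ciInf_le (Set.finite_range _).bddBelow j

theorem qgamma_att (k : ℕ) (hk : 2 ≤ k) (c : Fin k → H) (x : H) :
    ∃ j, qgamma k c x = ‖x - c j‖ ^ 2 := by
  have : Nonempty (Fin k) := ⟨⟨0, by omega⟩⟩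
  obtain ⟨j, hj⟩ := exists_eq_ciInf_of_finite (f := fun j => ‖x - c j‖ ^ 2)
  exact ⟨j, hj.symm⟩

theorem qgamma_nonneg (k : ℕ) (c : Fin k → H) (x : H) : 0 ≤ qgamma k c x :=
  Real.iInf_nonneg fun _ => by positivity

theorem qgamma_cont (k : ℕ) (hk : 2 ≤ k) (c : Fin k → H) : Continuous (qgamma k c) := by
  have : Nonempty (Fin k) := ⟨⟨0, by omega⟩⟩
  have : qgamma k c = fun x => Finset.univ.inf' Finset.univ_nonempty (fun j => ‖x - c j‖ ^ 2) := by
    ext x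
    rw [Finset.inf'_univ_eq_ciInf]; rfl
  rw [this]
  exact Continuous.finset_inf'_apply _ fun j _ => by fun_prop

theorem qgamma_range (k : ℕ) (c c' : Fin k → H) (h : Set.range c = Set.range c') :
    qgamma k c = qgamma k c' := by
  ext x
  unfold qgamma
  rw [← sInf_range, ← sInf_range]
  congr 1
  have : ∀ d : Fin k → H, (Set.range fun j => ‖x - d j‖ ^ 2) = (fun y => ‖x - y‖ ^ 2) '' Set.range d :=
    fun d => by rw [← Set.range_comp]; rfl
  rw [this, this, h]

theorem qgamma_lip (k : ℕ) (hk : 2 ≤ k) (c d : Fin k → H) (x : H) :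
    ∃ j, |qgamma k c x - qgamma k d x| ≤ |‖x - c j‖ ^ 2 - ‖x - d j‖ ^ 2| := by
  rcases le_total (qgamma k d x) (qgamma k c x) with h | h
  · obtain ⟨j, hj⟩ := qgamma_att k hk d x
    refine ⟨j, ?_⟩
    rw [abs_of_nonneg (by linarith)]
    exact le_trans (by linarith [qgamma_le k c x j]) (le_abs_self _)
  · obtain ⟨j, hj⟩ := qgamma_att k hk c x
    refine ⟨j, ?_⟩
    rw [abs_of_nonpos (by linarith)]
    exact le_trans (by linarith [qgamma_le k d x j]) (neg_le_abs _)

theorem qgamma_int [BorelSpace H] (k : ℕ) (hk : 2 ≤ k) (P : Measure H)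
    [IsProbabilityMeasure P] (M : ℝ) (hP : ∀ᵐ x ∂P, ‖x‖ ≤ M) (c : Fin k → H) :
    Integrable (qgamma k c) P := by
  refine Integrable.of_bound (qgamma_cont k hk c).measurable.aestronglyMeasurable
    ((M + ‖c ⟨0, by omega⟩‖) ^ 2) ?_
  filter_upwards [hP] with x hx
  rw [Real.norm_of_nonneg (qgamma_nonneg k c x)]
  refine (qgamma_le k c x ⟨0, by omega⟩).trans ?_
  gcongr
  exact (norm_sub_le _ _).trans (by linarith)

theorem qopt_inj [BorelSpace H] [SecondCountableTopology H] (k : ℕ) (hk : 2 ≤ k) (P : Measure H)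
    [IsProbabilityMeasure P] (M : ℝ) (hP : ∀ᵐ x ∂P, ‖x‖ ≤ M) (hsupp : suppGT P k)
    (c : Fin k → H) (hc : c ∈ qopt k P) : Function.Injective c := by
  classical
  intro i j hij
  by_contra hne
  have hpos := hsupp (Finset.univ.image c) (Finset.card_image_le.trans (by simp))
  obtain ⟨y, hyS, hy⟩ := exists_mem_forall_mem_nhdsWithin_pos_measure hpos
  have hyc : ∀ l, y ≠ c l := by
    intro l h
    apply hyS
    simp [h]
  let d := Function.update c i y
  have hle : ∀ x, qgamma k d x ≤ qgamma k c x := by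
    intro x
    obtain ⟨l, hl⟩ := qgamma_att k hk c x
    rw [hl]
    by_cases h : l = i
    · have := qgamma_le k d x j
      rw [h, hij]
      simpa [d, Function.update_of_ne (Ne.symm hne)] using this
    · have := qgamma_le k d x l
      simpa [d, Function.update_of_ne h] using this
  have iE := (integral_eq_iff_of_ae_le (qgamma_int k hk P M hP d) (qgamma_int k hk P M hP c)
    (Filter.Eventually.of_forall hle)).1 (le_antisymm
      (integral_mono (qgamma_int k hk P M hP d) (qgamma_int k hk P M hP c) hle) (hc d))
  have hopen : IsOpen {x | ‖x - y‖ ^ 2 < qgamma k c x} :=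
    isOpen_lt (by fun_prop) (qgamma_cont k hk c)
  have hmem : y ∈ {x | ‖x - y‖ ^ 2 < qgamma k c x} := by
    obtain ⟨l, hl⟩ := qgamma_att k hk c y
    simp only [Set.mem_ofPred_eq, hl, sub_self, norm_zero]
    have : 0 < ‖y - c l‖ := norm_pos_iff.2 (sub_ne_zero.2 (hyc l))
    nlinarith
  have h1 := hy _ (mem_nhdsWithin_of_mem_nhds (hopen.mem_nhds hmem))
  have h2 : P {x | ‖x - y‖ ^ 2 < qgamma k c x} = 0 := by
    refine measure_mono_null ?_ iE
    intro x hx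
    have h3 := qgamma_le k d x i
    simp only [d, Function.update_self] at h3
    exact (lt_of_le_of_lt h3 hx).ne
  rw [h2] at h1
  exact lt_irrefl _ h1

theorem qopt_ball [BorelSpace H] [SecondCountableTopology H] (k : ℕ) (hk : 2 ≤ k) (P : Measure H)
    [IsProbabilityMeasure P] (M : ℝ) (hM : 0 < M) (hP : ∀ᵐ x ∂P, ‖x‖ ≤ M) (hsupp : suppGT P k)
    (c : Fin k → H) (hc : c ∈ qopt k P) (i : Fin k) : ‖c i‖ ≤ M := by
  classical
  by_contra hi
  push Not at hi
  let d := Function.update c i (prB M (c i))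
  have hle : ∀ᵐ x ∂P, qgamma k d x ≤ qgamma k c x := by
    filter_upwards [hP] with x hx
    obtain ⟨l, hl⟩ := qgamma_att k hk c x
    rw [hl]
    by_cases h : l = i
    · have := qgamma_le k d x i
      simp only [d, Function.update_self] at this
      rw [h]
      exact this.trans (prB_lt M hM x _ hx hi).le
    · have := qgamma_le k d x l
      simpa [d, Function.update_of_ne h] using this
  have iE := (integral_eq_iff_of_ae_le (qgamma_int k hk P M hP d) (qgamma_int k hk P M hP c)
    hle).1 (le_antisymm
      (integral_mono_ae (qgamma_int k hk P M hP d) (qgamma_int k hk P M hP c) hle) (hc d))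
  obtain ⟨j, hj⟩ : ∃ j : Fin k, j ≠ i := by
    have : Nontrivial (Fin k) := Fin.nontrivial_iff_two_le.2 hk
    exact exists_ne i
  let e := Function.update c i (c j)
  have hle2 : ∀ᵐ x ∂P, qgamma k e x ≤ qgamma k c x := by
    filter_upwards [hP, iE] with x hx hx2
    obtain ⟨l, hl⟩ := qgamma_att k hk c x
    by_cases h : l = i
    · exfalso
      have := qgamma_le k d x i
      simp only [d, Function.update_self] at this
      have h3 := prB_lt M hM x _ hx hi
      rw [h] at hl
      change qgamma k d x = _ at hx2
      simp only [d] at hx2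
      linarith
    · have := qgamma_le k e x l
      rw [hl]
      simpa [e, Function.update_of_ne h] using this
  have he : e ∈ qopt k P := fun c' =>
    (integral_mono_ae (qgamma_int k hk P M hP e) (qgamma_int k hk P M hP c) hle2).trans (hc c')
  have := qopt_inj k hk P M hP hsupp e he (a₁ := i) (a₂ := j)
    (by simp [e, Function.update_of_ne hj])
  exact hj this.symm

end Geo
section Final

theorem sgnB_cont : Continuous sgnB := continuous_of_discreteTopology

theorem sgnB_meas : Measurable sgnB := measurable_of_finite _

theorem aux_sgn_moment {X E : Type*} [MeasurableSpace X]
    [NormedAddCommGroup E] [InnerProductSpace ℝ E] [MeasurableSpace E] [BorelSpace E]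
    [SecondCountableTopology E] (k : ℕ) (j : Fin k)
    (P : Measure X) [IsProbabilityMeasure P] (φ : X → E) (hφ : Measurable φ) (b : ℝ)
    (hb : ∀ y, ‖φ y‖ ≤ b) (n : ℕ) :
    ∫ z, ‖∑ i, sgnB ((z i).2 j) • φ (z i).1‖ ^ 2 ∂(Measure.pi fun _ : Fin n => P.prod (radM k)) ≤
      n * b ^ 2 := by
  have hm : Measurable (fun y : X × (Fin k → Bool) => sgnB (y.2 j) • φ y.1) :=
    (sgnB_meas.comp ((measurable_pi_apply j).comp measurable_snd)).smul (hφ.comp measurable_fst)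
  have hbd : ∀ y : X × (Fin k → Bool), ‖sgnB (y.2 j) • φ y.1‖ ≤ b := by
    intro y
    rw [norm_smul, Real.norm_eq_abs, abs_sgnB, one_mul]
    exact hb _
  have := aux_second_moment (P.prod (radM k))
    (fun y : X × (Fin k → Bool) => sgnB (y.2 j) • φ y.1) hm b hbd ?_ n 0
  · simpa using this
  intro v
  have hi : Integrable (fun y : X × (Fin k → Bool) => ‖v + sgnB (y.2 j) • φ y.1‖ ^ 2)
      (P.prod (radM k)) := by
    refine aux_integrable _ (by fun_prop) ((‖v‖ + b) ^ 2) fun y => ?_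
    rw [abs_of_nonneg (by positivity)]
    gcongr
    exact (norm_add_le _ _).trans (add_le_add le_rfl (hbd y))
  rw [integral_prod _ hi]
  have hx : ∀ x, ∫ s, ‖v + sgnB (s j) • φ x‖ ^ 2 ∂(radM k) ≤ ‖v‖ ^ 2 + b ^ 2 := by
    intro x
    have h1 := radM_comp k (flipAll k) (fun s => ‖v + sgnB (s j) • φ x‖ ^ 2)
    have h2 : ∀ s : Fin k → Bool, ‖v + sgnB (s j) • φ x‖ ^ 2 +
        ‖v + sgnB (flipAll k s j) • φ x‖ ^ 2 ≤ 2 * (‖v‖ ^ 2 + b ^ 2) := by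
      intro s
      have e : sgnB (flipAll k s j) = - sgnB (s j) := by simp [flipAll, sgnB_not]
      rw [e, neg_smul, ← sub_eq_add_neg, norm_add_sq_real, norm_sub_sq_real]
      have := hbd (x, s)
      have h3 : ‖sgnB (s j) • φ x‖ ^ 2 ≤ b ^ 2 := by
        gcongr
      linarith
    have h3 := integral_mono (radM_int k _) (radM_int k _) h2
    rw [integral_add (radM_int _ _) (radM_int _ _), h1] at h3
    simp only [integral_const, probReal_univ, one_smul] at h3
    linarith
  have := integral_mono hi.integral_prod_left (integrable_const _) hx
  simpa using this

/-- the codebooks close to `cs`. -/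
abbrev Gset (k : ℕ) (M δ : ℝ) (cs : Fin k → H) : Type _ :=
  {c : Fin k → H // (∀ i, ‖c i‖ ≤ M) ∧ 16 * M ^ 2 * ∑ i, ‖c i - cs i‖ ^ 2 ≤ δ}

/-- the localized functions. -/
def Ff (k : ℕ) (M δ : ℝ) (cs : Fin k → H) (c : Gset k M δ cs) (x : H) : ℝ :=
  qgamma k c.1 (prB M x) - qgamma k cs (prB M x)

/-- the linearized functions. -/
def uf (k : ℕ) (M δ : ℝ) (cs : Fin k → H) (c : Gset k M δ cs) (x : H) (j : Fin k) : ℝ :=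
  ‖prB M x - c.1 j‖ ^ 2 - ‖prB M x - cs j‖ ^ 2

theorem uf_abs (k : ℕ) (M δ : ℝ) (hM : 0 < M) (hδ : 0 < δ) (cs : Fin k → H)
    (hcs : ∀ i, ‖cs i‖ ≤ M) (c : Gset k M δ cs) (x : H) (j : Fin k) :
    |uf k M δ cs c x j| ≤ Real.sqrt δ := by
  have hx := prB_norm M hM x
  have h1 : |uf k M δ cs c x j| ≤ 4 * M * ‖c.1 j - cs j‖ := by
    unfold uf
    rw [sq_sub_sq, abs_mul, abs_of_nonneg (by positivity)]
    have a1 : ‖prB M x - c.1 j‖ ≤ M + M := (norm_sub_le _ _).trans (add_le_add hx (c.2.1 j))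
    have a2 : ‖prB M x - cs j‖ ≤ M + M := (norm_sub_le _ _).trans (add_le_add hx (hcs j))
    have a3 : |‖prB M x - c.1 j‖ - ‖prB M x - cs j‖| ≤ ‖c.1 j - cs j‖ := by
      refine (abs_norm_sub_norm_le _ _).trans (le_of_eq ?_)
      rw [sub_sub_sub_cancel_left, norm_sub_rev]
    have : ‖prB M x - c.1 j‖ + ‖prB M x - cs j‖ ≤ 4 * M := by linarith
    gcongr
  refine h1.trans (Real.le_sqrt_of_sq_le ?_)
  have h2 : ‖c.1 j - cs j‖ ^ 2 ≤ ∑ i, ‖c.1 i - cs i‖ ^ 2 :=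
    Finset.single_le_sum (f := fun i => ‖c.1 i - cs i‖ ^ 2) (fun i _ => by positivity)
      (Finset.mem_univ j)
  have h3 := mul_le_mul_of_nonneg_left h2 (by positivity : 0 ≤ 16 * M ^ 2)
  have := c.2.2
  nlinarith

theorem Ff_lip (k : ℕ) (hk : 2 ≤ k) (M δ : ℝ) (cs : Fin k → H) (x : H) (s t : Gset k M δ cs) :
    ∃ j, |Ff k M δ cs s x - Ff k M δ cs t x| ≤ |uf k M δ cs s x j - uf k M δ cs t x j| := by
  obtain ⟨j, hj⟩ := qgamma_lip k hk s.1 t.1 (prB M x)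
  refine ⟨j, ?_⟩
  unfold Ff uf
  simpa using hj

theorem Ff_abs (k : ℕ) (hk : 2 ≤ k) (M δ : ℝ) (hM : 0 < M) (hδ : 0 < δ) (cs : Fin k → H)
    (hcs : ∀ i, ‖cs i‖ ≤ M) (c : Gset k M δ cs) (x : H) :
    |Ff k M δ cs c x| ≤ Real.sqrt δ := by
  obtain ⟨j, hj⟩ := qgamma_lip k hk c.1 cs (prB M x)
  exact hj.trans (uf_abs k M δ hM hδ cs hcs c x j)

theorem Ff_cont (k : ℕ) (hk : 2 ≤ k) (M δ : ℝ) (hM : 0 < M) (cs : Fin k → H)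
    (c : Gset k M δ cs) : Continuous (Ff k M δ cs c) :=
  ((qgamma_cont k hk c.1).comp (prB_cont M hM)).sub ((qgamma_cont k hk cs).comp (prB_cont M hM))

theorem uf_cont (k : ℕ) (M δ : ℝ) (hM : 0 < M) (cs : Fin k → H)
    (c : Gset k M δ cs) (j : Fin k) : Continuous (fun x => uf k M δ cs c x j) := by
  unfold uf
  have := prB_cont (H := H) M hM
  fun_prop

theorem uf_rad [BorelSpace H] [SecondCountableTopology H] (k : ℕ) (hk : 2 ≤ k) (P : Measure H)
    [IsProbabilityMeasure P] (M δ : ℝ) (hM : 0 < M) (hδ : 0 < δ) (cs : Fin k → H)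
    (hcs : ∀ i, ‖cs i‖ ≤ M) (n : ℕ) (hn : 0 < n) [Nonempty (Gset k M δ cs)] :
    ∫ z, (⨆ t, (∑ i, ∑ j, 2 * (sgnB ((z i).2 j) * uf k M δ cs t (z i).1 j)))
        ∂(Measure.pi fun _ : Fin n => P.prod (radM k)) ≤
      2 * Real.sqrt δ * Real.sqrt (k * n) := by
  set ν := Measure.pi fun _ : Fin n => P.prod (radM k) with hν
  set r := Real.sqrt (k * n) with hr
  set q := Real.sqrt δ with hq
  have hn' : (0:ℝ) < n := by exact_mod_cast hn
  have hk' : (0:ℝ) < k := by exact_mod_cast (by omega : 0 < k)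
  have hr0 : 0 < r := Real.sqrt_pos.2 (by positivity)
  have hr2 : r ^ 2 = k * n := Real.sq_sqrt (by positivity)
  have hq0 : 0 < q := Real.sqrt_pos.2 hδ
  have hq2 : q ^ 2 = δ := Real.sq_sqrt hδ.le
  let α : ℝ := 8 * M ^ 2 * r / q
  have hα : 0 < α := by positivity
  let S : Fin k → (Fin n → H × (Fin k → Bool)) → H := fun j z =>
    ∑ i, sgnB ((z i).2 j) • prB M (z i).1
  let s : Fin k → (Fin n → H × (Fin k → Bool)) → ℝ := fun j z => ∑ i, sgnB ((z i).2 j) • (1:ℝ)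
  have hSm : ∀ j, Measurable (S j) := by
    intro j
    refine Finset.measurable_sum _ fun i _ => ?_
    exact (sgnB_meas.comp ((measurable_pi_apply j).comp (measurable_snd.comp
      (measurable_pi_apply i)))).smul ((prB_cont M hM).measurable.comp
        (measurable_fst.comp (measurable_pi_apply i)))
  have hsm : ∀ j, Measurable (s j) := by
    intro j
    refine Finset.measurable_sum _ fun i _ => ?_
    exact (sgnB_meas.comp ((measurable_pi_apply j).comp (measurable_snd.comp
      (measurable_pi_apply i)))).smul measurable_const
  have hSb : ∀ j z, ‖S j z‖ ≤ n * M := by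
    intro j z
    refine (norm_sum_le _ _).trans ((Finset.sum_le_sum (g := fun _ => M) fun i _ => ?_).trans (by simp))
    rw [norm_smul, Real.norm_eq_abs, abs_sgnB, one_mul]
    exact prB_norm M hM _
  have hsb : ∀ j z, ‖s j z‖ ≤ n * 1 := by
    intro j z
    refine (norm_sum_le _ _).trans ((Finset.sum_le_sum (g := fun _ => 1) fun i _ => ?_).trans (by simp))
    rw [norm_smul, Real.norm_eq_abs, abs_sgnB, one_mul]
    simp
  have hS2 : ∀ j, ∫ z, ‖S j z‖ ^ 2 ∂ν ≤ n * M ^ 2 := fun j =>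
    aux_sgn_moment k j P (prB M) (prB_cont M hM).measurable M (prB_norm M hM) n
  have hs2 : ∀ j, ∫ z, ‖s j z‖ ^ 2 ∂ν ≤ n * 1 ^ 2 := fun j =>
    aux_sgn_moment k j P (fun _ => (1:ℝ)) measurable_const 1 (by simp) n
  have iS : ∀ j, Integrable (fun z => ‖S j z‖ ^ 2) ν := fun j =>
    aux_integrable _ ((hSm j).norm.pow_const 2) ((n * M) ^ 2) fun z => by
      rw [abs_of_nonneg (by positivity)]
      gcongr
      exact hSb j z
  have is : ∀ j, Integrable (fun z => ‖s j z‖ ^ 2) ν := fun j =>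
    aux_integrable _ ((hsm j).norm.pow_const 2) ((n * 1) ^ 2) fun z => by
      rw [abs_of_nonneg (by positivity)]
      gcongr
      exact hsb j z
  let W : (Fin n → H × (Fin k → Bool)) → ℝ := fun z => ∑ j, (‖S j z‖ ^ 2 + M ^ 2 * ‖s j z‖ ^ 2)
  have iW : Integrable W ν := integrable_finsetSum _ fun j _ => (iS j).add ((is j).const_mul _)
  have EW : ∫ z, W z ∂ν ≤ 2 * M ^ 2 * r ^ 2 := by
    simp only [W]
    rw [integral_finsetSum (f := fun j z => ‖S j z‖ ^ 2 + M ^ 2 * ‖s j z‖ ^ 2) _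
      fun j _ => (iS j).add ((is j).const_mul _)]
    have : ∀ j ∈ (Finset.univ : Finset (Fin k)),
        ∫ z, (‖S j z‖ ^ 2 + M ^ 2 * ‖s j z‖ ^ 2) ∂ν ≤ 2 * M ^ 2 * n := by
      intro j _
      rw [integral_add (iS j) ((is j).const_mul _), integral_const_mul]
      have := mul_le_mul_of_nonneg_left (hs2 j) (sq_nonneg M)
      linarith [hS2 j]
    refine (Finset.sum_le_sum this).trans (le_of_eq ?_)
    rw [hr2]
    simp
    ring
  have pt : ∀ z t, ∑ i, ∑ j, 2 * (sgnB ((z i).2 j) * uf k M δ cs t (z i).1 j) ≤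
      α * δ / (8 * M ^ 2) + 4 / α * W z := by
    intro z t
    rw [Finset.sum_comm]
    have hj : ∀ j ∈ (Finset.univ : Finset (Fin k)),
        ∑ i, 2 * (sgnB ((z i).2 j) * uf k M δ cs t (z i).1 j) ≤
          2 * α * ‖t.1 j - cs j‖ ^ 2 + 4 / α * (‖S j z‖ ^ 2 + M ^ 2 * ‖s j z‖ ^ 2) := by
      intro j _
      set h := t.1 j - cs j with hh
      have e : ∑ i, 2 * (sgnB ((z i).2 j) * uf k M δ cs t (z i).1 j) =
          -4 * inner ℝ (S j z) h + 2 * ((‖t.1 j‖ ^ 2 - ‖cs j‖ ^ 2) * s j z) := by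
        simp only [S, s]
        rw [sum_inner, Finset.mul_sum, Finset.mul_sum, Finset.mul_sum, ← Finset.sum_add_distrib]
        refine Finset.sum_congr rfl fun i _ => ?_
        unfold uf
        rw [norm_sub_sq_real, norm_sub_sq_real, real_inner_smul_left, hh, inner_sub_right, smul_eq_mul]
        ring
      rw [e]
      have c1 : -inner ℝ (S j z) h ≤ ‖S j z‖ * ‖h‖ :=
        (neg_le_abs _).trans (abs_real_inner_le_norm _ _)
      have c2 : |‖t.1 j‖ ^ 2 - ‖cs j‖ ^ 2| ≤ 2 * M * ‖h‖ := by
        rw [sq_sub_sq, abs_mul, abs_of_nonneg (by positivity)]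
        have := abs_norm_sub_norm_le (t.1 j) (cs j)
        have := t.2.1 j
        have := hcs j
        have : ‖t.1 j‖ + ‖cs j‖ ≤ 2 * M := by linarith
        gcongr
      have c3 : (‖t.1 j‖ ^ 2 - ‖cs j‖ ^ 2) * s j z ≤ 2 * M * ‖h‖ * ‖s j z‖ := by
        refine (le_abs_self _).trans ?_
        rw [abs_mul, Real.norm_eq_abs]
        gcongr
      set a := ‖h‖
      set p := ‖S j z‖
      set v := ‖s j z‖
      have c4 : 4 * (p * a) + 4 * (M * a * v) ≤ 2 * α * a ^ 2 + 4 / α * (p ^ 2 + M ^ 2 * v ^ 2) := by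
        have d1 : 0 ≤ (α * a - (p + M * v)) ^ 2 := sq_nonneg _
        have d2 : 0 ≤ (p - M * v) ^ 2 := sq_nonneg _
        have d3 : α * (4 * (p * a) + 4 * (M * a * v)) ≤
            α * (2 * α * a ^ 2 + 4 / α * (p ^ 2 + M ^ 2 * v ^ 2)) := by
          have : α * (2 * α * a ^ 2 + 4 / α * (p ^ 2 + M ^ 2 * v ^ 2)) =
            2 * α ^ 2 * a ^ 2 + 4 * (p ^ 2 + M ^ 2 * v ^ 2) := by field_simp
          rw [this]
          nlinarith
        exact le_of_mul_le_mul_left d3 hα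
      linarith
    refine (Finset.sum_le_sum hj).trans ?_
    rw [Finset.sum_add_distrib, ← Finset.mul_sum, ← Finset.mul_sum]
    have := t.2.2
    have h5 : ∑ i, ‖t.1 i - cs i‖ ^ 2 ≤ δ / (16 * M ^ 2) := by
      rw [le_div_iff₀ (by positivity)]; linarith
    have h6 := mul_le_mul_of_nonneg_left h5 (by positivity : 0 ≤ 2 * α)
    have h7 : 2 * α * (δ / (16 * M ^ 2)) = α * δ / (8 * M ^ 2) := by field_simp; norm_num
    rw [h7] at h6
    exact add_le_add h6 le_rfl
  have bz : ∀ t (z : Fin n → H × (Fin k → Bool)),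
      |∑ i, ∑ j, 2 * (sgnB ((z i).2 j) * uf k M δ cs t (z i).1 j)| ≤ n * (k * (2 * q)) := by
    intro t z
    refine aux_sum_abs fun i => aux_sum_abs fun j => ?_
    rw [abs_mul, abs_mul, abs_sgnB]
    simpa using uf_abs k M δ hM hδ cs hcs t _ j
  have ci : ∀ t, Continuous (fun z : Fin n → H × (Fin k → Bool) =>
      ∑ i, ∑ j, 2 * (sgnB ((z i).2 j) * uf k M δ cs t (z i).1 j)) := by
    intro t
    refine continuous_finsetSum _ fun i _ => continuous_finsetSum _ fun j _ => ?_
    exact continuous_const.mul ((sgnB_cont.comp ((continuous_apply j).comp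
      (continuous_snd.comp (continuous_apply i)))).mul
        ((uf_cont k M δ hM cs t j).comp (continuous_fst.comp (continuous_apply i))))
  have i0 := aux_sup_int ν ci bz
  have fin := integral_mono i0 ((integrable_const (α * δ / (8 * M ^ 2))).add
    (iW.const_mul (4 / α))) (fun z => ciSup_le (pt z))
  refine fin.trans ?_
  simp only [Pi.add_apply]
  rw [integral_add (integrable_const _) (iW.const_mul (4 / α)), integral_const_mul]
  simp only [integral_const, probReal_univ, one_smul]
  have g1 : 4 / α * ∫ z, W z ∂ν ≤ 4 / α * (2 * M ^ 2 * r ^ 2) :=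
    mul_le_mul_of_nonneg_left EW (by positivity)
  have g2 : α * δ / (8 * M ^ 2) = q * r := by
    simp only [α]; rw [← hq2]; field_simp
  have g3 : 4 / α * (2 * M ^ 2 * r ^ 2) = q * r := by
    simp only [α]; field_simp; norm_num
  linarith

theorem Gset_mem (k : ℕ) (M δ : ℝ) (hδ : 0 < δ) (cs : Fin k → H)
    (hcs : ∀ i, ‖cs i‖ ≤ M) :
    (∀ i, ‖cs i‖ ≤ M) ∧ 16 * M ^ 2 * ∑ i, ‖cs i - cs i‖ ^ 2 ≤ δ := by
  refine ⟨hcs, ?_⟩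
  simpa using hδ.le

theorem Ff_mean [BorelSpace H] [SecondCountableTopology H] (k : ℕ) (hk : 2 ≤ k) (P : Measure H)
    [IsProbabilityMeasure P] (M δ : ℝ) (hM : 0 < M) (hδ : 0 < δ) (cs : Fin k → H)
    (hcs : ∀ i, ‖cs i‖ ≤ M) (n : ℕ) (hn : 0 < n) :
    ∫ ω, empZ P (Ff k M δ cs) n ω ∂(Measure.pi fun _ : Fin n => P) ≤
      4 * Real.sqrt (Real.pi * k) * (Real.sqrt δ / Real.sqrt n) := by
  let t0 : Gset k M δ cs := ⟨cs, Gset_mem k M δ hδ cs hcs⟩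
  have : Nonempty (Gset k M δ cs) := ⟨t0⟩
  have hn' : (0:ℝ) < n := by exact_mod_cast hn
  refine (empZ_mean k P (Ff k M δ cs) (uf k M δ cs) (Real.sqrt δ) (Ff_cont k hk M δ hM cs)
    (uf_cont k M δ hM cs) (Ff_abs k hk M δ hM hδ cs hcs) (uf_abs k M δ hM hδ cs hcs)
    (Ff_lip k hk M δ cs) t0 (fun x => sub_self _) n hn _
    (uf_rad k hk P M δ hM hδ cs hcs n hn)).trans ?_
  have h1 : Real.sqrt (k * n) = Real.sqrt k * Real.sqrt n := Real.sqrt_mul (by positivity) _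
  have h2 : Real.sqrt k ≤ Real.sqrt (Real.pi * k) := by
    apply Real.sqrt_le_sqrt
    have : (0:ℝ) ≤ k := by positivity
    nlinarith [Real.pi_gt_three]
  have h3 : (n:ℝ) = Real.sqrt n * Real.sqrt n := (Real.mul_self_sqrt hn'.le).symm
  have h4 : 0 < Real.sqrt n := Real.sqrt_pos.2 hn'
  calc 2 * (2 * Real.sqrt δ * Real.sqrt (k * n)) / n
      = 4 * Real.sqrt k * (Real.sqrt δ / Real.sqrt n) := by
        rw [h1]
        nth_rewrite 2 [h3]
        field_simp
        norm_num
    _ ≤ _ := by gcongr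

end Final

/-- Proposition 4.6: Gaussian-complexity bound on the localized complexity of the
class `{γ(c,·) − γ(c*(c),·) : c ∈ B(0,M)^k}`. -/
theorem stmt14 [BorelSpace H] [SecondCountableTopology H] [CompleteSpace H]
    (k : ℕ) (hk : 2 ≤ k) (P : Measure H) [IsProbabilityMeasure P]
    (M : ℝ) (hM : 0 < M) (hsupp : suppGT P k) (hne : (qopt k P).Nonempty)
    (r0 : ℝ) (hmargin : margin k P M r0)
    -- `sel c` is a nearest optimal codebook to `c`
    (sel : (Fin k → H) → Fin k → H)
    (hsel : ∀ c : Fin k → H, sel c ∈ qopt k P ∧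
      ∀ cs ∈ qopt k P, ∑ i, ‖c i - sel c i‖ ^ 2 ≤ ∑ i, ‖c i - cs i‖ ^ 2)
    -- `Mbar` : the optimal codebooks up to relabeling
    (Mbar : Finset (Fin k → H)) (hMbar : ↑Mbar ⊆ qopt k P)
    (hMbar' : ∀ c ∈ qopt k P, ∃ c' ∈ Mbar, Set.range c = Set.range c')
    (hMbar'' : ∀ c ∈ Mbar, ∀ c' ∈ Mbar, Set.range c = Set.range c' → c = c')
    (n : ℕ) (hn : 0 < n) (δ : ℝ) (hδ : 0 < δ) :
    (∫ ω : Fin n → H,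
        (⨆ c : {c : Fin k → H //
            (∀ i, ‖c i‖ ≤ M) ∧ 16 * M ^ 2 * ∑ i, ‖c i - sel c i‖ ^ 2 ≤ δ},
          |(∫ x, (qgamma k c.1 x - qgamma k (sel c.1) x) ∂P) -
            (∑ j, (qgamma k c.1 (ω j) - qgamma k (sel c.1) (ω j))) / n|)
      ∂(Measure.pi fun _ : Fin n => P)) ≤
      (4 * Real.sqrt (Real.pi * k) + Real.sqrt (2 * Real.log Mbar.card)) *
        Real.sqrt δ / Real.sqrt n := by
  classical
  have hP : ∀ᵐ x ∂P, ‖x‖ ≤ M := by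
    have h := hmargin.2.1
    unfold mbounded at h
    have h2 : ∀ᵐ x ∂P, x ∈ closedBall (0 : H) M := h
    filter_upwards [h2] with x hx
    simpa using hx
  have hball : ∀ c ∈ qopt k P, ∀ i, ‖c i‖ ≤ M := fun c hc i =>
    qopt_ball k hk P M hM hP hsupp c hc i
  have hinj : ∀ c ∈ qopt k P, Function.Injective c := fun c hc =>
    qopt_inj k hk P M hP hsupp c hc
  have hn' : (0:ℝ) < n := by exact_mod_cast hn
  have hS : Mbar.Nonempty := by
    obtain ⟨c, hc⟩ := hne
    obtain ⟨c', hc', _⟩ := hMbar' c hc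
    exact ⟨c', hc'⟩
  have hSa : Mbar.attach.Nonempty := by simpa using hS
  have hcs : ∀ cs : {x // x ∈ Mbar}, ∀ i, ‖cs.1 i‖ ≤ M := fun cs => hball _ (hMbar cs.2)
  have hNe : ∀ cs : {x // x ∈ Mbar}, Nonempty (Gset k M δ cs.1) := fun cs =>
    ⟨⟨cs.1, Gset_mem k M δ hδ cs.1 (hcs cs)⟩⟩
  let Z : {x // x ∈ Mbar} → (Fin n → H) → ℝ := fun cs => empZ P (Ff k M δ cs.1) n
  have Zm : ∀ cs, Measurable (Z cs) := fun cs =>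
    empZ_meas P _ (Ff_cont k hk M δ hM cs.1) _ (Ff_abs k hk M δ hM hδ cs.1 (hcs cs)) n hn
  have ZC : ∀ cs w, |Z cs w| ≤ Real.sqrt δ + Real.sqrt δ := fun cs w =>
    have := hNe cs
    empZ_abs P _ _ (Ff_abs k hk M δ hM hδ cs.1 (hcs cs)) n hn w
  have hσ : 0 < Real.sqrt δ / Real.sqrt n :=
    div_pos (Real.sqrt_pos.2 hδ) (Real.sqrt_pos.2 hn')
  have hmax := aux_max (Measure.pi fun _ : Fin n => P) Mbar.attach hSa Z Zm
    (Real.sqrt δ + Real.sqrt δ) ZC (Real.sqrt δ / Real.sqrt n)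
    (4 * Real.sqrt (Real.pi * k) * (Real.sqrt δ / Real.sqrt n)) hσ
    (fun cs _ => Ff_mean k hk P M δ hM hδ cs.1 (hcs cs) n hn)
    (fun cs _ lam =>
      have := hNe cs
      empZ_mgf P _ (Ff_cont k hk M δ hM cs.1) _ (Ff_abs k hk M δ hM hδ cs.1 (hcs cs)) n hn lam)
  rw [Finset.card_attach] at hmax
  have hrhs : (4 * Real.sqrt (Real.pi * k) + Real.sqrt (2 * Real.log Mbar.card)) *
        Real.sqrt δ / Real.sqrt n = 4 * Real.sqrt (Real.pi * k) * (Real.sqrt δ / Real.sqrt n) +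
        Real.sqrt (2 * Real.log Mbar.card) * (Real.sqrt δ / Real.sqrt n) := by ring
  rw [hrhs]
  refine le_trans ?_ hmax
  have hZ0 : ∀ cs w, 0 ≤ Z cs w := fun cs w => Real.iSup_nonneg fun _ => abs_nonneg _
  have hY0 : ∀ w, 0 ≤ Mbar.attach.sup' hSa (fun i => Z i w) := by
    intro w
    obtain ⟨i, hi⟩ := id hSa
    exact (hZ0 i w).trans (Finset.le_sup' (fun i => Z i w) hi)
  refine integral_mono_of_nonneg
    (Filter.Eventually.of_forall fun w => Real.iSup_nonneg fun _ => abs_nonneg _) ?_ ?_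
  · refine aux_integrable _ ?_ (Real.sqrt δ + Real.sqrt δ) fun w => ?_
    · have := Finset.measurable_sup' hSa (f := Z) (fun i _ => Zm i)
      convert this using 1
      ext w
      simp [Finset.sup'_apply]
    · rw [abs_of_nonneg (hY0 w)]
      exact Finset.sup'_le _ _ fun i _ => (abs_le.1 (ZC i w)).2
  · have hω : ∀ᵐ w ∂(Measure.pi fun _ : Fin n => P), ∀ j, ‖w j‖ ≤ M := by
      rw [ae_all_iff]
      intro j
      exact (measurePreserving_eval (fun _ : Fin n => P) j).quasiMeasurePreserving.ae hP
    filter_upwards [hω] with w hw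
    refine Real.iSup_le (fun c => ?_) (hY0 w)
    obtain ⟨c, hcM, hcδ⟩ := c
    obtain ⟨hso, -⟩ := hsel c
    obtain ⟨c', hc', hr⟩ := hMbar' (sel c) hso
    have hex : ∀ i, ∃ l, sel c l = c' i := fun i => by
      have : c' i ∈ Set.range (sel c) := by rw [hr]; exact ⟨i, rfl⟩
      exact this
    choose τ hτ using hex
    have τinj : Function.Injective τ := by
      intro a b hab
      apply hinj c' (hMbar hc')
      rw [← hτ a, ← hτ b, hab]
    have τbij : Function.Bijective τ := Finite.injective_iff_bijective.1 τinj
    have hd : (∀ i, ‖(c ∘ τ) i‖ ≤ M) ∧ 16 * M ^ 2 * ∑ i, ‖(c ∘ τ) i - c' i‖ ^ 2 ≤ δ := by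
      refine ⟨fun i => hcM _, ?_⟩
      have : ∑ i, ‖(c ∘ τ) i - c' i‖ ^ 2 = ∑ i, ‖c i - sel c i‖ ^ 2 := by
        rw [← Function.Bijective.sum_comp τbij (fun i => ‖c i - sel c i‖ ^ 2)]
        simp [hτ]
      rw [this]
      exact hcδ
    have q1 : qgamma k c = qgamma k (c ∘ τ) :=
      qgamma_range k _ _ (τbij.2.range_comp c).symm
    have q2 : qgamma k (sel c) = qgamma k c' := qgamma_range k _ _ hr
    simp only [q1, q2]
    let d : Gset k M δ c' := ⟨c ∘ τ, hd⟩
    have f1 : ∀ x : H, ‖x‖ ≤ M → qgamma k (c ∘ τ) x - qgamma k c' x = Ff k M δ c' d x := by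
      intro x hx
      simp only [Ff, prB_eq M hM x hx, d]
    have f2 : ∫ x, (qgamma k (c ∘ τ) x - qgamma k c' x) ∂P = ∫ x, Ff k M δ c' d x ∂P := by
      refine integral_congr_ae ?_
      filter_upwards [hP] with x hx using f1 x hx
    have f3 : ∑ j, (qgamma k (c ∘ τ) (w j) - qgamma k c' (w j)) = ∑ j, Ff k M δ c' d (w j) :=
      Finset.sum_congr rfl fun j _ => f1 _ (hw j)
    rw [f2, f3]
    refine le_trans ?_ (Finset.le_sup' (fun i => Z i w) (Finset.mem_attach Mbar ⟨c', hc'⟩))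
    exact le_ciSup (aux_bdd fun t => empZ_term_le P (Ff k M δ c') (Real.sqrt δ)
      (Ff_abs k hk M δ hM hδ c' (hball _ (hMbar hc'))) n hn t w) d

end
end

section
/- Let c* ∈ B(0,M)^k be a fixed optimal codebook. Then for every δ > 0, E sup over c ∈ B(0,M)^k with ‖c − c*‖² ≤ δ/(16M²) of |(P − P_n)(γ(c,·) − γ(c*,·))| ≤ 4 √(π k δ) / √n, where P_n is the empirical measure of an i.i.d. n-sample from P. -/
open MeasureTheory Metric

noncomputable section

variable {H : Type*} [NormedAddCommGroup H] [InnerProductSpace ℝ H] [MeasurableSpace H]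

/-- The sign attached to a Boolean. -/
def qsg (b : Bool) : ℝ := if b then 1 else -1

open scoped BigOperators

lemma qsg_not (b : Bool) : qsg (!b) = - qsg b := by cases b <;> simp [qsg]

lemma qsg_sq (b : Bool) : qsg b * qsg b = 1 := by cases b <;> simp [qsg]

lemma qsg_abs (b : Bool) : |qsg b| = 1 := by cases b <;> simp [qsg]

/-- Flipping all the signs leaves the average unchanged. -/
lemma expect_flip {ι : Type*} [Fintype ι] [DecidableEq ι] (F : (ι → Bool) → ℝ) :
    (Finset.univ.expect fun e : ι → Bool => F (fun i => !(e i))) = Finset.univ.expect F := by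
  refine Fintype.expect_bijective (fun e i => !(e i)) ?_ _ _ (fun e => rfl)
  exact Function.Involutive.bijective (fun e => by funext i; simp)

lemma expect_qsg_mul {ι : Type*} [Fintype ι] [DecidableEq ι] (i j : ι) :
    (Finset.univ.expect fun e : ι → Bool => qsg (e i) * qsg (e j)) = if i = j then 1 else 0 := by
  split_ifs with h
  · subst h
    simp only [qsg_sq]
    exact Fintype.expect_const _
  · have hb : Function.Bijective (fun (e : ι → Bool) => Function.update e i (!(e i))) := by
      apply Function.Involutive.bijective
      intro e
      funext l
      by_cases hl : l = i
      · subst hl; simp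
      · simp [hl]
    have := Fintype.expect_bijective _ hb (fun e : ι → Bool => - (qsg (e i) * qsg (e j)))
      (fun e : ι → Bool => qsg (e i) * qsg (e j)) (fun e => by
        have hj : j ≠ i := fun h' => h h'.symm
        simp [hj, qsg_not])
    rw [Finset.expect_neg_distrib] at this
    linarith

/-- A coordinate is dominated by the Rademacher average. -/
lemma abs_le_expect {ι : Type*} [Fintype ι] [DecidableEq ι] (w : ι → ℝ) (j : ι) :
    |w j| ≤ Finset.univ.expect fun e : ι → Bool => |∑ l, qsg (e l) * w l| := by
  have h1 : (Finset.univ.expect fun e : ι → Bool => qsg (e j) * ∑ l, qsg (e l) * w l) = w j := by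
    simp_rw [Finset.mul_sum, ← mul_assoc]
    rw [Finset.expect_sum_comm]
    simp_rw [← Finset.expect_mul, expect_qsg_mul]
    simp
  calc |w j| = |Finset.univ.expect fun e : ι → Bool => qsg (e j) * ∑ l, qsg (e l) * w l| := by
        rw [h1]
    _ ≤ _ := Finset.abs_expect_le _ _
    _ = _ := by simp_rw [abs_mul, qsg_abs, one_mul]

/-- One step of the contraction argument. -/
lemma contraction_step {T κ : Type*} [Nonempty T] [Fintype κ] [DecidableEq κ]
    (A h : T → ℝ) (f : κ → T → ℝ)
    (hbd : ∀ e : κ → Bool, BddAbove (Set.range fun c => A c + ∑ j, qsg (e j) * f j c))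
    (hh : ∀ c c', ∃ j, h c - h c' ≤ |f j c - f j c'|) :
    (Finset.univ.expect fun b : Bool => ⨆ c, (A c + qsg b * h c)) ≤
      Finset.univ.expect fun e : κ → Bool => ⨆ c, (A c + ∑ j, qsg (e j) * f j c) := by
  set S : (κ → Bool) → ℝ := fun e => ⨆ c, (A c + ∑ j, qsg (e j) * f j c) with hS
  have key : ∀ c c', (A c + h c) + (A c' - h c') ≤ 2 * Finset.univ.expect S := by
    intro c c'
    obtain ⟨j, hj⟩ := hh c c'
    have h1 := abs_le_expect (fun l => f l c - f l c') j
    have h2 : ∀ e : κ → Bool, A c + A c' + |∑ l, qsg (e l) * (f l c - f l c')| ≤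
        S e + S (fun i => !(e i)) := by
      intro e
      have a1 := le_ciSup (hbd e) c
      have a2 := le_ciSup (hbd e) c'
      have b1 := le_ciSup (hbd (fun i => !(e i))) c
      have b2 := le_ciSup (hbd (fun i => !(e i))) c'
      simp only [qsg_not, neg_mul, Finset.sum_neg_distrib] at b1 b2
      simp only [hS, qsg_not, neg_mul, Finset.sum_neg_distrib]
      simp only [mul_sub, Finset.sum_sub_distrib]
      rcases abs_cases (∑ l, qsg (e l) * f l c - ∑ l, qsg (e l) * f l c') with ⟨q, _⟩ | ⟨q, _⟩ <;>
        rw [q] <;> linarith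
    have h3 := Finset.expect_le_expect (s := Finset.univ) (fun e _ => h2 e)
    simp only [Finset.expect_add_distrib, Fintype.expect_const] at h3
    rw [expect_flip S] at h3
    linarith
  have h4 : (Finset.univ.expect fun b : Bool => ⨆ c, (A c + qsg b * h c)) =
      ((⨆ c, (A c + h c)) + ⨆ c, (A c - h c)) / 2 := by
    rw [Fintype.expect_eq_sum_div_card]
    simp [qsg, sub_eq_add_neg]
  rw [h4]
  have h5 : (⨆ c, (A c + h c)) ≤ 2 * Finset.univ.expect S - ⨆ c, (A c - h c) := by
    apply ciSup_le
    intro c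
    have : (⨆ c, (A c - h c)) ≤ 2 * Finset.univ.expect S - (A c + h c) :=
      ciSup_le fun c' => by have := key c c'; linarith
    linarith
  linarith

lemma bdd_sum {T κ : Type*} [Fintype κ] (A : T → ℝ) (a : κ → ℝ) (f : κ → T → ℝ) (CA : ℝ) (C : ℝ)
    (hA : ∀ c, |A c| ≤ CA) (ha : ∀ j, |a j| ≤ 1) (hf : ∀ j c, |f j c| ≤ C) (c : T) :
    |A c + ∑ j, a j * f j c| ≤ CA + Fintype.card κ * C := by
  have : |∑ j, a j * f j c| ≤ ∑ j : κ, C :=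
    (Finset.abs_sum_le_sum_abs _ _).trans (Finset.sum_le_sum fun j _ => by
      rw [abs_mul]
      have h1 := ha j
      have h2 := hf j c
      nlinarith [abs_nonneg (a j), abs_nonneg (f j c)])
  simp at this
  exact (abs_add_le _ _).trans (add_le_add (hA c) this)

/-- Vector contraction for Rademacher averages (with constant one for the sup norm). -/
lemma contraction {T κ : Type*} [Nonempty T] [Fintype κ] [DecidableEq κ] (C : ℝ) (n : ℕ) :
    ∀ (A : T → ℝ) (CA : ℝ) (h : Fin n → T → ℝ) (f : Fin n → κ → T → ℝ)
    (_ : ∀ c, |A c| ≤ CA) (_ : ∀ i c, |h i c| ≤ C) (_ : ∀ i j c, |f i j c| ≤ C)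
    (_ : ∀ i c c', ∃ j, h i c - h i c' ≤ |f i j c - f i j c'|),
    (Finset.univ.expect fun e : Fin n → Bool => ⨆ c, (A c + ∑ i, qsg (e i) * h i c)) ≤
      Finset.univ.expect fun e : Fin n → κ → Bool =>
        ⨆ c, (A c + ∑ i, ∑ j, qsg (e i j) * f i j c) := by
  induction n with
  | zero => intro A CA h f _ _ _ _; simp
  | succ n ih =>
    intro A CA h f hA hh hf hc
    have e1 : (Finset.univ.expect fun e : Fin (n+1) → Bool =>
        ⨆ c, (A c + ∑ i, qsg (e i) * h i c)) =
        Finset.univ.expect fun b : Bool => Finset.univ.expect fun e : Fin n → Bool =>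
          ⨆ c, ((A c + qsg b * h 0 c) + ∑ i, qsg (e i) * h i.succ c) := by
      rw [← Finset.expect_product', Finset.univ_product_univ]
      refine (Fintype.expect_equiv (Fin.consEquiv (fun _ => Bool)) _ _ (fun p => ?_)).symm
      simp [Fin.sum_univ_succ, Fin.consEquiv, add_assoc]
    have e2 : (Finset.univ.expect fun e : Fin (n+1) → κ → Bool =>
        ⨆ c, (A c + ∑ i, ∑ j, qsg (e i j) * f i j c)) =
        Finset.univ.expect fun b : κ → Bool => Finset.univ.expect fun e : Fin n → κ → Bool =>
          ⨆ c, ((A c + ∑ i, ∑ j, qsg (e i j) * f i.succ j c) + ∑ j, qsg (b j) * f 0 j c) := by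
      rw [← Finset.expect_product', Finset.univ_product_univ]
      refine (Fintype.expect_equiv (Fin.consEquiv (fun _ => κ → Bool)) _ _ (fun p => ?_)).symm
      simp only [Fin.sum_univ_succ, Fin.consEquiv, Equiv.coe_fn_mk, Fin.cons_zero, Fin.cons_succ]
      exact congrArg iSup (funext fun c => by ring)
    rw [e1, e2]
    have hone : ∀ b, |qsg b| ≤ 1 := fun b => (qsg_abs b).le
    calc _ ≤ Finset.univ.expect fun b : Bool => Finset.univ.expect fun e : Fin n → κ → Bool =>
          ⨆ c, ((A c + qsg b * h 0 c) + ∑ i, ∑ j, qsg (e i j) * f i.succ j c) := by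
          refine Finset.expect_le_expect fun b _ => ?_
          refine ih (fun c => A c + qsg b * h 0 c) (CA + C) (fun i => h i.succ) (fun i => f i.succ)
            (fun c => (abs_add_le _ _).trans (add_le_add (hA c) ?_)) (fun i => hh _)
            (fun i => hf _) (fun i => hc _)
          rw [abs_mul, qsg_abs, one_mul]
          exact hh _ _
      _ = Finset.univ.expect fun e : Fin n → κ → Bool => Finset.univ.expect fun b : Bool =>
          ⨆ c, ((A c + ∑ i, ∑ j, qsg (e i j) * f i.succ j c) + qsg b * h 0 c) := by
          rw [Finset.expect_comm]
          simp only [add_right_comm]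
      _ ≤ Finset.univ.expect fun e : Fin n → κ → Bool => Finset.univ.expect fun b : κ → Bool =>
          ⨆ c, ((A c + ∑ i, ∑ j, qsg (e i j) * f i.succ j c) + ∑ j, qsg (b j) * f 0 j c) := by
          refine Finset.expect_le_expect fun e _ => ?_
          refine contraction_step _ _ _ (fun b => ?_) (hc 0)
          refine ⟨(CA + Fintype.card (Fin n × κ) * C) + Fintype.card κ * C, ?_⟩
          rintro _ ⟨c, rfl⟩
          refine (le_abs_self _).trans (bdd_sum
            (fun c => A c + ∑ i, ∑ j, qsg (e i j) * f i.succ j c)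
            (fun j => qsg (b j)) (f 0) _ C (fun c => ?_)
            (fun j => hone _) (hf 0) c)
          have := bdd_sum A (fun p : Fin n × κ => qsg (e p.1 p.2)) (fun p => f p.1.succ p.2) CA C hA
            (fun j => hone _) (fun j => hf _ _) c
          rwa [Fintype.sum_prod_type] at this
      _ = _ := Finset.expect_comm _ _ _

/-- second moment -/
lemma second_moment {E ι : Type*} [NormedAddCommGroup E] [InnerProductSpace ℝ E] [Fintype ι]
    [DecidableEq ι] (v : ι → E) :
    (Finset.univ.expect fun e : ι → Bool => ‖∑ i, qsg (e i) • v i‖ ^ 2) = ∑ i, ‖v i‖ ^ 2 := by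
  have : ∀ e : ι → Bool, ‖∑ i, qsg (e i) • v i‖ ^ 2 =
      ∑ i, ∑ j, qsg (e i) * qsg (e j) * inner ℝ (v i) (v j) := by
    intro e
    rw [← real_inner_self_eq_norm_sq, sum_inner]
    refine Finset.sum_congr rfl fun i _ => ?_
    rw [inner_sum]
    refine Finset.sum_congr rfl fun j _ => ?_
    rw [real_inner_smul_left, real_inner_smul_right]; ring
  simp_rw [this]
  rw [Finset.expect_sum_comm]
  simp_rw [Finset.expect_sum_comm, ← Finset.expect_mul, expect_qsg_mul]
  simp

lemma second_moment2 {E : Type*} [NormedAddCommGroup E] [InnerProductSpace ℝ E] {n k : ℕ}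
    (x : Fin n → E) (j : Fin k) :
    (Finset.univ.expect fun e : Fin n → Fin k → Bool => ‖∑ i, qsg (e i j) • x i‖ ^ 2) =
      ∑ i, ‖x i‖ ^ 2 := by
  have := second_moment (fun p : Fin n × Fin k => if p.2 = j then x p.1 else 0)
  rw [Fintype.sum_prod_type] at this
  simp only [Fintype.sum_prod_type] at this
  simp [apply_ite] at this
  rw [← this]
  refine (Fintype.expect_equiv (Equiv.curry (Fin n) (Fin k) Bool) _ _ (fun p => ?_)).symm
  simp [Equiv.curry]

lemma expect_sqrt_le {ι : Type*} [Fintype ι] [Nonempty ι] (Z : ι → ℝ) (hZ : ∀ e, 0 ≤ Z e) :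
    (Finset.univ.expect fun e => Real.sqrt (Z e)) ≤ Real.sqrt (Finset.univ.expect Z) := by
  apply Real.le_sqrt_of_sq_le
  have := Finset.expect_mul_sq_le_sq_mul_sq Finset.univ (fun e => Real.sqrt (Z e)) (fun _ => 1)
  simp only [mul_one, one_pow, Fintype.expect_const, Real.sq_sqrt (hZ _)] at this
  exact this

/-- bound for the linearised process -/
lemma linear_bound {E : Type*} [NormedAddCommGroup E] [InnerProductSpace ℝ E] {n k : ℕ}
    (M r : ℝ) (hM : 0 < M) (hr : 0 ≤ r) (cs : Fin k → E) (hcs : ∀ i, ‖cs i‖ ≤ M)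
    (x : Fin n → E) (hx : ∀ i, ‖x i‖ ≤ M) {T : Type*} [Nonempty T] (c : T → Fin k → E)
    (hc : ∀ t i, ‖c t i‖ ≤ M) (hcr : ∀ t, ∑ i, ‖c t i - cs i‖ ^ 2 ≤ r ^ 2) :
    (Finset.univ.expect fun e : Fin n → Fin k → Bool =>
      ⨆ t, (0 + ∑ i, ∑ j, qsg (e i j) * (‖x i - c t j‖ ^ 2 - ‖x i - cs j‖ ^ 2))) ≤
      4 * M * r * Real.sqrt (k * n) := by
  set S : (Fin n → Fin k → Bool) → Fin k → E := fun e j => ∑ i, qsg (e i j) • x i with hS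
  set s : (Fin n → Fin k → Bool) → Fin k → ℝ := fun e j => ∑ i, qsg (e i j) • (1 : ℝ) with hs
  set Z : (Fin n → Fin k → Bool) → ℝ :=
    fun e => ∑ j, (8 * ‖S e j‖ ^ 2 + 8 * M ^ 2 * ‖s e j‖ ^ 2) with hZ
  have hZ0 : ∀ e, 0 ≤ Z e := fun e => Finset.sum_nonneg fun j _ => by positivity
  have hpt : ∀ e t, 0 + ∑ i, ∑ j, qsg (e i j) * (‖x i - c t j‖ ^ 2 - ‖x i - cs j‖ ^ 2) ≤
      r * Real.sqrt (Z e) := by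
    intro e t
    have h1 : 0 + ∑ i, ∑ j, qsg (e i j) * (‖x i - c t j‖ ^ 2 - ‖x i - cs j‖ ^ 2) =
        ∑ j, (-2 * inner ℝ (S e j) (c t j - cs j) + s e j * inner ℝ (c t j + cs j) (c t j - cs j)) := by
      rw [zero_add, Finset.sum_comm]
      refine Finset.sum_congr rfl fun j _ => ?_
      simp only [hS, hs]
      rw [sum_inner, Finset.mul_sum, Finset.sum_mul, ← Finset.sum_add_distrib]
      refine Finset.sum_congr rfl fun i _ => ?_
      rw [real_inner_smul_left, inner_sub_right, inner_sub_right, inner_add_left, inner_add_left,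
        norm_sub_sq_real, norm_sub_sq_real, real_inner_self_eq_norm_sq, real_inner_self_eq_norm_sq,
        real_inner_comm (cs j) (c t j)]
      simp only [smul_eq_mul]
      ring
    rw [h1]
    have h2 : ∀ j, -2 * inner ℝ (S e j) (c t j - cs j) +
        s e j * inner ℝ (c t j + cs j) (c t j - cs j) ≤
        ‖c t j - cs j‖ * (2 * ‖S e j‖ + 2 * M * ‖s e j‖) := by
      intro j
      have a1 := abs_le.1 (abs_real_inner_le_norm (S e j) (c t j - cs j))
      have a2 := abs_real_inner_le_norm (c t j + cs j) (c t j - cs j)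
      have a3 : ‖c t j + cs j‖ ≤ 2 * M := by
        have := norm_add_le (c t j) (cs j)
        linarith [hc t j, hcs j]
      have a4 : |inner ℝ (c t j + cs j) (c t j - cs j)| ≤ 2 * M * ‖c t j - cs j‖ :=
        a2.trans (mul_le_mul_of_nonneg_right a3 (norm_nonneg _))
      have a5 : s e j * inner ℝ (c t j + cs j) (c t j - cs j) ≤
          ‖s e j‖ * (2 * M * ‖c t j - cs j‖) := by
        refine (le_abs_self _).trans ?_
        rw [abs_mul, ← Real.norm_eq_abs (s e j)]
        exact mul_le_mul_of_nonneg_left a4 (norm_nonneg _)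
      nlinarith [a1.1]
    refine (Finset.sum_le_sum fun j _ => h2 j).trans ?_
    refine (Real.sum_mul_le_sqrt_mul_sqrt _ _ _).trans ?_
    refine mul_le_mul ?_ (Real.sqrt_le_sqrt ?_) (Real.sqrt_nonneg _) hr
    · exact (Real.sqrt_le_sqrt (hcr t)).trans (Real.sqrt_sq hr).le
    · refine Finset.sum_le_sum fun j _ => ?_
      nlinarith [sq_nonneg (‖S e j‖ - M * ‖s e j‖)]
  have hEZ : Finset.univ.expect Z ≤ (4 * M) ^ 2 * (k * n) := by
    simp only [hZ]
    rw [Finset.expect_sum_comm]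
    have : ∀ j : Fin k, (Finset.univ.expect fun e : Fin n → Fin k → Bool =>
        (8 * ‖S e j‖ ^ 2 + 8 * M ^ 2 * ‖s e j‖ ^ 2)) ≤ 16 * M ^ 2 * n := by
      intro j
      rw [Finset.expect_add_distrib, ← Finset.mul_expect, ← Finset.mul_expect]
      simp only [hS, hs]
      rw [second_moment2 x j, second_moment2 (fun _ => (1 : ℝ)) j]
      have : ∑ i, ‖x i‖ ^ 2 ≤ ∑ _i : Fin n, M ^ 2 :=
        Finset.sum_le_sum fun i _ => pow_le_pow_left₀ (norm_nonneg _) (hx i) 2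
      simp at this ⊢
      nlinarith
    refine (Finset.sum_le_sum fun j _ => this j).trans ?_
    simp
    nlinarith
  calc _ ≤ Finset.univ.expect fun e => r * Real.sqrt (Z e) :=
        Finset.expect_le_expect fun e _ => ciSup_le fun t => hpt e t
    _ = r * Finset.univ.expect fun e => Real.sqrt (Z e) := by rw [Finset.mul_expect]
    _ ≤ r * Real.sqrt (Finset.univ.expect Z) :=
        mul_le_mul_of_nonneg_left (expect_sqrt_le Z hZ0) hr
    _ ≤ r * Real.sqrt ((4 * M) ^ 2 * (k * n)) :=
        mul_le_mul_of_nonneg_left (Real.sqrt_le_sqrt hEZ) hr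
    _ = _ := by rw [Real.sqrt_mul (by positivity), Real.sqrt_sq (by positivity)]; ring

/-- absolute values cost a factor two -/
lemma expect_abs_le {T : Type*} [Nonempty T] {n : ℕ} (h : Fin n → T → ℝ) (C : ℝ)
    (hh : ∀ i c, |h i c| ≤ C) (t0 : T) (h0 : ∀ i, h i t0 = 0) :
    (Finset.univ.expect fun e : Fin n → Bool => ⨆ c, |∑ i, qsg (e i) * h i c|) ≤
      2 * Finset.univ.expect fun e : Fin n → Bool => ⨆ c, (0 + ∑ i, qsg (e i) * h i c) := by
  set S : (Fin n → Bool) → ℝ := fun e => ⨆ c, (0 + ∑ i, qsg (e i) * h i c) with hS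
  have hb : ∀ e : Fin n → Bool, BddAbove (Set.range fun c => 0 + ∑ i, qsg (e i) * h i c) := by
    intro e
    refine ⟨0 + Fintype.card (Fin n) * C, ?_⟩
    rintro _ ⟨c, rfl⟩
    exact (le_abs_self _).trans (bdd_sum (fun _ => 0) (fun j => qsg (e j)) h 0 C (by simp)
      (fun j => (qsg_abs _).le) hh c)
  have hpos : ∀ e, 0 ≤ S e := by
    intro e
    have := le_ciSup (hb e) t0
    simpa [h0, hS] using this
  have : ∀ e : Fin n → Bool, (⨆ c, |∑ i, qsg (e i) * h i c|) ≤ S e + S (fun i => !(e i)) := by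
    intro e
    refine ciSup_le fun c => ?_
    have a1 := le_ciSup (hb e) c
    have a2 := le_ciSup (hb (fun i => !(e i))) c
    have p1 := hpos e
    have p2 := hpos (fun i => !(e i))
    simp only [hS] at p1 p2 ⊢
    simp only [qsg_not, neg_mul, Finset.sum_neg_distrib] at a2 p2 ⊢
    refine abs_le'.2 ⟨?_, ?_⟩ <;> linarith
  refine (Finset.expect_le_expect fun e _ => this e).trans ?_
  rw [Finset.expect_add_distrib, expect_flip S]
  linarith

lemma meas_sup {T Ω : Type*} [TopologicalSpace T] [TopologicalSpace.SeparableSpace T]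
    [MeasurableSpace Ω] (F : T → Ω → ℝ) (hc : ∀ ω, Continuous fun t => F t ω)
    (hm : ∀ t, Measurable (F t)) : Measurable fun ω => ⨆ t, F t ω := by
  obtain ⟨S, hSc, hSd⟩ := TopologicalSpace.exists_countable_dense T
  have : (fun ω => ⨆ t, F t ω) = fun ω => ⨆ t : S, F t ω := by
    funext ω
    exact (hSd.ciSup' (hc ω)).symm
  rw [this]
  have := hSc.to_subtype
  exact Measurable.iSup fun t => hm t

lemma swap_preserving {Ω : Type*} [MeasurableSpace Ω] (P : Measure Ω) [IsProbabilityMeasure P]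
    {n : ℕ} (e : Fin n → Bool) :
    MeasurePreserving (fun z : (Fin n → Ω) × (Fin n → Ω) =>
      ((fun i => if e i then z.1 i else z.2 i, fun i => if e i then z.2 i else z.1 i) :
        (Fin n → Ω) × (Fin n → Ω)))
      ((Measure.pi fun _ : Fin n => P).prod (Measure.pi fun _ : Fin n => P))
      ((Measure.pi fun _ : Fin n => P).prod (Measure.pi fun _ : Fin n => P)) := by
  have h1 := measurePreserving_arrowProdEquivProdArrow Ω Ω (Fin n) (fun _ => P) (fun _ => P)
  have h2 : MeasurePreserving (fun (a : Fin n → Ω × Ω) i =>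
      (if e i then id else Prod.swap : Ω × Ω → Ω × Ω) (a i))
      (Measure.pi fun _ : Fin n => P.prod P) (Measure.pi fun _ : Fin n => P.prod P) := by
    refine measurePreserving_pi _ _ (f := fun i => (if e i then id else Prod.swap)) fun i => ?_
    cases e i
    · simpa using Measure.measurePreserving_swap
    · simpa using MeasurePreserving.id _
  have h3 := (h1.comp h2).comp (h1.symm _)
  convert h3 using 1
  funext z
  apply Prod.ext
  · funext i
    cases h : e i <;>
      simp [MeasurableEquiv.arrowProdEquivProdArrow, Equiv.arrowProdEquivProdArrow, h]
  · funext i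
    cases h : e i <;>
      simp [MeasurableEquiv.arrowProdEquivProdArrow, Equiv.arrowProdEquivProdArrow, h]

/-- Symmetrization. -/
lemma symmetrization {T Ω : Type*} [Nonempty T] [TopologicalSpace T]
    [TopologicalSpace.SeparableSpace T]
    [MeasurableSpace Ω] (P : Measure Ω) [IsProbabilityMeasure P] {n : ℕ} (hn : 0 < n)
    (g : T → Ω → ℝ) (hgc : ∀ x, Continuous fun t => g t x) (hgm : ∀ t, Measurable (g t))
    (C : ℝ) (hC : ∀ t x, |g t x| ≤ C) (B : ℝ)
    (hB : ∀ x : Fin n → Ω,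
      (Finset.univ.expect fun e : Fin n → Bool => ⨆ t, |∑ i, qsg (e i) * g t (x i)|) ≤ B) :
    (∫ ω : Fin n → Ω, (⨆ t, |(∫ x, g t x ∂P) - (∑ j, g t (ω j)) / n|)
      ∂(Measure.pi fun _ : Fin n => P)) ≤ 2 * B / n := by
  set Q := (Measure.pi fun _ : Fin n => P) with hQ
  have hn' : (0 : ℝ) < n := by exact_mod_cast hn
  -- the symmetrized process
  set G : (Fin n → Bool) → (Fin n → Ω) × (Fin n → Ω) → ℝ :=
    fun e z => ⨆ t, |∑ i, qsg (e i) * (g t (z.2 i) - g t (z.1 i))| with hG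
  have hsum : ∀ (e : Fin n → Bool) (x : Fin n → Ω) t, |∑ i, qsg (e i) * g t (x i)| ≤ n * C := by
    intro e x t
    have := bdd_sum (fun _ => 0) (fun j => qsg (e j)) (fun i t => g t (x i)) 0 C (by simp)
      (fun j => (qsg_abs _).le) (fun i t => hC t (x i)) t
    simpa using this
  have hsplit : ∀ (e : Fin n → Bool) (z : (Fin n → Ω) × (Fin n → Ω)) t,
      |∑ i, qsg (e i) * (g t (z.2 i) - g t (z.1 i))| ≤
      |∑ i, qsg (e i) * g t (z.2 i)| + |∑ i, qsg (e i) * g t (z.1 i)| := by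
    intro e z t
    simp only [mul_sub, Finset.sum_sub_distrib]
    exact abs_sub _ _
  have hGbdd : ∀ (e : Fin n → Bool) (z : (Fin n → Ω) × (Fin n → Ω)), BddAbove (Set.range fun t =>
      |∑ i, qsg (e i) * (g t (z.2 i) - g t (z.1 i))|) := by
    intro e z
    refine ⟨n * C + n * C, ?_⟩
    rintro _ ⟨t, rfl⟩
    exact (hsplit e z t).trans (add_le_add (hsum _ _ _) (hsum _ _ _))
  have hGm : ∀ e, Measurable (G e) := by
    intro e
    refine meas_sup _ (fun z => ?_) (fun t => ?_)
    · exact (continuous_finsetSum _ fun i _ =>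
        continuous_const.mul ((hgc _).sub (hgc _))).abs
    · refine Measurable.abs ?_
      refine Finset.measurable_sum _ fun i _ => ?_
      refine Measurable.const_mul ?_ _
      exact ((hgm t).comp ((measurable_pi_apply i).comp measurable_snd)).sub
        ((hgm t).comp ((measurable_pi_apply i).comp measurable_fst))
  have hG0 : ∀ e z, 0 ≤ G e z := fun e z => Real.iSup_nonneg fun t => abs_nonneg _
  have hGle : ∀ e z, G e z ≤ n * C + n * C := fun e z => ciSup_le fun t =>
    (hsplit e z t).trans (add_le_add (hsum _ _ _) (hsum _ _ _))
  have hGint : ∀ e, Integrable (G e) (Q.prod Q) := fun e =>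
    Integrable.of_bound (hGm e).aestronglyMeasurable (n * C + n * C)
      (Filter.Eventually.of_forall fun z => by
        rw [Real.norm_eq_abs, abs_of_nonneg (hG0 e z)]; exact hGle e z)
  set e1 : Fin n → Bool := fun _ => true with he1
  -- step 3
  have hswap : ∀ e, ∫ z, G e z ∂(Q.prod Q) = ∫ z, G e1 z ∂(Q.prod Q) := by
    intro e
    have hp := swap_preserving P e
    rw [← hQ] at hp
    conv_rhs => rw [← hp.map_eq]
    rw [integral_map hp.measurable.aemeasurable (hGm e1).aestronglyMeasurable]
    congr 1
    funext z
    simp only [hG, he1]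
    congr 1
    funext t
    congr 1
    refine Finset.sum_congr rfl fun i _ => ?_
    cases e i <;> simp [qsg]
  have hE : ∫ z, G e1 z ∂(Q.prod Q) ≤ 2 * B := by
    have h1 : ∫ z, G e1 z ∂(Q.prod Q) =
        Finset.univ.expect fun e : Fin n → Bool => ∫ z, G e z ∂(Q.prod Q) := by
      simp only [hswap, Fintype.expect_const]
    have h2 : (Finset.univ.expect fun e : Fin n → Bool => ∫ z, G e z ∂(Q.prod Q)) =
        ∫ z, (Finset.univ.expect fun e : Fin n → Bool => G e z) ∂(Q.prod Q) := by
      simp only [Fintype.expect_eq_sum_div_card]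
      rw [integral_div, integral_finsetSum _ (fun e _ => hGint e)]
    rw [h1, h2]
    have h3 : ∀ z, (Finset.univ.expect fun e : Fin n → Bool => G e z) ≤ 2 * B := by
      intro z
      have : ∀ e : Fin n → Bool, G e z ≤ (⨆ t, |∑ i, qsg (e i) * g t (z.2 i)|) +
          ⨆ t, |∑ i, qsg (e i) * g t (z.1 i)| := by
        intro e
        refine ciSup_le fun t => (hsplit e z t).trans (add_le_add ?_ ?_)
        · exact le_ciSup (f := fun t => |∑ i, qsg (e i) * g t (z.2 i)|)
            ⟨n * C, by rintro _ ⟨t, rfl⟩; exact hsum _ _ _⟩ t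
        · exact le_ciSup (f := fun t => |∑ i, qsg (e i) * g t (z.1 i)|)
            ⟨n * C, by rintro _ ⟨t, rfl⟩; exact hsum _ _ _⟩ t
      refine (Finset.expect_le_expect fun e _ => this e).trans ?_
      rw [Finset.expect_add_distrib]
      have a := hB z.1
      have b := hB z.2
      linarith
    have h4 := integral_mono_of_nonneg (μ := Q.prod Q)
      (f := fun z => Finset.univ.expect fun e : Fin n → Bool => G e z) (g := fun _ => 2 * B)
      (Filter.Eventually.of_forall fun z => Finset.expect_nonneg fun e _ => hG0 e z)
      (integrable_const _) (Filter.Eventually.of_forall h3)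
    simpa using h4
  have hgint : ∀ t, Integrable (g t) P := fun t =>
    Integrable.of_bound (hgm t).aestronglyMeasurable C (Filter.Eventually.of_forall fun x => hC t x)
  have hgi : ∀ t (i : Fin n), Integrable (fun y : Fin n → Ω => g t (y i)) Q := fun t i =>
    Integrable.of_bound ((hgm t).comp (measurable_pi_apply i)).aestronglyMeasurable C
      (Filter.Eventually.of_forall fun y => hC t (y i))
  have hgv : ∀ t (i : Fin n), ∫ y, g t (y i) ∂Q = ∫ x, g t x ∂P := by
    intro t i
    have hp : MeasurePreserving (Function.eval i) Q P := measurePreserving_eval _ i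
    rw [← hp.map_eq, integral_map hp.measurable.aemeasurable (hgm t).aestronglyMeasurable]
  have hsec : ∀ x, Integrable (fun y => G e1 (x, y)) Q := fun x =>
    Integrable.of_bound ((hGm e1).comp measurable_prodMk_left).aestronglyMeasurable (n * C + n * C)
      (Filter.Eventually.of_forall fun y => by
        rw [Real.norm_eq_abs, abs_of_nonneg (hG0 e1 _)]; exact hGle e1 _)
  have hpt : ∀ x : Fin n → Ω, (⨆ t, |(∫ y, g t y ∂P) - (∑ j, g t (x j)) / n|) ≤
      (∫ y, G e1 (x, y) ∂Q) / n := by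
    intro x
    refine ciSup_le fun t => ?_
    rw [le_div_iff₀ hn']
    have h1 : |(∫ y, g t y ∂P) - (∑ j, g t (x j)) / n| * n =
        |∫ y, (∑ i, qsg (e1 i) * (g t (y i) - g t (x i))) ∂Q| := by
      rw [← abs_of_pos hn', ← abs_mul, abs_of_pos hn', sub_mul, div_mul_cancel₀ _ hn'.ne']
      congr 1
      simp only [he1, qsg, if_true, one_mul]
      have hii : ∀ i : Fin n, Integrable (fun y : Fin n → Ω => g t (y i) - g t (x i)) Q :=
        fun i => (hgi t i).sub (integrable_const _)
      rw [integral_finsetSum _ (fun i _ => hii i)]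
      have : ∀ i : Fin n, ∫ y, (g t (y i) - g t (x i)) ∂Q = (∫ y, g t y ∂P) - g t (x i) := by
        intro i
        rw [integral_sub (hgi t i) (integrable_const _), hgv]
        simp
      simp only [this, Finset.sum_sub_distrib]
      simp [mul_comm]
    rw [h1]
    refine abs_integral_le_integral_abs.trans ?_
    refine integral_mono_of_nonneg (Filter.Eventually.of_forall fun y => abs_nonneg _) (hsec x)
      (Filter.Eventually.of_forall fun y => ?_)
    exact le_ciSup (hGbdd e1 (x, y)) t
  calc _ ≤ ∫ x, (∫ y, G e1 (x, y) ∂Q) / n ∂Q := by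
        refine integral_mono_of_nonneg
          (Filter.Eventually.of_forall fun x => Real.iSup_nonneg fun t => abs_nonneg _)
          ((hGint e1).integral_prod_left.div_const _) (Filter.Eventually.of_forall hpt)
    _ = (∫ z, G e1 z ∂(Q.prod Q)) / n := by
        rw [integral_div, integral_prod _ (hGint e1)]
    _ ≤ _ := div_le_div_of_nonneg_right hE hn'.le

lemma qgamma_diff {E : Type*} [NormedAddCommGroup E] [InnerProductSpace ℝ E] {k : ℕ} (hk : 0 < k)
    (c c' : Fin k → E) (x : E) :
    ∃ j, qgamma k c x - qgamma k c' x ≤ ‖x - c j‖ ^ 2 - ‖x - c' j‖ ^ 2 := by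
  have : Nonempty (Fin k) := ⟨⟨0, hk⟩⟩
  obtain ⟨j, hj⟩ := exists_eq_ciInf_of_finite (f := fun j : Fin k => ‖x - c' j‖ ^ 2)
  refine ⟨j, ?_⟩
  have h1 : qgamma k c x ≤ ‖x - c j‖ ^ 2 := ciInf_le (Set.finite_range _).bddBelow j
  have h2 : qgamma k c' x = ‖x - c' j‖ ^ 2 := hj.symm
  linarith

lemma qgamma_continuous {E X : Type*} [NormedAddCommGroup E] [InnerProductSpace ℝ E]
    [TopologicalSpace X] {k : ℕ} (hk : 0 < k) (c : X → Fin k → E) (x : X → E)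
    (hc : ∀ j, Continuous fun t => c t j) (hx : Continuous x) :
    Continuous fun t => qgamma k (c t) (x t) := by
  have : Nonempty (Fin k) := ⟨⟨0, hk⟩⟩
  have : (fun t => qgamma k (c t) (x t)) =
      fun t => Finset.univ.inf' Finset.univ_nonempty (fun j => ‖x t - c t j‖ ^ 2) := by
    funext t
    rw [Finset.inf'_univ_eq_ciInf]
    rfl
  rw [this]
  exact Continuous.finset_inf'_apply _ fun j _ => ((hx.sub (hc j)).norm.pow 2)

lemma sq_dist_le {E : Type*} [NormedAddCommGroup E] {M : ℝ} {x y : E} (hx : ‖x‖ ≤ M)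
    (hy : ‖y‖ ≤ M) : ‖x - y‖ ^ 2 ≤ 4 * M ^ 2 := by
  have h := norm_sub_le x y
  nlinarith [norm_nonneg (x - y)]

/-- Equation (4.10): localized complexity bound around a fixed optimal codebook:
`E sup_{‖c−c*‖² ≤ δ/(16M²)} |(P−P_n)(γ(c,·)−γ(c*,·))| ≤ 4√(πkδ)/√n`. -/
theorem stmt19 [BorelSpace H] [SecondCountableTopology H] [CompleteSpace H]
    (k : ℕ) (hk : 2 ≤ k) (P : Measure H) [IsProbabilityMeasure P]
    (M : ℝ) (hM : 0 < M) (hbd : mbounded P M) (hsupp : suppGT P k)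
    -- `cs` is a fixed optimal codebook, minimizing the risk over `B(0,M)^k`
    (cs : Fin k → H) (hcsball : ∀ i, ‖cs i‖ ≤ M)
    (hcsopt : ∀ c : Fin k → H, (∀ i, ‖c i‖ ≤ M) → qrisk k P cs ≤ qrisk k P c)
    (n : ℕ) (hn : 0 < n) (δ : ℝ) (hδ : 0 < δ) :
    (∫ ω : Fin n → H,
        (⨆ c : {c : Fin k → H //
            (∀ i, ‖c i‖ ≤ M) ∧ ∑ i, ‖c i - cs i‖ ^ 2 ≤ δ / (16 * M ^ 2)},
          |(∫ x, (qgamma k c.1 x - qgamma k cs x) ∂P) -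
            (∑ j, (qgamma k c.1 (ω j) - qgamma k cs (ω j))) / n|)
      ∂(Measure.pi fun _ : Fin n => P)) ≤
      4 * Real.sqrt (Real.pi * k * δ) / Real.sqrt n := by
  have hk0 : 0 < k := by omega
  have hMne : M ≠ 0 := hM.ne'
  set r : ℝ := Real.sqrt δ / (4 * M) with hr
  have hr0 : 0 ≤ r := by positivity
  have hr2 : r ^ 2 = δ / (16 * M ^ 2) := by
    rw [hr, div_pow, Real.sq_sqrt hδ.le]; ring
  set T := {c : Fin k → H // (∀ i, ‖c i‖ ≤ M) ∧ ∑ i, ‖c i - cs i‖ ^ 2 ≤ δ / (16 * M ^ 2)} with hT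
  let t0 : T := ⟨cs, hcsball, by simp; positivity⟩
  have : Nonempty T := ⟨t0⟩
  -- projection on the ball
  set pr : H → H := fun x => if ‖x‖ ≤ M then x else 0 with hpr
  have hprM : ∀ x, ‖pr x‖ ≤ M := by
    intro x
    simp only [hpr]
    split_ifs with h
    · exact h
    · simpa using hM.le
  have hprm : Measurable pr :=
    Measurable.ite (measurableSet_le measurable_norm measurable_const) measurable_id
      measurable_const
  have hae : ∀ᵐ x ∂P, pr x = x := by
    have h1 : ∀ᵐ x ∂P, x ∈ closedBall (0 : H) M := by
      rw [ae_iff]; exact hbd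
    filter_upwards [h1] with x hx
    rw [mem_closedBall_zero_iff] at hx
    simp [hpr, hx]
  set g : T → H → ℝ := fun c x => qgamma k c.1 (pr x) - qgamma k cs (pr x) with hg
  have hgc : ∀ x, Continuous fun t => g t x := by
    intro x
    refine Continuous.sub (qgamma_continuous hk0 _ _ (fun j => ?_) continuous_const)
      continuous_const
    exact (continuous_apply j).comp continuous_subtype_val
  have hgm : ∀ t, Measurable (g t) := by
    intro t
    have h1 : ∀ c : Fin k → H, Measurable fun x => qgamma k c (pr x) := fun c =>
      (qgamma_continuous (X := H) hk0 (fun _ => c) id (fun j => continuous_const)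
        continuous_id).measurable.comp hprm
    exact (h1 _).sub (h1 _)
  have hgC : ∀ t x, |g t x| ≤ 4 * M ^ 2 := by
    intro t x
    have hx := hprM x
    obtain ⟨j, hj⟩ := qgamma_diff hk0 t.1 cs (pr x)
    obtain ⟨i, hi⟩ := qgamma_diff hk0 cs t.1 (pr x)
    have a1 := sq_dist_le hx (t.2.1 j)
    have a2 := sq_dist_le hx (hcsball i)
    have b1 := sq_nonneg ‖pr x - cs j‖
    have b2 := sq_nonneg ‖pr x - t.1 i‖
    simp only [hg]
    refine abs_le.2 ⟨?_, ?_⟩ <;> linarith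
  have hB : ∀ x : Fin n → H,
      (Finset.univ.expect fun e : Fin n → Bool => ⨆ t, |∑ i, qsg (e i) * g t (x i)|) ≤
        2 * Real.sqrt (δ * (k * n)) := by
    intro x
    refine (expect_abs_le (fun i t => g t (x i)) (4 * M ^ 2) (fun i t => hgC t _) t0
      (fun i => by simp [hg, t0])).trans ?_
    refine mul_le_mul_of_nonneg_left ?_ (by norm_num)
    refine (contraction (4 * M ^ 2) n (fun _ => 0) 0 (fun i t => g t (x i))
      (fun i (j : Fin k) t => ‖pr (x i) - t.1 j‖ ^ 2 - ‖pr (x i) - cs j‖ ^ 2) (by simp)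
      (fun i t => hgC t _) (fun i j t => ?_) (fun i c c' => ?_)).trans ?_
    · have a1 := sq_dist_le (hprM (x i)) (t.2.1 j)
      have a2 := sq_dist_le (hprM (x i)) (hcsball j)
      have b1 := sq_nonneg ‖pr (x i) - cs j‖
      have b2 := sq_nonneg ‖pr (x i) - t.1 j‖
      refine abs_le.2 ⟨?_, ?_⟩ <;> linarith
    · obtain ⟨j, hj⟩ := qgamma_diff hk0 c.1 c'.1 (pr (x i))
      refine ⟨j, le_trans ?_ (le_abs_self _)⟩
      simp only [hg]
      linarith
    · refine (linear_bound M r hM hr0 cs hcsball (fun i => pr (x i)) (fun i => hprM _)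
        (fun t : T => t.1) (fun t => t.2.1) (fun t => by rw [hr2]; exact t.2.2)).trans ?_
      rw [Real.sqrt_mul hδ.le]
      apply le_of_eq
      rw [hr]; field_simp
  have hsym := symmetrization P hn g hgc hgm (4 * M ^ 2) hgC _ hB
  have hlhs : (∫ ω : Fin n → H,
        (⨆ c : T, |(∫ x, (qgamma k c.1 x - qgamma k cs x) ∂P) -
            (∑ j, (qgamma k c.1 (ω j) - qgamma k cs (ω j))) / n|)
      ∂(Measure.pi fun _ : Fin n => P)) =
      ∫ ω : Fin n → H, (⨆ t, |(∫ x, g t x ∂P) - (∑ j, g t (ω j)) / n|)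
      ∂(Measure.pi fun _ : Fin n => P) := by
    refine integral_congr_ae ?_
    have hall : ∀ᵐ ω ∂(Measure.pi fun _ : Fin n => P), ∀ j, pr (ω j) = ω j := by
      rw [ae_all_iff]
      intro j
      exact (measurePreserving_eval (fun _ : Fin n => P) j).quasiMeasurePreserving.ae hae
    filter_upwards [hall] with ω hω
    congr 1
    funext t
    have h1 : ∫ x, (qgamma k t.1 x - qgamma k cs x) ∂P = ∫ x, g t x ∂P := by
      refine integral_congr_ae ?_
      filter_upwards [hae] with x hx
      simp only [hg, hx]
    simp only [h1, hg, hω]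
  rw [hlhs]
  refine hsym.trans ?_
  have hn' : (0 : ℝ) < n := by exact_mod_cast hn
  have e1 : 2 * (2 * Real.sqrt (δ * (k * n))) / n = 4 * Real.sqrt (1 * k * δ) / Real.sqrt n := by
    rw [show δ * ((k : ℝ) * n) = (1 * k * δ) * n by ring, Real.sqrt_mul (by positivity) (n : ℝ)]
    rw [div_eq_div_iff hn'.ne' (Real.sqrt_pos.2 hn').ne']
    have := Real.mul_self_sqrt hn'.le
    linear_combination 4 * Real.sqrt (1 * k * δ) * this
  rw [e1]
  have h1 : (1 : ℝ) ≤ Real.pi := by linarith [Real.pi_gt_three]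
  gcongr

end
end
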